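/- Let G be a graph on n vertices and λ a positive integer with connectivity κ ≥ λ and minimum degree δ ≥ (n+2)/(λ+1) + λ − 2. Then every longest cycle C in G is a CD_{min{λ, δ−λ+1}}-cycle; that is, every cycle in G of length at least min{λ, δ−λ+1} has a vertex in common with C. -/

import Mathlib

open SimpleGraph

variable {V : Type*}

/-- `G` is `k`-connected: more than `k` vertices and removing fewer than `k`
vertices leaves a connected graph. -/
def KConnected (G : SimpleGraph V) [Fintype V] (k : ℕ) : Prop :=
  k < Fintype.card V ∧
    ∀ S : Finset V, S.card < k → (G.induce ((↑S : Set V)ᶜ)).Connected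

/-- vertex connectivity `κ`. -/
noncomputable def connectivity (G : SimpleGraph V) [Fintype V] : ℕ :=
  sSup {k | KConnected G k}

/-- independence number `α`. -/
noncomputable def indepNumber (G : SimpleGraph V) [Fintype V] : ℕ :=
  sSup {k | ∃ s : Finset V, (∀ u ∈ s, ∀ v ∈ s, ¬ G.Adj u v) ∧ s.card = k}

/-- circumference `c`: length of a longest cycle. -/
noncomputable def circumference (G : SimpleGraph V) [Fintype V] : ℕ :=
  sSup {n | ∃ (v : V) (w : G.Walk v v), w.IsCycle ∧ w.length = n}

/-- `w` is a longest cycle of `G`. -/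
def IsLongestCycle {G : SimpleGraph V} {v : V} (w : G.Walk v v) : Prop :=
  w.IsCycle ∧ ∀ (u : V) (w' : G.Walk u u), w'.IsCycle → w'.length ≤ w.length

/-- dominating cycle: every edge has an endpoint on the cycle. -/
def IsDominatingCycle {G : SimpleGraph V} {v : V} (w : G.Walk v v) : Prop :=
  w.IsCycle ∧ ∀ x y, G.Adj x y → x ∈ w.support ∨ y ∈ w.support

/-- generalized cycle of length `n` with vertex set `W`: single vertices are
cycles of length 1, edges are cycles of length 2. -/
def ExtCycle (G : SimpleGraph V) (W : Set V) (n : ℕ) : Prop :=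
  (n = 1 ∧ ∃ v : V, W = {v}) ∨
  (n = 2 ∧ ∃ u v : V, G.Adj u v ∧ W = {u, v}) ∨
  (3 ≤ n ∧ ∃ (v : V) (w : G.Walk v v), w.IsCycle ∧ w.length = n ∧
      W = {x | x ∈ w.support})

/-- `p̄`: the length of a longest path in `G \ C`. -/
noncomputable def pathBar (G : SimpleGraph V) [Fintype V] {v : V} (w : G.Walk v v) : ℕ :=
  sSup {n | ∃ (a b : {x : V | x ∉ w.support})
      (p : (G.induce {x : V | x ∉ w.support}).Walk a b), p.IsPath ∧ p.length = n}

/-- `c̄`: the length of a longest (generalized) cycle in `G \ C`. -/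
noncomputable def cycBar (G : SimpleGraph V) [Fintype V] {v : V} (w : G.Walk v v) : ℕ :=
  sSup {n | ∃ W, ExtCycle (G.induce {x : V | x ∉ w.support}) W n}

/-- `CD_m`-cycle: every (generalized) cycle of length at least `m` meets `w`. -/
def IsCDCycle (G : SimpleGraph V) {v : V} (w : G.Walk v v) (m : ℕ) : Prop :=
  w.IsCycle ∧ ∀ (W : Set V) (n : ℕ), ExtCycle G W n → m ≤ n → ∃ x ∈ W, x ∈ w.support

/-!
Let `C` be a longest cycle of `G`, with `N` vertices, and `Q` a longest generalized cycle of
`G - C`, with `c` vertices. Put `μ = min l (δ - l + 1)` and `M = max l (δ - l + 1)`, so that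
`δ + 1 = μ + M` and the degree condition reads `n + 2 ≤ (μ + 1) * (M + 1)`, and suppose `μ ≤ c`.

No set of more than `μ` vertices off `C` is well linked, that is, has any two of its vertices joined
inside it by a path with at least `μ` vertices: Menger's theorem would give `μ` disjoint paths from
it to `C`, and since detours through the set cannot lengthen `C`, suitable shifts of the
neighbourhoods on `C` would be disjoint and take up too much room. In particular `Q` itself is not
well linked, which leaves `c + 3 ≤ 2 * μ` or `c = μ`.

Among the systems of disjoint paths hanging off the vertices of `Q` in `G - C`, take one for which
the number of vertices plus the number of nontrivial paths is largest, ties being broken suitably.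
The outer endpoints of its nontrivial paths have fewer than `μ` neighbours off `C`; charging each
index a weight `ω i`, one gets that the weighted number of attachments on `C` is at least
`2 * c * (δ + 1 - c)`. Attachments of different endpoints are far apart along `C`, because the
detour through the two hanging paths and the longer arc of `Q` cannot lengthen `C`. Hence
`(c + 1) * (δ + 1 - c) ≤ N`, which contradicts `N + c ≤ n` when `c ≤ M`. When `M < c`, there are in
addition `l` disjoint paths from `Q` to `C`; they yield `l` distinct attachments with different
indices, and each of the `l` gaps between them is longer than the previous estimate accounts for,
which is enough for a contradiction.
-/

namespace LongCycle

section Paths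

variable {G : SimpleGraph V} {a b c d : V} {P Q : List V}

/-! ### Paths as vertex lists -/

/-- `P` lists, in order, the vertices of a path of `G` from `a` to `b`. Paths are encoded by lists
rather than walks because they are cut, reversed and glued throughout. -/
structure IsPathList (G : SimpleGraph V) (a : V) (P : List V) (b : V) : Prop where
  nodup : P.Nodup
  isChain : P.IsChain G.Adj
  head?_eq : P.head? = some a
  getLast?_eq : P.getLast? = some b

/-- `L` lists, in cyclic order, the vertices of a generalized cycle: a vertex, an edge or a
cycle. -/
def IsGenCycle (G : SimpleGraph V) (L : List V) : Prop :=
  ∃ a b, IsPathList G a L b ∧ (2 ≤ L.length → G.Adj b a)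

namespace IsPathList

lemma ne_nil (h : IsPathList G a P b) : P ≠ [] := by
  rintro rfl
  simpa using h.head?_eq

lemma length_pos (h : IsPathList G a P b) : 0 < P.length :=
  List.length_pos_of_ne_nil h.ne_nil

lemma head_mem (h : IsPathList G a P b) : a ∈ P := List.mem_of_mem_head? h.head?_eq

lemma getLast_mem (h : IsPathList G a P b) : b ∈ P := List.mem_of_mem_getLast? h.getLast?_eq

lemma singleton (a : V) : IsPathList G a [a] a := ⟨by simp, by simp, rfl, rfl⟩

lemma reverse (h : IsPathList G a P b) : IsPathList G b P.reverse a where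
  nodup := List.nodup_reverse.2 h.nodup
  isChain := List.isChain_reverse.2 (h.isChain.imp fun _ _ => Adj.symm)
  head?_eq := by rw [List.head?_reverse, h.getLast?_eq]
  getLast?_eq := by rw [List.getLast?_reverse, h.head?_eq]

lemma append (h : IsPathList G a P b) (h' : IsPathList G c Q d) (hbc : G.Adj b c)
    (hPQ : ∀ x ∈ P, x ∉ Q) : IsPathList G a (P ++ Q) d where
  nodup := List.nodup_append'.2 ⟨h.nodup, h'.nodup, fun x hx hx' => hPQ x hx hx'⟩
  isChain := List.isChain_append.2 ⟨h.isChain, h'.isChain, by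
    simpa only [h.getLast?_eq, h'.head?_eq, Option.mem_some_iff, forall_eq'] using hbc⟩
  head?_eq := by rw [List.head?_append, h.head?_eq]; rfl
  getLast?_eq := by rw [List.getLast?_append, h'.getLast?_eq]; rfl

lemma cons (h : IsPathList G a P b) (hca : G.Adj c a) (hc : c ∉ P) :
    IsPathList G c (c :: P) b :=
  (singleton c).append h hca (by simpa using hc)

lemma concat (h : IsPathList G a P b) (hbc : G.Adj b c) (hc : c ∉ P) :
    IsPathList G a (P ++ [c]) c :=
  h.append (singleton c) hbc fun _ hx hxc => hc (List.mem_singleton.1 hxc ▸ hx)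

lemma of_append_left (h : IsPathList G a (P ++ c :: Q) b) : IsPathList G a (P ++ [c]) c := by
  rw [List.append_cons] at h
  exact ⟨(List.nodup_append'.1 h.nodup).1, (List.isChain_append.1 h.isChain).1,
    by simpa only [List.head?_append_of_ne_nil _ (List.concat_ne_nil c P)] using h.head?_eq,
    List.getLast?_concat⟩

lemma of_append_right (h : IsPathList G a (P ++ c :: Q) b) : IsPathList G c (c :: Q) b :=
  ⟨(List.nodup_append'.1 h.nodup).2.1, (List.isChain_append.1 h.isChain).2.1, rfl,
    by simpa only [List.getLast?_append_of_ne_nil _ (List.cons_ne_nil c Q)] using h.getLast?_eq⟩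

lemma adj_of_append_cons_cons (h : IsPathList G a (P ++ b :: c :: Q) d) : G.Adj b c :=
  (List.isChain_cons_cons.1 (List.isChain_append.1 h.isChain).2.1).1

end IsPathList

/-! ### Longest cycles -/

/-- The sequence `f` runs with period `N` around a generalized cycle on `N` vertices of `X`, and no
generalized cycle inside `X` has more than `N` vertices. It is used both for the longest cycle of
the graph and, with `X` its complement, for a longest cycle avoiding that one. -/
structure IsMaxCycle (G : SimpleGraph V) (X : Set V) (N : ℕ) (f : ℕ → V) : Prop where
  pos : 0 < N
  periodic : ∀ p, f (p + N) = f p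
  injOn : ∀ p q, p < N → q < N → f p = f q → p = q
  adj : 2 ≤ N → ∀ p, G.Adj (f p) (f (p + 1))
  mem : ∀ p, f p ∈ X
  length_le : ∀ L, IsGenCycle G L → (∀ x ∈ L, x ∈ X) → L.length ≤ N

/-- The list of the `len` consecutive values `f s, f (s + 1), …`. -/
def arc (f : ℕ → V) (s len : ℕ) : List V := (List.range' s len).map f

@[simp] lemma length_arc (f : ℕ → V) (s len : ℕ) : (arc f s len).length = len := by simp [arc]

lemma mem_arc {f : ℕ → V} {s len : ℕ} {x : V} :
    x ∈ arc f s len ↔ ∃ q, s ≤ q ∧ q < s + len ∧ f q = x := by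
  simp [arc, List.mem_range'_1, and_assoc]

lemma mem_range_of_mem_arc {f : ℕ → V} {s len : ℕ} {x : V} (hx : x ∈ arc f s len) :
    x ∈ Set.range f := by
  obtain ⟨q, -, -, rfl⟩ := mem_arc.1 hx
  exact ⟨q, rfl⟩

namespace IsMaxCycle

variable {X : Set V} {N : ℕ} {f : ℕ → V}

lemma map_mod (h : IsMaxCycle G X N f) (p : ℕ) : f (p % N) = f p :=
  Function.Periodic.map_mod_nat h.periodic p

lemma apply_eq_iff (h : IsMaxCycle G X N f) {p q : ℕ} : f p = f q ↔ p % N = q % N := by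
  rw [← h.map_mod p, ← h.map_mod q]
  exact ⟨h.injOn _ _ (Nat.mod_lt _ h.pos) (Nat.mod_lt _ h.pos), fun e => by rw [e]⟩

lemma eq_of_apply_eq (h : IsMaxCycle G X N f) {p q : ℕ} (hpq : p ≤ q) (hq : q < p + N)
    (e : f p = f q) : p = q := by
  have hmod : (q - p) % N = 0 :=
    Nat.mod_eq_zero_of_dvd ((Nat.modEq_iff_dvd' hpq).1 (h.apply_eq_iff.1 e))
  rw [Nat.mod_eq_of_lt (by omega)] at hmod
  omega

lemma apply_ne (h : IsMaxCycle G X N f) {p q : ℕ} (hpq : p < q) (hq : q < p + N) : f p ≠ f q :=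
  fun e => hpq.ne (h.eq_of_apply_eq hpq.le hq e)

lemma exists_apply_eq_in_window (h : IsMaxCycle G X N f) (s p : ℕ) :
    ∃ q, s ≤ q ∧ q < s + N ∧ f q = f p := by
  have hs : s ≤ s * N := Nat.le_mul_of_pos_right s h.pos
  have hlt := Nat.mod_lt (p + s * N - s) h.pos
  refine ⟨s + (p + s * N - s) % N, by omega, by omega, ?_⟩
  rw [h.apply_eq_iff, Nat.add_mod_mod, show s + (p + s * N - s) = p + s * N by omega,
    Nat.add_mul_mod_self_right]

lemma isPathList_arc (h : IsMaxCycle G X N f) {s e len : ℕ} (hlen : 1 ≤ len) (hN : len ≤ N)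
    (he : e + 1 = s + len) : IsPathList G (f s) (arc f s len) (f e) where
  nodup := by
    refine List.Nodup.map_on (fun x hx y hy exy => ?_) List.nodup_range'
    rw [List.mem_range'_1] at hx hy
    rcases le_total x y with hxy | hxy
    · exact h.eq_of_apply_eq hxy (by omega) exy
    · exact (h.eq_of_apply_eq hxy (by omega) exy.symm).symm
  isChain := by
    rw [List.isChain_iff_getElem]
    intro i hi
    rw [length_arc] at hi
    simpa only [arc, List.getElem_map, List.getElem_range', one_mul,
      Nat.add_assoc] using h.adj (by omega) (s + i)
  head?_eq := by
    obtain ⟨m, rfl⟩ := Nat.exists_eq_add_of_le' hlen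
    rfl
  getLast?_eq := by
    obtain ⟨m, rfl⟩ := Nat.exists_eq_add_of_le' hlen
    obtain rfl : e = s + m := by omega
    simp [arc, List.range'_concat]

lemma arc_disjoint (h : IsMaxCycle G X N f) {s len s' len' : ℕ} (h₁ : s + len ≤ s')
    (h₂ : s' + len' ≤ s + N) : ∀ x ∈ arc f s len, x ∉ arc f s' len' := by
  intro x hx hx'
  obtain ⟨q, hq, hq', rfl⟩ := mem_arc.1 hx
  obtain ⟨r, hr, hr', e⟩ := mem_arc.1 hx'
  exact h.apply_ne (p := q) (q := r) (by omega) (by omega) e.symm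

lemma mem_of_mem_arc (h : IsMaxCycle G X N f) {s len : ℕ} {x : V} (hx : x ∈ arc f s len) :
    x ∈ X := by
  obtain ⟨q, -, -, rfl⟩ := mem_arc.1 hx
  exact h.mem q

lemma length_le_of_adj (h : IsMaxCycle G X N f) (hP : IsPathList G a P b) (hab : G.Adj b a)
    (hX : ∀ x ∈ P, x ∈ X) : P.length ≤ N :=
  h.length_le _ ⟨a, b, hP, fun _ => hab⟩ hX

/-- The cycle from `f s` forward to `f o`, then the detour `P` from `f o` to `f t`, then the cycle
backward from `f t` to `f (o + 1)`. -/
lemma isPathList_detour (h : IsMaxCycle G X N f) {o t s : ℕ} (hot : o < t) (hts : t < s)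
    (hsN : s ≤ o + N) (hP : IsPathList G a P b) (hC : ∀ x ∈ P, x ∉ Set.range f)
    (ha : G.Adj (f o) a) (hb : G.Adj b (f t)) :
    IsPathList G (f s) ((arc f s (o + N + 1 - s) ++ P) ++ (arc f (o + 1) (t - o)).reverse)
      (f (o + 1)) := by
  refine ((h.isPathList_arc (e := o + N) (by omega) (by omega) (by omega)).append hP
    (by rwa [h.periodic]) fun x hx hx' => hC x hx' (mem_range_of_mem_arc hx)).append
    (h.isPathList_arc (e := t) (by omega) (by omega) (by omega)).reverse hb fun x hx hx' => ?_
  rw [List.mem_reverse] at hx'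
  rcases List.mem_append.1 hx with hx | hx
  · exact h.arc_disjoint (by omega) (by omega) x hx' hx
  · exact hC x hx (mem_range_of_mem_arc hx')

lemma detour_subset (h : IsMaxCycle G X N f) (hPX : ∀ x ∈ P, x ∈ X) {s m s' m' : ℕ} :
    ∀ x ∈ (arc f s m ++ P) ++ (arc f s' m').reverse, x ∈ X := by
  intro x hx
  simp only [List.mem_append, List.mem_reverse] at hx
  rcases hx with (hx | hx) | hx
  exacts [h.mem_of_mem_arc hx, hPX x hx, h.mem_of_mem_arc hx]

lemma length_add_one_le_of_attached (h : IsMaxCycle G X N f) {p k : ℕ} (hk : 1 ≤ k) (hkN : k ≤ N)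
    (hP : IsPathList G a P b) (hPX : ∀ x ∈ P, x ∈ X \ Set.range f)
    (ha : G.Adj (f p) a) (hb : G.Adj b (f (p + k))) : P.length + 1 ≤ k := by
  have hpath := (h.isPathList_arc (s := p + k) (e := p + N) (len := N - k + 1) (by omega)
    (by omega) (by omega)).append hP (by rwa [h.periodic])
    fun x hx hx' => (hPX x hx').2 (mem_range_of_mem_arc hx)
  have hlen := h.length_le_of_adj hpath hb fun x hx =>
    (List.mem_append.1 hx).elim h.mem_of_mem_arc fun hx => (hPX x hx).1
  rw [List.length_append, length_arc] at hlen
  omega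

lemma length_add_one_le_of_crossing (h : IsMaxCycle G X N f) {o t s : ℕ} (hot : o < t)
    (hs : 1 ≤ s) (hts : t + s ≤ o + N) (hP : IsPathList G a P b)
    (hPX : ∀ x ∈ P, x ∈ X \ Set.range f) (ha : G.Adj (f o) a) (hb : G.Adj b (f t))
    (hadj : G.Adj (f (o + 1)) (f (t + s))) : P.length + 1 ≤ s := by
  have hlen := h.length_le_of_adj
    (h.isPathList_detour hot (Nat.lt_add_of_pos_right hs) hts hP (fun x hx => (hPX x hx).2) ha hb)
    hadj (h.detour_subset fun x hx => (hPX x hx).1)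
  simp only [List.length_append, List.length_reverse, length_arc] at hlen
  omega

lemma length_add_one_le_of_double_crossing (h : IsMaxCycle G X N f) {o g t s : ℕ} (hg : 1 ≤ g)
    (hot : o + g + 1 ≤ t) (hs : 1 ≤ s) (hts : t + s ≤ o + N) (hP : IsPathList G a P b)
    (hPX : ∀ x ∈ P, x ∈ X \ Set.range f) (ha : G.Adj (f o) a) (hb : G.Adj b (f (o + g)))
    (hadj : G.Adj (f (o + 1)) (f t)) (hadj' : G.Adj (f (o + g + 1)) (f (t + s))) :
    P.length + 1 ≤ s := by
  have hpath := (h.isPathList_detour (o := o) (t := o + g) (s := t + s) (by omega) (by omega) hts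
    hP (fun x hx => (hPX x hx).2) ha hb).append
    (h.isPathList_arc (s := o + g + 1) (e := t) (len := t - o - g) (by omega) (by omega)
      (by omega)).reverse hadj fun x hx hx' => by
    simp only [List.mem_append, List.mem_reverse] at hx hx'
    rcases hx with (hx | hx) | hx
    · exact h.arc_disjoint (by omega) (by omega) x hx' hx
    · exact (hPX x hx).2 (mem_range_of_mem_arc hx')
    · exact h.arc_disjoint (by omega) (by omega) x hx hx'
  have hlen := h.length_le_of_adj hpath hadj' fun x hx =>
    (List.mem_append.1 hx).elim (h.detour_subset (fun x hx => (hPX x hx).1) x) fun hx =>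
      h.mem_of_mem_arc (List.mem_reverse.1 hx)
  simp only [List.length_append, List.length_reverse, length_arc] at hlen
  omega

lemma not_adj_successor_of_adj_successor (h : IsMaxCycle G X N f) {o g : ℕ} {z : V} (hg : 1 ≤ g)
    (hgN : g < N) (hP : IsPathList G a P b) (hPX : ∀ x ∈ P, x ∈ X \ Set.range f)
    (ha : G.Adj (f o) a) (hb : G.Adj b (f (o + g))) (hz : z ∈ X \ Set.range f) (hzP : z ∉ P)
    (hadj : G.Adj (f (o + 1)) z) : ¬ G.Adj (f (o + g + 1)) z := by
  intro hadj'
  have hpath := (h.isPathList_detour (o := o) (t := o + g) (s := o + g + 1) (by omega) (by omega)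
    (by omega) hP (fun x hx => (hPX x hx).2) ha hb).concat hadj (by
    simp only [List.mem_append, List.mem_reverse]
    rintro ((hx | hx) | hx)
    exacts [hz.2 (mem_range_of_mem_arc hx), hzP hx, hz.2 (mem_range_of_mem_arc hx)])
  have hlen := h.length_le_of_adj hpath hadj'.symm fun x hx =>
    (List.mem_append.1 hx).elim (h.detour_subset (fun x hx => (hPX x hx).1) x) fun hx =>
      List.mem_singleton.1 hx ▸ hz.1
  have := hP.length_pos
  simp only [List.length_append, List.length_reverse, length_arc, List.length_singleton] at hlen
  omega

end IsMaxCycle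

end Paths

section Linkages

/-! ### Menger's theorem -/

/-- A family of disjoint paths `R i` from `s i ∈ A` to `e i ∈ B`, each meeting `A` and `B` in its
ends only. -/
structure IsLinkage {ι : Type*} (G : SimpleGraph V) (A B : Finset V) (s e : ι → V)
    (R : ι → List V) : Prop where
  isPathList : ∀ i, IsPathList G (s i) (R i) (e i)
  start_mem : ∀ i, s i ∈ A
  end_mem : ∀ i, e i ∈ B
  eq_start : ∀ i, ∀ x ∈ R i, x ∈ A → x = s i
  eq_end : ∀ i, ∀ x ∈ R i, x ∈ B → x = e i
  disjoint : ∀ i j, i ≠ j → ∀ x ∈ R i, x ∉ R j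

variable {G : SimpleGraph V} {a b : V} {P : List V} {A B : Finset V}

lemma IsPathList.exists_subpath_meeting_only_in_ends (h : IsPathList G a P b) (ha : a ∈ A)
    (hb : b ∈ B) : ∃ a' ∈ A, ∃ b' ∈ B, ∃ P', IsPathList G a' P' b' ∧ P' ⊆ P ∧
      (∀ x ∈ P', x ∈ A → x = a') ∧ ∀ x ∈ P', x ∈ B → x = b' := by
  obtain ⟨P', ⟨hP', a', ha', b', hb', h'⟩, hmin⟩ := (measure List.length).wf.has_min
    {P' | P' ⊆ P ∧ ∃ a' ∈ A, ∃ b' ∈ B, IsPathList G a' P' b'} ⟨P, fun _ => id, a, ha, b, hb, h⟩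
  refine ⟨a', ha', b', hb', P', h', hP', fun x hx hxA => ?_, fun x hx hxB => ?_⟩
  · obtain ⟨P₁, P₂, rfl⟩ := List.append_of_mem hx
    by_contra hne
    have hP₁ : P₁ ≠ [] := by
      rintro rfl
      exact hne (Option.some.inj h'.head?_eq)
    refine hmin _ ⟨fun y hy => hP' (List.mem_append_right _ hy), x, hxA, b', hb',
      h'.of_append_right⟩ ?_
    simpa [WellFoundedRelation.rel, InvImage] using List.length_pos_of_ne_nil hP₁
  · obtain ⟨P₁, P₂, rfl⟩ := List.append_of_mem hx
    by_contra hne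
    have hP₂ : P₂ ≠ [] := by
      rintro rfl
      exact hne (Option.some.inj ((List.getLast?_concat).symm.trans h'.getLast?_eq))
    refine hmin _ ⟨fun y hy => hP' (by
      rw [List.append_cons]; exact List.mem_append_left _ hy), a', ha', x, hxB,
      h'.of_append_left⟩ ?_
    simpa [WellFoundedRelation.rel, InvImage] using List.length_pos_of_ne_nil hP₂

section Orbits

variable {α β : Type*} {f : α ⊕ β → α ⊕ β} {i j : β} {L L' : List α}

/-- The first iterates of `f` at `i` all lie in the left summand, and `L` lists them. -/
def IsOrbitSegment (f : α ⊕ β → α ⊕ β) (i : β) (L : List α) : Prop :=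
  ∀ (n : ℕ) (h : n < L.length), f^[n + 1] (.inr i) = .inl L[n]

lemma exists_isOrbitSegment [Finite α] [Finite β] (hf : f.Injective) (i : β) :
    ∃ L, IsOrbitSegment f i L ∧ ∃ j, f^[L.length + 1] (.inr i) = .inr j := by
  classical
  have hreturn : ∃ m, (f^[m + 1] (.inr i)).isRight := by
    obtain ⟨m, hm, hper⟩ := hf.mem_periodicPts (.inr i)
    exact ⟨m - 1, by rw [Nat.sub_add_cancel hm, hper.eq]; rfl⟩
  have hleft : ∀ n : Fin (Nat.find hreturn), ∃ v, f^[n.1 + 1] (.inr i) = .inl v := fun n =>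
    Sum.isLeft_iff.1 (Sum.not_isRight.1 (Nat.find_min hreturn n.2))
  choose v hv using hleft
  refine ⟨List.ofFn v, fun n h => ?_, ?_⟩
  · rw [List.getElem_ofFn]
    exact hv ⟨n, (List.length_ofFn (f := v)) ▸ h⟩
  · rw [List.length_ofFn]
    exact Sum.isRight_iff.1 (Nat.find_spec hreturn)

namespace IsOrbitSegment

lemma eq_of_getElem_eq (hf : f.Injective) (hL : IsOrbitSegment f i L) (hL' : IsOrbitSegment f j L')
    {n m : ℕ} (hn : n < L.length) (hm : m < L'.length) (e : L[n] = L'[m]) : n = m ∧ i = j := by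
  wlog hnm : n ≤ m generalizing i j L L' n m
  · exact (this hL' hL hm hn e.symm (Nat.le_of_not_le hnm)).imp Eq.symm Eq.symm
  obtain ⟨r, rfl⟩ := Nat.exists_eq_add_of_le hnm
  have hiter : f^[n + 1] (.inr i) = f^[n + 1] (f^[r] (.inr j)) := by
    rw [← Function.iterate_add_apply, hL n hn, e, ← hL' _ hm, Nat.add_right_comm]
  have hcancel := hf.iterate _ hiter
  rcases r with _ | r
  · exact ⟨rfl, Sum.inr.inj hcancel⟩
  · simp [hL' r (by omega)] at hcancel

lemma nodup (hf : f.Injective) (hL : IsOrbitSegment f i L) : L.Nodup :=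
  List.nodup_iff_injective_getElem.2 fun n m e =>
    Fin.ext (hL.eq_of_getElem_eq hf hL n.2 m.2 e).1

lemma notMem_of_ne (hf : f.Injective) (hL : IsOrbitSegment f i L) (hL' : IsOrbitSegment f j L')
    (hij : i ≠ j) : ∀ x ∈ L, x ∉ L' := by
  intro x hx hx'
  obtain ⟨n, hn, rfl⟩ := List.getElem_of_mem hx
  obtain ⟨m, hm, e⟩ := List.getElem_of_mem hx'
  exact hij (hL.eq_of_getElem_eq hf hL' hn hm e.symm).2

lemma apply_getElem (hL : IsOrbitSegment f i L) {n : ℕ} (hn : n < L.length) :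
    f (.inl L[n]) = f^[n + 2] (.inr i) := by
  rw [Function.iterate_succ_apply' f (n + 1), hL n hn]

end IsOrbitSegment

end Orbits

variable {k : ℕ}

/-- The steps allowed in a family of `k` disjoint paths from `A` to `B`, where the elements of
`Fin k` stand before the first and after the last vertex of a path. A permutation of `V ⊕ Fin k`
consisting of such steps is a linkage, the vertices off the paths being fixed. -/
def LinkStep (G : SimpleGraph V) (A B : Finset V) : V ⊕ Fin k → V ⊕ Fin k → Prop
  | .inl v, .inl w => v = w ∨ G.Adj v w
  | .inr _, .inl w => w ∈ A
  | .inl v, .inr _ => v ∈ B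
  | .inr _, .inr _ => False

lemma exists_isPathList_isOrbitSegment [Finite V] {f : V ⊕ Fin k → V ⊕ Fin k} (hf : f.Injective)
    (hstep : ∀ x, LinkStep G A B x (f x)) (i : Fin k) :
    ∃ a ∈ A, ∃ b ∈ B, ∃ L, IsPathList G a L b ∧ IsOrbitSegment f i L := by
  obtain ⟨L, hL, j, hj⟩ := exists_isOrbitSegment hf i
  have hne : L ≠ [] := by
    rintro rfl
    have hstep_i := hstep (.inr i)
    rw [show f (.inr i) = .inr j from hj] at hstep_i
    exact hstep_i
  have hpos := List.length_pos_of_ne_nil hne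
  have hhead : L.head hne ∈ A := by
    have hstep_i := hstep (.inr i)
    rw [show f (.inr i) = .inl L[0] from hL 0 hpos] at hstep_i
    rwa [List.head_eq_getElem]
  have hlast : L.getLast hne ∈ B := by
    have hstep_last := hstep (.inl L[L.length - 1])
    rw [hL.apply_getElem, show L.length - 1 + 2 = L.length + 1 by omega, hj] at hstep_last
    rwa [List.getLast_eq_getElem]
  have hchain : L.IsChain G.Adj := by
    rw [List.isChain_iff_getElem]
    intro n hn
    have hstep_n := hstep (.inl L[n])
    rw [hL.apply_getElem (by omega), hL (n + 1) hn] at hstep_n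
    refine hstep_n.resolve_left fun e => ?_
    have := (hL.eq_of_getElem_eq hf hL _ _ e).1
    omega
  exact ⟨_, hhead, _, hlast, L, ⟨hL.nodup hf, hchain, List.head?_eq_some_head hne,
    List.getLast?_eq_some_getLast hne⟩, hL⟩

lemma exists_isLinkage_of_linkStep [Finite V] {f : V ⊕ Fin k → V ⊕ Fin k} (hf : f.Injective)
    (hstep : ∀ x, LinkStep G A B x (f x)) :
    ∃ (s e : Fin k → V) (R : Fin k → List V), IsLinkage G A B s e R := by
  choose a ha b hb L hpath horbit using exists_isPathList_isOrbitSegment hf hstep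
  choose s hs e he R hR hRL hRs hRe using fun i =>
    (hpath i).exists_subpath_meeting_only_in_ends (ha i) (hb i)
  exact ⟨s, e, R, hR, hs, he, hRs, hRe, fun i j hij x hx hx' =>
    (horbit i).notMem_of_ne hf (horbit j) hij x (hRL i hx) (hRL j hx')⟩

section Menger

variable [Fintype V]

open Classical in
lemma le_card_boundary_of_kConnected (hG : KConnected G k) (hA : k ≤ A.card) (hB : k ≤ B.card)
    {Y : Finset V} (hY : ∀ y ∈ Y, y ∉ B) :
    k ≤ (Finset.univ.filter fun w => (w ∈ A ∨ ∃ y ∈ Y, G.Adj y w) ∧ w ∉ Y).card := by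
  by_contra! hlt
  set S := Finset.univ.filter fun w => (w ∈ A ∨ ∃ y ∈ Y, G.Adj y w) ∧ w ∉ Y with hS
  have mem_S : ∀ {w}, w ∈ S ↔ (w ∈ A ∨ ∃ y ∈ Y, G.Adj y w) ∧ w ∉ Y := by simp [hS]
  obtain ⟨x, hxA, hxS⟩ := Finset.exists_mem_notMem_of_card_lt_card (hlt.trans_le hA)
  obtain ⟨z, hzB, hzS⟩ := Finset.exists_mem_notMem_of_card_lt_card (hlt.trans_le hB)
  have hxY : x ∈ Y := by
    by_contra h
    exact hxS (mem_S.2 ⟨.inl hxA, h⟩)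
  have hclosed : ∀ {u v : ((↑S : Set V)ᶜ : Set V)}, (G.induce ((↑S : Set V)ᶜ)).Walk u v →
      u.1 ∈ Y → v.1 ∈ Y := by
    intro u _ W
    induction W with
    | nil => exact id
    | @cons u w _ h _ ih =>
      intro hu
      refine ih (by_contra fun hw => w.2 (Finset.mem_coe.2 (mem_S.2 ⟨.inr ⟨u, hu, h⟩, hw⟩)))
  obtain ⟨W⟩ := (hG.2 S hlt).preconnected ⟨x, by simpa using hxS⟩ ⟨z, by simpa using hzS⟩
  exact hY _ (hclosed W hxY) hzB

/-- Hall's condition for `LinkStep`, verified by counting the neighbours of a set of vertices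
together with the set itself. -/
lemma exists_injective_linkStep (hG : KConnected G k) (hA : k ≤ A.card) (hB : k ≤ B.card) :
    ∃ f : V ⊕ Fin k → V ⊕ Fin k, f.Injective ∧ ∀ x, LinkStep G A B x (f x) := by
  classical
  rw [← Fintype.all_card_le_filter_rel_iff_exists_injective]
  intro X
  set T := Finset.univ.filter fun b => ∃ a ∈ X, LinkStep G A B a b with hT
  have mem_T : ∀ {b}, b ∈ T ↔ ∃ a ∈ X, LinkStep G A B a b := by simp [hT]
  have hfix : ∀ v, .inl v ∈ X → .inl v ∈ T := fun v hv => mem_T.2 ⟨_, hv, .inl rfl⟩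
  have hX : X.toLeft.card + X.toRight.card = X.card := Finset.card_toLeft_add_card_toRight
  have hXk : X.toRight.card ≤ k := by simpa using Finset.card_le_univ X.toRight
  rcases Finset.eq_empty_or_nonempty X.toRight with hempty | ⟨i, hi⟩
  · refine Finset.card_le_card ?_
    rintro (v | i) hx
    · exact hfix v hx
    · simpa [hempty] using Finset.mem_toRight.2 hx
  by_cases hYB : ∃ y ∈ X.toLeft, y ∈ B
  · obtain ⟨y, hy, hyB⟩ := hYB
    have hsub : X.toLeft.disjSum (Finset.univ : Finset (Fin k)) ⊆ T := by
      rintro (v | j) hx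
      · exact hfix v (by simpa using hx)
      · exact mem_T.2 ⟨.inl y, Finset.mem_toLeft.1 hy, hyB⟩
    have hcard := Finset.card_le_card hsub
    rw [Finset.card_disjSum, Finset.card_univ, Fintype.card_fin] at hcard
    omega
  · push Not at hYB
    have hboundary := le_card_boundary_of_kConnected hG hA hB hYB
    set S := Finset.univ.filter fun w => (w ∈ A ∨ ∃ y ∈ X.toLeft, G.Adj y w) ∧ w ∉ X.toLeft
    have hdisj : Disjoint X.toLeft S :=
      Finset.disjoint_left.2 fun w hw hwS => (Finset.mem_filter.1 hwS).2.2 hw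
    have hsub : (X.toLeft ∪ S).map .inl ⊆ T := by
      intro x hx
      obtain ⟨w, hw, rfl⟩ := Finset.mem_map.1 hx
      rcases Finset.mem_union.1 hw with hw | hw
      · exact hfix w (Finset.mem_toLeft.1 hw)
      · rcases (Finset.mem_filter.1 hw).2.1 with hwA | ⟨y, hy, hyw⟩
        · exact mem_T.2 ⟨.inr i, Finset.mem_toRight.1 hi, hwA⟩
        · exact mem_T.2 ⟨.inl y, Finset.mem_toLeft.1 hy, .inr hyw⟩
    have hcard := Finset.card_le_card hsub
    rw [Finset.card_map, Finset.card_union_of_disjoint hdisj] at hcard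
    omega

theorem exists_isLinkage (hG : KConnected G k) (hA : k ≤ A.card) (hB : k ≤ B.card) :
    ∃ (s e : Fin k → V) (R : Fin k → List V), IsLinkage G A B s e R := by
  obtain ⟨f, hf, hstep⟩ := exists_injective_linkStep hG hA hB
  exact exists_isLinkage_of_linkStep hf hstep

end Menger

end Linkages

section Cycles

variable {G : SimpleGraph V} {a b c : V} {P Q : List V}

/-! ### Joining paths -/

namespace IsPathList

lemma eq_of_cons (h : IsPathList G a (c :: P) b) : c = a := Option.some.inj h.head?_eq

lemma notMem_of_cons (h : IsPathList G a (c :: P) b) : a ∉ P := by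
  obtain rfl := h.eq_of_cons
  exact (List.nodup_cons.1 h.nodup).1

lemma exists_eq_cons (h : IsPathList G a P b) : ∃ L, P = a :: L := by
  obtain ⟨y, L, rfl⟩ := List.exists_cons_of_ne_nil h.ne_nil
  exact ⟨L, by rw [h.eq_of_cons]⟩

lemma join (h : IsPathList G a P b) (h' : IsPathList G b (b :: Q) c) (hPQ : ∀ x ∈ P, x ∉ Q) :
    IsPathList G a (P ++ Q) c := by
  rcases Q with _ | ⟨y, Q⟩
  · obtain rfl : b = c := Option.some.inj h'.getLast?_eq
    rwa [List.append_nil]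
  · exact h.append (of_append_right (P := [b]) h') (adj_of_append_cons_cons (P := []) h') hPQ

lemma detour {s t l l' : V} {L M L' : List V} (h₁ : IsPathList G s (s :: L) l)
    (h₂ : IsPathList G s M t) (h₃ : IsPathList G t (t :: L') l') (hLM : ∀ x ∈ L, x ∉ M)
    (hLM' : ∀ x ∈ L', x ∉ M) (hLL : ∀ x ∈ L, x ∉ L') :
    IsPathList G l (L.reverse ++ M ++ L') l' := by
  obtain ⟨M, rfl⟩ := h₂.exists_eq_cons
  have hback := h₁.reverse.join h₂ fun x hx hxM => by
    rcases List.mem_cons.1 (List.mem_reverse.1 hx) with rfl | hx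
    · exact h₂.notMem_of_cons hxM
    · exact hLM x hx (List.mem_cons_of_mem _ hxM)
  rw [List.reverse_cons, List.append_assoc, List.singleton_append] at hback
  refine hback.join h₃ fun x hx hx' => ?_
  rcases List.mem_append.1 hx with hx | hx
  · exact hLL x (List.mem_reverse.1 hx) hx'
  · exact hLM' x hx' hx

lemma exists_eq_cons_concat (h : IsPathList G a P b) (hab : a ≠ b) :
    ∃ L l, P = a :: L ++ [b] ∧ IsPathList G a (a :: L) l ∧ G.Adj l b := by
  obtain ⟨P', rfl⟩ := h.exists_eq_cons
  rcases List.eq_nil_or_concat P' with rfl | ⟨L, z, rfl⟩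
  · exact absurd (Option.some.inj h.getLast?_eq) hab
  rw [List.concat_eq_append, ← List.cons_append] at h ⊢
  obtain rfl : z = b := Option.some.inj (List.getLast?_concat.symm.trans h.getLast?_eq)
  have hlast := List.getLast?_eq_some_getLast (List.cons_ne_nil a L)
  have hsplit := List.isChain_append.1 h.isChain
  exact ⟨L, _, rfl, ⟨(List.nodup_append'.1 h.nodup).1, hsplit.1, rfl, hlast⟩,
    hsplit.2.2 _ hlast _ rfl⟩

end IsPathList

/-- `x` and `y` are equal or joined by a walk avoiding `S`. -/
def JoinedOff (G : SimpleGraph V) (S : Set V) : V → V → Prop :=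
  Relation.ReflTransGen fun u v => G.Adj u v ∧ u ∉ S ∧ v ∉ S

namespace JoinedOff

variable {S : Set V} {x y : V}

lemma symm (h : JoinedOff G S x y) : JoinedOff G S y x :=
  have : Std.Symm fun u v => G.Adj u v ∧ u ∉ S ∧ v ∉ S := ⟨fun _ _ h => ⟨h.1.symm, h.2.2, h.2.1⟩⟩
  (Relation.ReflTransGen.stdSymm (r := fun u v => G.Adj u v ∧ u ∉ S ∧ v ∉ S)).symm _ _ h

lemma exists_isPathList (h : JoinedOff G S x y) (hx : x ∉ S) :
    ∃ P, IsPathList G x P y ∧ ∀ z ∈ P, z ∉ S := by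
  induction h with
  | refl => exact ⟨[x], .singleton x, by simpa using hx⟩
  | @tail y z _ hyz ih =>
    obtain ⟨P, hP, hPS⟩ := ih
    by_cases hz : z ∈ P
    · obtain ⟨P₁, P₂, rfl⟩ := List.append_of_mem hz
      refine ⟨_, hP.of_append_left, fun w hw => hPS w ?_⟩
      rw [List.append_cons]
      exact List.mem_append_left _ hw
    · refine ⟨_, hP.concat hyz.1 hz, fun w hw => ?_⟩
      rcases List.mem_append.1 hw with hw | hw
      · exact hPS w hw
      · exact List.mem_singleton.1 hw ▸ hyz.2.2

lemma of_isChain : ∀ {L : List V} {a : V}, (a :: L).IsChain G.Adj →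
    (∀ x ∈ a :: L, x ∉ S) → ∀ x ∈ a :: L, JoinedOff G S a x
  | [], _, _, _, _, hx => List.mem_singleton.1 hx ▸ .refl
  | y :: L, a, hc, hS, x, hx => by
    rw [List.isChain_cons_cons] at hc
    rcases List.mem_cons.1 hx with rfl | hx
    · exact .refl
    · exact .head ⟨hc.1, hS a (by simp), hS y (by simp)⟩
        (of_isChain hc.2 (fun z hz => hS z (List.mem_cons_of_mem _ hz)) x hx)

end JoinedOff

lemma IsPathList.joinedOff {S : Set V} (h : IsPathList G a P b) (hS : ∀ x ∈ P, x ∉ S) {x : V}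
    (hx : x ∈ P) : JoinedOff G S a x := by
  obtain ⟨L, rfl⟩ := h.exists_eq_cons
  exact .of_isChain h.isChain hS x hx

lemma IsLinkage.exists_legs {ι : Type*} {A B : Finset V} {s e : ι → V} {R : ι → List V}
    (h : IsLinkage G A B s e R) (hAB : Disjoint A B) : ∃ (L : ι → List V) (l : ι → V),
      (∀ i, IsPathList G (s i) (s i :: L i) (l i)) ∧ (∀ i, G.Adj (l i) (e i)) ∧
      (∀ i, ∀ x ∈ L i, x ∉ A) ∧ (∀ i, ∀ x ∈ s i :: L i, x ∉ B) ∧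
      ∀ i j, i ≠ j → ∀ x ∈ s i :: L i, x ∉ s j :: L j := by
  have hse : ∀ i, s i ≠ e i := fun i hi =>
    Finset.disjoint_left.1 hAB (h.start_mem i) (hi ▸ h.end_mem i)
  choose L l hR hL hadj using fun i => (h.isPathList i).exists_eq_cons_concat (hse i)
  have hLR : ∀ i, ∀ x ∈ s i :: L i, x ∈ R i := fun i x hx => hR i ▸ List.mem_append_left _ hx
  refine ⟨L, l, hL, hadj, fun i x hx hxA => ?_, fun i x hx hxB => ?_, fun i j hij x hx hx' =>
    h.disjoint i j hij x (hLR i x hx) (hLR j x hx')⟩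
  · have hxs := h.eq_start i x (hLR i x (List.mem_cons_of_mem _ hx)) hxA
    exact (hL i).notMem_of_cons (hxs ▸ hx)
  · have hxe := h.eq_end i x (hLR i x hx) hxB
    have hnodup := (h.isPathList i).nodup
    rw [hR, List.nodup_append'] at hnodup
    exact hnodup.2.2 hx (List.mem_singleton.2 hxe)

/-! ### Counting along the cycle -/

lemma nth_add_count_of_periodic {A : ℕ → Prop} [DecidablePred A] {N : ℕ}
    (hper : Function.Periodic A N) (hinf : (Set.ofPred A).Infinite) (k : ℕ) :
    Nat.nth A (k + N.count A) = Nat.nth A k + N := by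
  classical
  have hcount : Nat.count A (Nat.nth A k + N) = k + N.count A := by
    rw [Nat.count_add, Nat.count_nth_of_infinite hinf,
      ← Nat.filter_Ico_card_eq_of_periodic (Nat.nth A k) N A hper, Nat.count_eq_card_filter_range,
      ← Finset.card_map (addLeftEmbedding (Nat.nth A k))]
    congr 2
    rw [Finset.range_eq_Ico, Finset.map_filter', Finset.map_add_left_Ico, Nat.add_zero]
    refine Finset.filter_congr fun q hq => ⟨?_, fun hq' => ?_⟩
    · rintro ⟨r, hr, rfl⟩
      exact hr
    · rw [Finset.mem_Ico] at hq
      exact ⟨q - Nat.nth A k, by rwa [Nat.add_sub_cancel' hq.1], Nat.add_sub_cancel' hq.1⟩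
  rw [← hcount, Nat.nth_count]
  exact (hper _).symm ▸ Nat.nth_mem_of_infinite hinf k

lemma exists_periodic_enum {m N : ℕ} (hm : 0 < m) (pos : Fin m → ℕ) (hinj : pos.Injective)
    (hlt : ∀ i, pos i < N) :
    ∃ (p : ℕ → ℕ) (σ : ℕ → Fin m), StrictMono p ∧ (∀ k, p (k + m) = p k + N) ∧
      (∀ k, p k % N = pos (σ k)) ∧ ∀ k k', k < k' → k' < k + m → σ k ≠ σ k' := by
  classical
  set A : ℕ → Prop := fun q => ∃ i, pos i = q % N with hA
  have hper : Function.Periodic A N := fun q => by simp only [hA, Nat.add_mod_right]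
  have hcount : N.count A = m := by
    have himage : (Finset.range N).filter A = Finset.univ.image pos := by
      ext q
      simp only [hA, Finset.mem_filter, Finset.mem_range, Finset.mem_image, Finset.mem_univ,
        true_and]
      constructor
      · rintro ⟨hq, i, hi⟩
        exact ⟨i, by rw [hi, Nat.mod_eq_of_lt hq]⟩
      · rintro ⟨i, rfl⟩
        exact ⟨hlt i, i, (Nat.mod_eq_of_lt (hlt i)).symm⟩
    rw [Nat.count_eq_card_filter_range, himage, Finset.card_image_of_injective _ hinj,
      Finset.card_univ, Fintype.card_fin]
  have hinf : (Set.ofPred A).Infinite := Set.infinite_of_injective_forall_mem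
    (f := fun n => pos ⟨0, hm⟩ + n * N)
    (fun n n' hnn => Nat.eq_of_mul_eq_mul_right ((hlt ⟨0, hm⟩).pos) (Nat.add_left_cancel hnn))
    fun n => ⟨⟨0, hm⟩, by rw [Nat.add_mul_mod_self_right, Nat.mod_eq_of_lt (hlt _)]⟩
  have hshift : ∀ k, Nat.nth A (k + m) = Nat.nth A k + N := fun k =>
    (congrArg (fun m => Nat.nth A (k + m)) hcount).symm.trans
      (nth_add_count_of_periodic hper hinf k)
  have hmono := Nat.nth_strictMono hinf
  choose σ hσ using Nat.nth_mem_of_infinite hinf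
  refine ⟨Nat.nth A, σ, hmono, hshift, fun k => (hσ k).symm, fun k k' hk hk' e => ?_⟩
  have hlt₁ := hmono hk
  have hlt₂ := hmono hk'
  rw [hshift] at hlt₂
  have hdvd := (Nat.modEq_iff_dvd' hlt₁.le).1
    (((hσ k).symm.trans (congrArg pos e)).trans (hσ k') : Nat.nth A k % N = _)
  have := Nat.le_of_dvd (by omega) hdvd
  omega

lemma sum_range_add_of_periodic {M : Type*} [AddCommMonoid M] {h : ℕ → M} {m : ℕ}
    (hper : Function.Periodic h m) (j : ℕ) :
    ∑ a ∈ Finset.range m, h (j + a) = ∑ a ∈ Finset.range m, h a := by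
  induction j with
  | zero => simp only [Nat.zero_add]
  | succ j ih =>
    rcases m with _ | m
    · rfl
    rw [← ih, Finset.sum_range_succ, Finset.sum_range_succ', Nat.add_right_comm, Nat.add_assoc,
      hper]
    simp only [Nat.add_assoc, Nat.add_comm 1, Nat.add_zero]

lemma sum_card_filter_Ioc {p : ℕ → ℕ} (hp : Monotone p) (A : ℕ → Prop) [DecidablePred A]
    (s m : ℕ) : ∑ i ∈ Finset.range m, ((Finset.Ioc (p (s + i)) (p (s + i + 1))).filter A).card =
      ((Finset.Ioc (p s) (p (s + m))).filter A).card := by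
  induction m with
  | zero => simp
  | succ m ih =>
    rw [Finset.sum_range_succ, ih, ← Finset.card_union_of_disjoint, ← Finset.filter_union,
      Finset.Ioc_union_Ioc_eq_Ioc (hp (by omega)) (hp (by omega)), Nat.add_assoc]
    exact Finset.disjoint_filter_filter (Finset.Ioc_disjoint_Ioc_of_le le_rfl)

/-- The sets `A a` shifted by `m - a` are pairwise disjoint in the range counted on the right. -/
lemma sum_card_filter_Ioc_le_of_shift_disjoint (A : ℕ → ℕ → Prop) [∀ a, DecidablePred (A a)]
    {m u v : ℕ} (huv : u < v) (hm : 1 ≤ m)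
    (hA : ∀ a b t, a < b → b ≤ m → u < t → t + (b - a) ≤ v → A a t → ¬ A b (t + (b - a)))
    (h₀ : ¬ A m (u + 1)) :
    ∑ a ∈ Finset.range (m + 1), ((Finset.Ioc u v).filter (A a)).card ≤ v - u + (m - 1) := by
  classical
  have mem_sigma : ∀ {a t : ℕ}, ⟨a, t⟩ ∈ (Finset.range (m + 1)).sigma (fun a =>
      (Finset.Ioc u v).filter (A a)) ↔ a ≤ m ∧ (u < t ∧ t ≤ v) ∧ A a t := by
    simp
  rw [← Finset.card_sigma, show v - u + (m - 1) = (Finset.Icc (u + 2) (v + m)).card by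
    rw [Nat.card_Icc]; omega]
  refine Finset.card_le_card_of_injOn (fun x => x.2 + m - x.1) ?_ ?_
  · rintro ⟨a, t⟩ h
    obtain ⟨ha, ht, hAt⟩ := mem_sigma.1 h
    refine Finset.mem_coe.2 (Finset.mem_Icc.2 ⟨?_, by dsimp only; omega⟩)
    by_contra hlt
    obtain ⟨rfl, rfl⟩ : a = m ∧ t = u + 1 := by dsimp only at hlt; omega
    exact h₀ hAt
  · have key : ∀ a t b t', a < b → b ≤ m → u < t → t' ≤ v → A a t → A b t' →
        t + m - a ≠ t' + m - b := by
      intro a t b t' hab hb ht ht' hAa hAb he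
      obtain rfl : t' = t + (b - a) := by omega
      exact hA a b t hab hb ht ht' hAa hAb
    rintro ⟨a, t⟩ h ⟨b, t'⟩ h' he
    obtain ⟨ha, ht, hAt⟩ := mem_sigma.1 h
    obtain ⟨hb, ht', hAt'⟩ := mem_sigma.1 h'
    dsimp only at he
    rcases lt_trichotomy a b with hab | rfl | hab
    · exact (key a t b t' hab hb ht.1 ht'.2 hAt hAt' he).elim
    · rw [show t = t' by omega]
    · exact (key b t' a t hab ha ht'.1 ht.2 hAt' hAt he.symm).elim

variable [DecidableEq V]

/-- The vertex set of the cycle enumerated with period `N` by `f`. -/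
def cycleVerts (f : ℕ → V) (N : ℕ) : Finset V := (Finset.range N).image f

namespace IsMaxCycle

variable {X : Set V} {N : ℕ} {f : ℕ → V}

lemma mem_cycleVerts (h : IsMaxCycle G X N f) {x : V} :
    x ∈ cycleVerts f N ↔ x ∈ Set.range f := by
  simp only [cycleVerts, Finset.mem_image, Finset.mem_range, Set.mem_range]
  constructor
  · rintro ⟨p, -, rfl⟩
    exact ⟨p, rfl⟩
  · rintro ⟨p, rfl⟩
    exact ⟨p % N, Nat.mod_lt _ h.pos, h.map_mod p⟩

lemma card_cycleVerts (h : IsMaxCycle G X N f) : (cycleVerts f N).card = N := by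
  rw [cycleVerts, Finset.card_image_of_injOn, Finset.card_range]
  intro p hp q hq e
  exact h.injOn p q (Finset.mem_range.1 hp) (Finset.mem_range.1 hq) e

lemma card_neighborFinset_inter_cycleVerts_le [Fintype V] [DecidableRel G.Adj]
    (h : IsMaxCycle G X N f) (u : V) (s : ℕ) :
    (G.neighborFinset u ∩ cycleVerts f N).card ≤
      ((Finset.Ioc s (s + N)).filter fun t => G.Adj u (f t)).card := by
  refine (Finset.card_le_card fun x hx => ?_).trans (Finset.card_image_le (f := f))
  rw [Finset.mem_inter, mem_neighborFinset, h.mem_cycleVerts] at hx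
  obtain ⟨hux, p, rfl⟩ := hx
  obtain ⟨q, hq₁, hq₂, hq₃⟩ := h.exists_apply_eq_in_window (s + 1) p
  exact Finset.mem_image.2 ⟨q, Finset.mem_filter.2
    ⟨Finset.mem_Ioc.2 ⟨by omega, by omega⟩, hq₃ ▸ hux⟩, hq₃⟩

end IsMaxCycle

end Cycles

section WellLinked

variable {G : SimpleGraph V} {N m : ℕ} {f : ℕ → V}

/-! ### Well-linked sets off the cycle -/

/-- Any two vertices of `B` are the ends of a path inside `B` with at least `m` vertices. -/
def WellLinked (G : SimpleGraph V) (m : ℕ) (B : Finset V) : Prop :=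
  ∀ x ∈ B, ∀ y ∈ B, x ≠ y → ∃ P, IsPathList G x P y ∧ (∀ z ∈ P, z ∈ B) ∧ m ≤ P.length

/-- The cycle `f` of length `N` is attached at the `m` positions `p k` (numbered cyclically by
`k : ℕ`) to vertices `l k`, any two of which are joined off the cycle by a path with at least `m`
vertices; each `l k` is joined in the same way to the hub `x₀`. -/
structure IsDetourSystem (G : SimpleGraph V) (f : ℕ → V) (N m : ℕ) (p : ℕ → ℕ) (l : ℕ → V)
    (x₀ : V) : Prop where
  strictMono : StrictMono p
  apply_add : ∀ k, p (k + m) = p k + N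
  adj : ∀ k, G.Adj (f (p k)) (l k)
  exists_detour : ∀ k k', k < k' → k' < k + m →
    ∃ P, IsPathList G (l k) P (l k') ∧ (∀ x ∈ P, x ∉ Set.range f) ∧ m ≤ P.length
  exists_detour_hub : ∀ k, ∃ P, IsPathList G (l k) P x₀ ∧ (∀ x ∈ P, x ∉ Set.range f) ∧ m ≤ P.length

namespace WellLinked

variable [Fintype V] {B : Finset V}

lemma exists_detours (hB : WellLinked G m B) {C : Finset V} (hG : KConnected G m)
    (hBC : Disjoint B C) (hcard : m + 1 ≤ B.card) (hC : m ≤ C.card) :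
    ∃ (e l : Fin m → V) (x₀ : V), e.Injective ∧ (∀ i, e i ∈ C) ∧ (∀ i, G.Adj (e i) (l i)) ∧
      (∀ i j, i ≠ j → ∃ P, IsPathList G (l i) P (l j) ∧ (∀ x ∈ P, x ∉ C) ∧ m ≤ P.length) ∧
      ∀ i, ∃ P, IsPathList G (l i) P x₀ ∧ (∀ x ∈ P, x ∉ C) ∧ m ≤ P.length := by
  classical
  obtain ⟨s, e, R, hR⟩ := exists_isLinkage hG (Nat.le_of_succ_le hcard) hC
  obtain ⟨L, l, hL, hle, hLB, hLC, hLL⟩ := hR.exists_legs hBC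
  obtain ⟨x₀, hx₀B, hx₀⟩ : ∃ x ∈ B, ∀ i, s i ≠ x := by
    obtain ⟨x, hx, hxs⟩ := Finset.exists_mem_notMem_of_card_lt_card (s := Finset.univ.image s)
      (t := B) (Finset.card_image_le.trans_lt (by simpa using hcard))
    exact ⟨x, hx, fun i hi => hxs (hi ▸ Finset.mem_image_of_mem s (Finset.mem_univ i))⟩
  have hdetour : ∀ i y, y ∈ B → s i ≠ y → ∀ L' l', IsPathList G y (y :: L') l' →
      (∀ x ∈ L', x ∉ B) → (∀ x ∈ y :: L', x ∉ C) → (∀ x ∈ L i, x ∉ L') →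
      ∃ P, IsPathList G (l i) P l' ∧ (∀ x ∈ P, x ∉ C) ∧ m ≤ P.length := by
    intro i y hy hiy L' l' hL' hLB' hLC' hLL'
    obtain ⟨M, hM, hMB, hMm⟩ := hB _ (hR.start_mem i) _ hy hiy
    refine ⟨_, (hL i).detour hM hL' (fun x hx hx' => hLB i x hx (hMB x hx'))
      (fun x hx hx' => hLB' x hx (hMB x hx')) hLL', fun x hx => ?_, ?_⟩
    · simp only [List.mem_append, List.mem_reverse] at hx
      rcases hx with (hx | hx) | hx
      · exact hLC i x (List.mem_cons_of_mem _ hx)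
      · exact Finset.disjoint_left.1 hBC (hMB x hx)
      · exact hLC' x (List.mem_cons_of_mem _ hx)
    · simp only [List.length_append]
      omega
  refine ⟨e, l, x₀, fun i j hij => ?_, hR.end_mem, fun i => (hle i).symm, fun i j hij =>
    hdetour i _ (hR.start_mem j) (fun hs => hLL i j hij (s i) List.mem_cons_self
      (hs ▸ List.mem_cons_self)) _ _ (hL j) (hLB j) (hLC j) fun x hx hx' => hLL i j hij x
      (List.mem_cons_of_mem _ hx) (List.mem_cons_of_mem _ hx'), fun i =>
    hdetour i _ hx₀B (hx₀ i) [] x₀ (.singleton x₀) (by simp)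
      (by simpa using Finset.disjoint_left.1 hBC hx₀B) (by simp)⟩
  by_contra hne
  exact hR.disjoint i j hne _ (hR.isPathList i).getLast_mem
    (hij ▸ (hR.isPathList j).getLast_mem)

lemma exists_isDetourSystem (hB : WellLinked G m B) (hG : KConnected G m) (hm : 1 ≤ m)
    (hC : IsMaxCycle G Set.univ N f) (hmN : m ≤ N) (hBC : ∀ x ∈ B, x ∉ Set.range f)
    (hcard : m + 1 ≤ B.card) : ∃ p l x₀, IsDetourSystem G f N m p l x₀ := by
  classical
  obtain ⟨e, l, x₀, he, heC, hel, hdetour, hdetour_hub⟩ := hB.exists_detours hG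
    (Finset.disjoint_left.2 fun x hx hxC => hBC x hx (hC.mem_cycleVerts.1 hxC)) hcard
    (hC.card_cycleVerts.symm ▸ hmN)
  simp only [hC.mem_cycleVerts] at hdetour hdetour_hub
  choose pos hposN hpos using fun i => (by simpa [cycleVerts] using heC i :
    ∃ q, q < N ∧ f q = e i)
  have hposinj : pos.Injective := fun i j hij => he (by rw [← hpos, hij, hpos])
  obtain ⟨p, σ, hp, hpN, hpσ, hσ⟩ := exists_periodic_enum hm pos hposinj hposN
  have hfp : ∀ k, f (p k) = e (σ k) := fun k => by rw [← hC.map_mod, hpσ, hpos]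
  exact ⟨p, l ∘ σ, x₀, hp, hpN, fun k => hfp k ▸ hel (σ k),
    fun k k' hk hk' => hdetour _ _ (hσ k k' hk hk'), fun k => hdetour_hub _⟩

end WellLinked

namespace IsDetourSystem

variable {p : ℕ → ℕ} {l : ℕ → V} {x₀ : V}

lemma le_apply_add (h : IsDetourSystem G f N m p l x₀) {k j : ℕ} (hjk : j ≤ k + m) :
    p j ≤ p k + N := h.apply_add k ▸ h.strictMono.monotone hjk

lemma apply_successor_periodic (h : IsDetourSystem G f N m p l x₀)
    (hC : IsMaxCycle G Set.univ N f) : Function.Periodic (fun k => f (p k + 1)) m := fun k => by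
  simp only [h.apply_add, Nat.add_right_comm _ N 1, hC.periodic _]

section NonCrossing

variable (h : IsDetourSystem G f N m p l x₀) (hC : IsMaxCycle G Set.univ N f)
include h hC

lemma not_joinedOff_of_adj_successor {k : ℕ} {z : V} (hz : G.Adj (f (p k + 1)) z) :
    ¬ JoinedOff G (Set.range f) x₀ z := by
  intro hjoin
  obtain ⟨P, hP, hPC, -⟩ := h.exists_detour_hub k
  have hlz : JoinedOff G (Set.range f) (l k) z := (hP.joinedOff hPC hP.getLast_mem).trans hjoin
  obtain ⟨P', hP', hPC'⟩ := hlz.exists_isPathList (hPC _ hP.head_mem)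
  have hlen := hC.length_add_one_le_of_attached (p := p k) le_rfl hC.pos hP'
    (fun x hx => ⟨trivial, hPC' x hx⟩) (h.adj k) hz.symm
  have := hP'.length_pos
  omega

lemma not_adj_successor_of_adj_successor {k k' : ℕ} (hk : k < k') (hk' : k' < k + m) {z : V}
    (hzC : z ∉ Set.range f) (hz : G.Adj (f (p k + 1)) z) : ¬ G.Adj (f (p k' + 1)) z := by
  obtain ⟨P, hP, hPC, -⟩ := h.exists_detour k k' hk hk'
  have hlt := h.strictMono hk
  have hlt' := h.strictMono hk'
  rw [h.apply_add] at hlt'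
  obtain ⟨g, hg⟩ := Nat.exists_eq_add_of_lt hlt
  have hadj := (h.adj k').symm
  rw [hg] at hadj ⊢
  refine hC.not_adj_successor_of_adj_successor (g := g + 1) (by omega) (by omega) hP
    (fun x hx => ⟨trivial, hPC x hx⟩) (h.adj k) hadj ⟨trivial, hzC⟩ (fun hzP => ?_) hz
  obtain ⟨Q, hQ, hQC, -⟩ := h.exists_detour_hub k
  exact h.not_joinedOff_of_adj_successor hC hz
    ((hQ.joinedOff hQC hQ.getLast_mem).symm.trans (hP.joinedOff hPC hzP))

lemma not_adj_successor_of_adj_hub {k t s : ℕ} (hkt : p k < t) (hs : 1 ≤ s) (hsm : s ≤ m)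
    (hts : t + s ≤ p k + N) (ht : G.Adj x₀ (f t)) : ¬ G.Adj (f (p k + 1)) (f (t + s)) := by
  intro hadj
  obtain ⟨P, hP, hPC, hPm⟩ := h.exists_detour_hub k
  have := hC.length_add_one_le_of_crossing hkt hs hts hP (fun x hx => ⟨trivial, hPC x hx⟩)
    (h.adj k) ht hadj
  omega

lemma not_adj_successor_of_adj_successor_of_le {k k' t s : ℕ} (hk : k < k') (hk' : k' < k + m)
    (hkt : p k' < t) (hs : 1 ≤ s) (hsm : s ≤ m) (hts : t + s ≤ p k + N)
    (ht : G.Adj (f (p k + 1)) (f t)) : ¬ G.Adj (f (p k' + 1)) (f (t + s)) := by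
  intro hadj
  obtain ⟨P, hP, hPC, hPm⟩ := h.exists_detour k k' hk hk'
  obtain ⟨g, hg⟩ := Nat.exists_eq_add_of_lt (h.strictMono hk)
  have hadj' := (h.adj k').symm
  rw [hg] at hadj hadj' hkt
  have := hC.length_add_one_le_of_double_crossing (g := g + 1) (by omega) (by omega) hs hts hP
    (fun x hx => ⟨trivial, hPC x hx⟩) (h.adj k) hadj' ht hadj
  omega

/-- Shifted by `m - a`, the neighbourhoods of `x₀` (for `a = 0`) and of the successors of
`p (j + a)` do not overlap on the segment, since an overlap would lengthen the cycle. -/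
lemma sum_card_segment_le (hm : 1 ≤ m) [DecidableRel G.Adj] {j : ℕ} (hj : m ≤ j) :
    ((Finset.Ioc (p j) (p (j + 1))).filter fun t => G.Adj x₀ (f t)).card +
      ∑ k ∈ Finset.range m,
        ((Finset.Ioc (p j) (p (j + 1))).filter fun t => G.Adj (f (p k + 1)) (f t)).card ≤
      p (j + 1) - p j + (m - 1) := by
  have hper := h.apply_successor_periodic hC
  have hshift : ∀ b, 1 ≤ b → b ≤ m → ∃ k, j + b = k + m ∧ p k ≤ p j ∧ p (j + 1) ≤ p k + N ∧
      f (p (j + b) + 1) = f (p k + 1) := fun b hb hbm =>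
    ⟨j + b - m, by omega, h.strictMono.monotone (by omega), h.le_apply_add (by omega),
      (congrArg (fun i => f (p i + 1)) (by omega : j + b = j + b - m + m)).trans (hper _)⟩
  have hcount := sum_card_filter_Ioc_le_of_shift_disjoint (m := m)
    (fun a t => G.Adj (if a = 0 then x₀ else f (p (j + a) + 1)) (f t))
    (h.strictMono (Nat.lt_add_one j)) hm ?_ ?_
  · rw [Finset.sum_range_succ'] at hcount
    simp only [Nat.add_eq_zero_iff, one_ne_zero, and_false, if_false, if_true] at hcount
    have hrotate := sum_range_add_of_periodic (hper.comp fun v =>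
      ((Finset.Ioc (p j) (p (j + 1))).filter fun t => G.Adj v (f t)).card) (j + 1)
    simp only [Function.comp_apply, Nat.add_assoc j 1, Nat.add_comm 1] at hrotate
    rwa [Nat.add_comm, ← hrotate]
  · intro a b t hab hbm ht htb ha hb
    obtain ⟨k', hk', hk'j, hjk', hbk'⟩ := hshift b (by omega) hbm
    rw [if_neg (by omega), hbk'] at hb
    rcases Nat.eq_zero_or_pos a with rfl | ha₀
    · exact h.not_adj_successor_of_adj_hub hC (by omega) (by omega) (by omega) (by omega) ha hb
    · obtain ⟨k, hk, -, hjk, hak⟩ := hshift a ha₀ (by omega)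
      rw [if_neg (by omega), hak] at ha
      exact h.not_adj_successor_of_adj_successor_of_le hC (by omega) (by omega) (by omega)
        (by omega) (by omega) (by omega) ha hb
  · rw [if_neg (by omega)]
    exact fun hadj => hadj.ne (hper j)

variable [Fintype V] [DecidableEq V] [DecidableRel G.Adj]

lemma card_inter_cycleVerts_le (hm : 1 ≤ m) :
    (G.neighborFinset x₀ ∩ cycleVerts f N).card +
      ∑ k ∈ Finset.range m, (G.neighborFinset (f (p k + 1)) ∩ cycleVerts f N).card ≤
      N + m * (m - 1) := by
  have hsegments := Finset.sum_le_sum (s := Finset.range m) fun i _ =>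
    h.sum_card_segment_le hC hm (Nat.le_add_right m i)
  rw [Finset.sum_add_distrib, sum_card_filter_Ioc h.strictMono.monotone, Finset.sum_comm]
    at hsegments
  simp only [sum_card_filter_Ioc h.strictMono.monotone, h.apply_add] at hsegments
  have htelescope : ∑ i ∈ Finset.range m, (p (m + i + 1) - p (m + i) + (m - 1)) =
      N + m * (m - 1) := by
    rw [Finset.sum_add_distrib, Finset.sum_const, Finset.card_range, smul_eq_mul]
    congr 1
    have := Finset.sum_range_tsub (f := fun i => p (m + i))
      (fun a b hab => h.strictMono.monotone (Nat.add_le_add_left hab m)) m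
    simpa only [Nat.add_zero, h.apply_add, Nat.add_sub_cancel_left, Nat.add_assoc] using this
  exact (Nat.add_le_add (hC.card_neighborFinset_inter_cycleVerts_le x₀ _) (Finset.sum_le_sum
    fun k _ => hC.card_neighborFinset_inter_cycleVerts_le _ _)).trans 
    (hsegments.trans_eq htelescope)

lemma card_sdiff_cycleVerts_le :
    1 + (G.neighborFinset x₀ \ cycleVerts f N).card +
      ∑ k ∈ Finset.range m, (G.neighborFinset (f (p k + 1)) \ cycleVerts f N).card + N ≤
      Fintype.card V := by
  have mem_sdiff : ∀ {v z}, z ∈ G.neighborFinset v \ cycleVerts f N ↔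
      G.Adj v z ∧ z ∉ Set.range f := by
    simp [Finset.mem_sdiff, hC.mem_cycleVerts]
  have hx₀ : x₀ ∉ Set.range f := by
    obtain ⟨P, hP, hPC, -⟩ := h.exists_detour_hub 0
    exact hPC _ hP.getLast_mem
  have hsucc : Set.PairwiseDisjoint (Finset.range m : Set ℕ)
      fun k => G.neighborFinset (f (p k + 1)) \ cycleVerts f N := by
    intro k hk k' hk' hkk
    rw [Finset.mem_coe, Finset.mem_range] at hk hk'
    refine Finset.disjoint_left.2 fun z hz hz' => ?_
    rw [mem_sdiff] at hz hz'
    rcases lt_or_gt_of_ne hkk with hlt | hlt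
    · exact h.not_adj_successor_of_adj_successor hC hlt (by omega) hz.2 hz.1 hz'.1
    · exact h.not_adj_successor_of_adj_successor hC hlt (by omega) hz.2 hz'.1 hz.1
  have hhub : Disjoint (insert x₀ (G.neighborFinset x₀ \ cycleVerts f N))
      ((Finset.range m).biUnion fun k => G.neighborFinset (f (p k + 1)) \ cycleVerts f N) := by
    refine Finset.disjoint_left.2 fun z hz hz' => ?_
    obtain ⟨k, -, hz'⟩ := Finset.mem_biUnion.1 hz'
    rw [mem_sdiff] at hz'
    refine h.not_joinedOff_of_adj_successor hC hz'.1 ?_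
    rcases Finset.mem_insert.1 hz with rfl | hz
    · exact .refl
    · exact .single ⟨(mem_sdiff.1 hz).1, hx₀, (mem_sdiff.1 hz).2⟩
  have hcycle : Disjoint (insert x₀ (G.neighborFinset x₀ \ cycleVerts f N) ∪
      (Finset.range m).biUnion fun k => G.neighborFinset (f (p k + 1)) \ cycleVerts f N)
      (cycleVerts f N) := by
    refine Finset.disjoint_left.2 fun z hz => ?_
    rw [hC.mem_cycleVerts]
    simp only [Finset.mem_union, Finset.mem_insert, Finset.mem_biUnion, mem_sdiff] at hz
    rcases hz with (rfl | hz) | ⟨k, -, hz⟩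
    exacts [hx₀, hz.2, hz.2]
  rw [← Finset.card_biUnion hsucc, Nat.add_comm 1,
    ← Finset.card_insert_of_notMem (a := x₀) (by simp),
    ← Finset.card_union_of_disjoint hhub, ← hC.card_cycleVerts,
    ← Finset.card_union_of_disjoint (hC.card_cycleVerts.symm ▸ hcycle)]
  exact Finset.card_le_univ _

end NonCrossing

end IsDetourSystem

theorem WellLinked.exists_mem_range [Fintype V] [DecidableRel G.Adj] {δ : ℕ} {B : Finset V}
    (hB : WellLinked G m B) (hG : KConnected G m) (hm : 1 ≤ m) (hdeg : ∀ v, δ ≤ G.degree v)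
    (hn : Fintype.card V + m * (m - 1) ≤ (m + 1) * δ) (hC : IsMaxCycle G Set.univ N f)
    (hmN : m ≤ N) (hcard : m + 1 ≤ B.card) : ∃ x ∈ B, x ∈ Set.range f := by
  classical
  by_contra! hBC
  obtain ⟨p, l, x₀, h⟩ := hB.exists_isDetourSystem hG hm hC hmN hBC hcard
  have hon := h.card_inter_cycleVerts_le hC hm
  have hoff := h.card_sdiff_cycleVerts_le hC
  have hsplit : ∀ v, δ ≤ (G.neighborFinset v ∩ cycleVerts f N).card +
      (G.neighborFinset v \ cycleVerts f N).card := fun v => by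
    rw [Finset.card_inter_add_card_sdiff, card_neighborFinset_eq_degree]
    exact hdeg v
  have hsum := Finset.card_nsmul_le_sum (Finset.range m) _ δ fun k _ => hsplit (f (p k + 1))
  rw [Finset.sum_add_distrib, Finset.card_range, smul_eq_mul] at hsum
  have := hsplit x₀
  rw [Nat.add_mul, Nat.one_mul] at hn
  omega

end WellLinked

section DenseCycles

variable {G : SimpleGraph V} {a b x y z e : V} {A B : List V}

/-! ### Merging paths -/

lemma countP_add_countP_le_length {α : Type*} {p q : α → Bool} {a : α} {L : List α}
    (hL : (a :: L).IsChain fun v u => ¬ (p v ∧ q u)) (ha : ¬ q a) :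
    (a :: L).countP p + (a :: L).countP q ≤ (a :: L).length := by
  suffices h : (a :: L).countP p + L.countP q ≤ L.length + 1 by
    rwa [List.countP_cons_of_neg ha]
  clear ha
  induction L generalizing a with
  | nil => exact List.countP_le_length
  | cons u L ih =>
    rw [List.isChain_cons_cons] at hL
    have := ih hL.2
    simp only [List.countP_cons (a := a), List.countP_cons (p := q), List.length_cons]
    have := hL.1
    split_ifs <;> first | omega | simp_all

lemma card_le_countP {α : Type*} [DecidableEq α] {S : Finset α} {L : List α} (hS : ∀ v ∈ S, v ∈ L) :
    S.card ≤ L.countP (· ∈ S) := by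
  rw [List.countP_eq_length_filter]
  refine le_trans (Finset.card_le_card fun v hv => ?_) (List.toFinset_card_le _)
  simpa using ⟨hS v hv, hv⟩

namespace IsPathList

lemma exists_crossing_of_card_lt (hA : IsPathList G a A x) (hB : IsPathList G y B b)
    {S T : Finset V} (hS : ∀ v ∈ S, v ∈ A ++ B) (hT : ∀ v ∈ T, v ∈ A ++ B) (hx : x ∉ S)
    (hy : y ∉ T) (hcard : A.length + B.length < S.card + T.card) :
    ∃ v ∈ S, ∃ u ∈ T, ∃ L₁ L₂, A = L₁ ++ v :: u :: L₂ ∨ B = L₁ ++ v :: u :: L₂ := by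
  classical
  by_contra! hno
  have hcA : A.IsChain fun v u => ¬ (v ∈ S ∧ u ∈ T) :=
    List.isChain_iff_forall_rel_of_append_cons_cons.2 fun v u L₁ L₂ h hvu =>
      (hno v hvu.1 u hvu.2 L₁ L₂).1 h
  have hcB : B.IsChain fun v u => ¬ (v ∈ S ∧ u ∈ T) :=
    List.isChain_iff_forall_rel_of_append_cons_cons.2 fun v u L₁ L₂ h hvu =>
      (hno v hvu.1 u hvu.2 L₁ L₂).2 h
  obtain ⟨A', hA'⟩ := hA.reverse.exists_eq_cons
  obtain ⟨B', rfl⟩ := hB.exists_eq_cons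
  have hcountA := countP_add_countP_le_length (p := (· ∈ T)) (q := (· ∈ S)) (a := x) (L := A')
    (hA' ▸ List.isChain_reverse.2 (by simpa only [decide_eq_true_eq, and_comm] using hcA))
    (by simpa using hx)
  have hcountB := countP_add_countP_le_length (p := (· ∈ S)) (q := (· ∈ T)) (a := y) (L := B')
    (by simpa only [decide_eq_true_eq] using hcB) (by simpa using hy)
  rw [← hA', List.countP_reverse, List.countP_reverse, List.length_reverse] at hcountA
  have hcardS := card_le_countP hS
  have hcardT := card_le_countP hT
  rw [List.countP_append] at hcardS hcardT
  omega

lemma rotate_tail {v u : V} {L₁ L₂ : List V} (h : IsPathList G a (L₁ ++ v :: u :: L₂) x)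
    (hvx : G.Adj v x) : IsPathList G a (L₁ ++ v :: (u :: L₂).reverse) u := by
  have htail : IsPathList G u (u :: L₂) x := by
    rw [List.append_cons] at h
    exact h.of_append_right
  have hnodup := h.nodup
  rw [List.append_cons, List.nodup_append'] at hnodup
  rw [List.append_cons]
  exact h.of_append_left.append htail.reverse hvx fun w hw hw' =>
    hnodup.2.2 hw (List.mem_reverse.1 hw')

lemma exists_perm_of_card_lt (hA : IsPathList G a A x) (hB : IsPathList G y B b)
    (hAB : ∀ v ∈ A, v ∉ B) {S T : Finset V} (hS : ∀ v ∈ S, G.Adj x v ∧ v ∈ A ++ B)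
    (hT : ∀ v ∈ T, G.Adj y v ∧ v ∈ A ++ B) (hcard : A.length + B.length < S.card + T.card) :
    ∃ R, R.Perm (A ++ B) ∧ IsPathList G a R b := by
  obtain ⟨v, hv, u, hu, L₁, L₂, rfl | rfl⟩ := hA.exists_crossing_of_card_lt hB
    (fun v hv => (hS v hv).2) (fun v hv => (hT v hv).2) (fun hx => (hS x hx).1.ne rfl)
    (fun hy => (hT y hy).1.ne rfl) hcard
  · have hperm : (L₁ ++ v :: (u :: L₂).reverse).Perm (L₁ ++ v :: u :: L₂) :=
      ((List.reverse_perm _).cons v).append_left L₁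
    exact ⟨_, hperm.append_right B, (hA.rotate_tail (hS v hv).1.symm).append hB (hT u hu).1.symm
      fun w hw => hAB w (hperm.mem_iff.1 hw)⟩
  · have hrev : (L₁ ++ v :: u :: L₂).reverse = L₂.reverse ++ u :: (v :: L₁.reverse) := by simp
    have hrot := (rotate_tail (hrev ▸ hB.reverse) (hT u hu).1.symm).reverse
    have hperm : (L₂.reverse ++ u :: (v :: L₁.reverse).reverse).reverse.Perm
        (L₁ ++ v :: u :: L₂) :=
      (List.reverse_perm _).trans ((((List.reverse_perm _).cons u).append_left _).trans
        (hrev ▸ List.reverse_perm _))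
    exact ⟨_, hperm.append_left A, hA.append hrot (hS v hv).1
      fun w hw hw' => hAB w hw (hperm.mem_iff.1 hw')⟩

end IsPathList

/-! ### Dense cycles are well linked -/

lemma exists_forall_apply_le_of_bounded {α : Type*} {p : α → Prop} (hp : ∃ x, p x) (F : α → ℕ)
    {B : ℕ} (hB : ∀ x, p x → F x ≤ B) : ∃ x, p x ∧ ∀ y, p y → F y ≤ F x := by
  obtain ⟨x₀, hx₀⟩ := hp
  obtain ⟨_, ⟨x, hx, rfl⟩, hmax⟩ := BddAbove.exists_isGreatest_of_nonempty
    (S := F '' {x | p x}) ⟨B, by rintro _ ⟨x, hx, rfl⟩; exact hB x hx⟩ ⟨F x₀, x₀, hx₀, rfl⟩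
  exact ⟨x, hx, fun y hy => hmax ⟨y, hy, rfl⟩⟩

/-- The path `z :: A` closes up to a cycle, and however `A` is rearranged to a path starting from
`z`, its end `v` has at least `μ` neighbours in `D v`, all of them on the cycle. -/
structure IsDenseCycle (G : SimpleGraph V) (D : V → Finset V) (μ : ℕ) (z : V) (A : List V)
    (e : V) : Prop where
  isPathList : IsPathList G z (z :: A) e
  adj : G.Adj e z
  adj_of_mem : ∀ v, ∀ w ∈ D v, G.Adj v w
  le_card : ∀ A' v, A'.Perm A → IsPathList G z (z :: A') v → μ ≤ (D v).card
  mem_of_mem : ∀ A' v, A'.Perm A → IsPathList G z (z :: A') v → ∀ w ∈ D v, w ∈ z :: A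

lemma IsPathList.exists_isDenseCycle {u : V} {ρ : List V} (hρ : IsPathList G u ρ e) {μ : ℕ}
    {D : V → Finset V} (hD : ∀ v, ∀ w ∈ D v, G.Adj v w) (hμ : 1 ≤ μ)
    (hρD : ∀ ρ' v, IsPathList G u ρ' v → ρ'.Perm ρ → μ ≤ (D v).card ∧ ∀ w ∈ D v, w ∈ ρ) :
    ∃ z A v, IsDenseCycle G D μ z A v ∧ ∀ x ∈ z :: A, x ∈ ρ := by
  obtain ⟨⟨B, z, A, v⟩, ⟨hBA, hperm, hzv⟩, hmax⟩ := exists_forall_apply_le_of_bounded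
    (p := fun t : List V × V × List V × V => IsPathList G u (t.1 ++ t.2.1 :: t.2.2.1) t.2.2.2 ∧
      (t.1 ++ t.2.1 :: t.2.2.1).Perm ρ ∧ t.2.1 ∈ D t.2.2.2) (F := fun t => t.2.2.1.length)
    (B := ρ.length) (by
      obtain ⟨hcard, hmem⟩ := hρD ρ e hρ (List.Perm.refl _)
      obtain ⟨z, hz⟩ := Finset.card_pos.1 (hμ.trans hcard)
      obtain ⟨B, A, rfl⟩ := List.append_of_mem (hmem z hz)
      exact ⟨⟨B, z, A, e⟩, hρ, List.Perm.refl _, hz⟩)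
    (by
      rintro ⟨B, z, A, v⟩ ⟨-, hp, -⟩
      rw [← hp.length_eq, List.length_append, List.length_cons]
      omega)
  dsimp only at hBA hperm hzv hmax
  have hrearrange : ∀ A' v', A'.Perm A → IsPathList G z (z :: A') v' →
      IsPathList G u (B ++ z :: A') v' ∧ (B ++ z :: A').Perm ρ := by
    intro A' v' hA' hpath
    refine ⟨?_, ((hA'.cons z).append_left B).trans hperm⟩
    have hnodup := hBA.nodup
    rw [List.append_cons, List.nodup_append'] at hnodup
    rw [List.append_cons]
    exact hBA.of_append_left.join hpath fun x hx hx' => hnodup.2.2 hx (hA'.mem_iff.1 hx')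
  refine ⟨z, A, v, ⟨hBA.of_append_right, hD _ _ hzv, hD, fun A' v' hA' hpath => ?_,
    fun A' v' hA' hpath w hw => ?_⟩, fun x hx => hperm.mem_iff.1 (List.mem_append_right _ hx)⟩
  · obtain ⟨hpath', hperm'⟩ := hrearrange A' v' hA' hpath
    exact (hρD _ _ hpath' hperm').1
  · obtain ⟨hpath', hperm'⟩ := hrearrange A' v' hA' hpath
    have hw' := hperm'.mem_iff.2 ((hρD _ _ hpath' hperm').2 w hw)
    rcases List.mem_append.1 hw' with hwB | hwA
    · obtain ⟨B₁, B₂, rfl⟩ := List.append_of_mem hwB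
      rw [List.append_assoc, List.cons_append] at hpath' hperm'
      have hlen := hmax ⟨B₁, w, B₂ ++ z :: A', v'⟩ ⟨hpath', hperm', hw⟩
      simp only [List.length_append, List.length_cons, hA'.length_eq] at hlen
      omega
    · exact (hA'.cons z).mem_iff.1 hwA

lemma wellLinked_toFinset_of_forall_append [DecidableEq V] {m : ℕ} {W : List V}
    (h : ∀ L₁ x L₂ y L₃, W = L₁ ++ x :: L₂ ++ y :: L₃ →
      ∃ P, IsPathList G x P y ∧ (∀ v ∈ P, v ∈ W) ∧ m ≤ P.length) : WellLinked G m W.toFinset := by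
  intro x hx y hy hxy
  simp only [List.mem_toFinset] at hx hy ⊢
  obtain ⟨L₁, L₃, hW⟩ := List.append_of_mem hx
  rw [hW, List.mem_append, List.mem_cons] at hy
  rcases hy with hy | rfl | hy
  · obtain ⟨L₁, L₂, rfl⟩ := List.append_of_mem hy
    obtain ⟨P, hP, hPW, hPm⟩ := h L₁ y L₂ x L₃ hW
    exact ⟨P.reverse, hP.reverse, fun v hv => hPW v (List.mem_reverse.1 hv),
      by rwa [List.length_reverse]⟩
  · exact absurd rfl hxy
  · obtain ⟨L₂, L₃, rfl⟩ := List.append_of_mem hy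
    exact h L₁ x L₂ y L₃ (by rw [hW, List.append_assoc, List.cons_append])

namespace IsDenseCycle

variable {D : V → Finset V} {μ : ℕ}

lemma succ_le_length (h : IsDenseCycle G D μ z A e) : μ + 1 ≤ (z :: A).length := by
  classical
  have hsub : insert e (D e) ⊆ (z :: A).toFinset := by
    refine Finset.insert_subset (List.mem_toFinset.2 h.isPathList.getLast_mem) fun w hw => ?_
    exact List.mem_toFinset.2 (h.mem_of_mem A e (List.Perm.refl _) h.isPathList w hw)
  have hcard := (Finset.card_le_card hsub).trans (List.toFinset_card_le _)
  rw [Finset.card_insert_of_notMem fun he => (h.adj_of_mem _ _ he).ne rfl] at hcard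
  exact (Nat.succ_le_succ (h.le_card A e (List.Perm.refl _) h.isPathList)).trans hcard

lemma isGenCycle (h : IsDenseCycle G D μ z A e) : IsGenCycle G (z :: A) :=
  ⟨z, e, h.isPathList, fun _ => h.adj⟩

lemma exists_spanning_path_of_dense_successors (h : IsDenseCycle G D μ z A e)
    (hlen : (z :: A).length < 2 * μ) {L M R : List V} {x x' y y' : V} (hA : z :: A = L ++ M ++ R)
    (hx : L.getLast? = some x) (hx' : M.head? = some x') (hy : M.getLast? = some y)
    (hy' : R.head? = some y') (hDx : μ ≤ (D x').card) (hDx' : ∀ w ∈ D x', w ∈ z :: A)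
    (hDy : μ ≤ (D y').card) (hDy' : ∀ w ∈ D y', w ∈ z :: A) :
    ∃ P, P.Perm (z :: A) ∧ IsPathList G x P y := by
  have hpath := h.isPathList
  rw [hA] at hpath
  have hnodup := hpath.nodup
  simp only [List.nodup_append', List.disjoint_append_left] at hnodup
  have hchain := List.isChain_append.1 hpath.isChain
  have hchain' := List.isChain_append.1 hchain.1
  have hL : IsPathList G z L x := by
    refine ⟨hnodup.1.1, hchain'.1, ?_, hx⟩
    rcases L with _ | ⟨_, L⟩
    · simp at hx
    · exact congrArg some (List.cons.inj hA).1.symm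
  have hR : IsPathList G y' R e := by
    refine ⟨hnodup.2.1, hchain.2.1, hy', ?_⟩
    rw [← hpath.getLast?_eq, List.getLast?_append_of_ne_nil]
    rintro rfl
    simp at hy'
  have hM : IsPathList G x' M y := ⟨hnodup.1.2.1, hchain'.2.1, hx', hy⟩
  have hperm : (L.reverse ++ R.reverse ++ M).Perm (z :: A) := by
    rw [hA, List.append_assoc, List.append_assoc]
    exact (List.reverse_perm L).append (((List.reverse_perm R).append_right M).trans
      List.perm_append_comm)
  obtain ⟨P, hP, hPpath⟩ := (hL.reverse.append hR.reverse h.adj.symm fun v hv hv' =>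
    hnodup.2.2.1 (List.mem_reverse.1 hv) (List.mem_reverse.1 hv')).exists_perm_of_card_lt hM
    (fun v hv hv' => (List.mem_append.1 hv).elim
      (fun hv => hnodup.1.2.2 (List.mem_reverse.1 hv) hv')
      fun hv => hnodup.2.2.2 hv' (List.mem_reverse.1 hv))
    (fun w hw => ⟨h.adj_of_mem _ _ hw, hperm.mem_iff.2 (hDy' w hw)⟩)
    (fun w hw => ⟨h.adj_of_mem _ _ hw, hperm.mem_iff.2 (hDx' w hw)⟩)
    (by rw [← List.length_append, hperm.length_eq]; omega)
  exact ⟨P, hP.trans hperm, hPpath⟩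

lemma exists_perm_ending_at (h : IsDenseCycle G D μ z A e) (hlen : (z :: A).length < 2 * μ) :
    ∀ A₂ A₁ q, A = A₁ ++ q :: A₂ → ∃ A', A'.Perm A ∧ IsPathList G z (z :: A') q
  | [], A₁, q, hA => by
    have hlast := h.isPathList.getLast?_eq
    rw [hA, ← List.cons_append, List.getLast?_concat] at hlast
    obtain rfl : q = e := Option.some.inj hlast
    exact ⟨A, List.Perm.refl _, h.isPathList⟩
  | q' :: A₂, A₁, q, hA => by
    obtain ⟨Aq, hAq, hpath⟩ := exists_perm_ending_at h hlen A₂ (A₁ ++ [q]) q' (by simp [hA])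
    obtain ⟨q₁, A₀, hA₀⟩ : ∃ q₁ A₀, A₁ ++ [q] = q₁ :: A₀ :=
      List.exists_cons_of_ne_nil (by simp)
    have hA' : A = q₁ :: A₀ ++ q' :: A₂ := by rw [← hA₀, hA, List.append_cons]
    have hrev : IsPathList G z (z :: A.reverse) q₁ := by
      have htail := hA' ▸ h.isPathList
      have hnodup := (List.nodup_cons.1 h.isPathList.nodup).1
      rw [hA'] at hnodup ⊢
      exact (IsPathList.of_append_right (P := [z]) htail).reverse.cons h.adj.symm
        fun hz => hnodup (List.mem_reverse.1 hz)
    obtain ⟨P, hP, hPpath⟩ := h.exists_spanning_path_of_dense_successors hlen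
      (L := [z]) (M := q₁ :: A₀) (R := q' :: A₂) (y := q) (by rw [hA']; rfl) rfl rfl
      (by rw [← hA₀, List.getLast?_concat]) rfl
      (h.le_card _ _ (List.reverse_perm A) hrev) (h.mem_of_mem _ _ (List.reverse_perm A) hrev)
      (h.le_card _ _ hAq hpath) (h.mem_of_mem _ _ hAq hpath)
    obtain ⟨A', rfl⟩ := hPpath.exists_eq_cons
    exact ⟨A', (List.perm_cons z).1 hP, hPpath⟩

lemma exists_path_to_last (h : IsDenseCycle G D μ z A e) (hlen : (z :: A).length + 2 ≤ 2 * μ)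
    (hA : ∀ q ∈ A, μ ≤ (D q).card ∧ ∀ w ∈ D q, w ∈ z :: A) {x y : V} {A₁ A₂ : List V}
    (hAxy : A = A₁ ++ x :: A₂ ++ [y]) : ∃ P, P.Perm A ∧ IsPathList G x P y := by
  classical
  obtain ⟨q, L, hL⟩ : ∃ q L, A₁ ++ [x] = q :: L := List.exists_cons_of_ne_nil (by simp)
  obtain ⟨x', M, hM⟩ : ∃ x' M, A₂ ++ [y] = x' :: M := List.exists_cons_of_ne_nil (by simp)
  have hsplit : A = (q :: L) ++ x' :: M := by rw [← hL, ← hM, hAxy]; simp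
  have hpath := h.isPathList
  rw [hsplit] at hpath
  have hnodup := (List.nodup_append'.1 (List.nodup_cons.1 hpath.nodup).2)
  have hpathL : IsPathList G q (q :: L) x := by
    have := IsPathList.of_append_right (P := [z]) hpath
    have hchain : (q :: L).IsChain G.Adj :=
      ((List.isChain_append (l₂ := x' :: M)).1 this.isChain).1
    exact ⟨hnodup.1, hchain, rfl, by rw [← hL, List.getLast?_concat]⟩
  have hpathM : IsPathList G x' (x' :: M) y := by
    have := IsPathList.of_append_right (P := z :: q :: L) hpath
    exact ⟨this.nodup, this.isChain, rfl, by rw [← hM, List.getLast?_concat]⟩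
  have hperm : ((q :: L).reverse ++ x' :: M).Perm A :=
    hsplit ▸ (List.reverse_perm _).append_right _
  have herase : ∀ v ∈ A, ∀ w ∈ (D v).erase z, G.Adj v w ∧ w ∈ (q :: L).reverse ++ x' :: M := by
    intro v hv w hw
    rw [Finset.mem_erase] at hw
    exact ⟨h.adj_of_mem _ _ hw.2, hperm.mem_iff.2
      ((List.mem_cons.1 ((hA v hv).2 w hw.2)).resolve_left hw.1)⟩
  have hq : q ∈ A := by simp [hsplit]
  have hx' : x' ∈ A := by simp [hsplit]
  obtain ⟨P, hP, hPpath⟩ := hpathL.reverse.exists_perm_of_card_lt hpathM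
    (fun v hv => hnodup.2.2 (List.mem_reverse.1 hv)) (herase q hq) (herase x' hx') (by
      have := Finset.pred_card_le_card_erase (a := z) (s := D q)
      have := Finset.pred_card_le_card_erase (a := z) (s := D x')
      have := (hA q hq).1
      have := (hA x' hx').1
      rw [← List.length_append, hperm.length_eq]
      rw [List.length_cons] at hlen
      omega)
  exact ⟨P, hP.trans hperm, hPpath⟩

lemma wellLinked [DecidableEq V] (h : IsDenseCycle G D μ z A e)
    (hlen : (z :: A).length + 2 ≤ 2 * μ) : WellLinked G μ (z :: A).toFinset := by
  have hlen' : (z :: A).length < 2 * μ := by omega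
  have hμ : μ ≤ A.length := Nat.le_of_succ_le_succ h.succ_le_length
  have hend : ∀ q ∈ A, ∃ A', A'.Perm A ∧ IsPathList G z (z :: A') q := by
    intro q hq
    obtain ⟨A₁, A₂, hA⟩ := List.append_of_mem hq
    exact h.exists_perm_ending_at hlen' A₂ A₁ q hA
  have hdense : ∀ q ∈ A, μ ≤ (D q).card ∧ ∀ w ∈ D q, w ∈ z :: A := by
    intro q hq
    obtain ⟨A', hA', hpath⟩ := hend q hq
    exact ⟨h.le_card A' q hA' hpath, h.mem_of_mem A' q hA' hpath⟩
  refine wellLinked_toFinset_of_forall_append fun L₁ x L₂ y L₃ hW => ?_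
  rcases L₁ with _ | ⟨z', A₁⟩
  · obtain ⟨rfl, hA⟩ := List.cons.inj hW
    obtain ⟨A', hA', hpath⟩ := hend y (by simp [hA])
    exact ⟨_, hpath, fun v => (hA'.cons z).mem_iff.1, by
      rw [(hA'.cons z).length_eq]; exact hμ.trans (Nat.le_succ _)⟩
  obtain ⟨rfl, hA⟩ : z = z' ∧ A = A₁ ++ x :: L₂ ++ y :: L₃ := List.cons.inj hW
  rcases L₃ with _ | ⟨y', A₃⟩
  · obtain ⟨P, hP, hpath⟩ := h.exists_path_to_last hlen hdense hA
    exact ⟨P, hpath, fun v hv => List.mem_cons_of_mem _ (hP.mem_iff.1 hv), hP.length_eq ▸ hμ⟩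
  · obtain ⟨x', M, hM⟩ : ∃ x' M, L₂ ++ [y] = x' :: M := List.exists_cons_of_ne_nil (by simp)
    have hx' : x' ∈ L₂ ++ [y] := hM ▸ List.mem_cons_self
    have hdx := hdense x' (by
      rw [hA]
      simp only [List.mem_append, List.mem_cons, List.not_mem_nil, or_false] at hx' ⊢
      tauto)
    have hdy := hdense y' (by simp [hA])
    obtain ⟨P, hP, hpath⟩ := h.exists_spanning_path_of_dense_successors hlen'
      (L := z :: A₁ ++ [x]) (M := L₂ ++ [y]) (R := y' :: A₃) (x := x) (y := y)
      (by rw [hW]; simp) List.getLast?_concat (by rw [hM]; rfl) List.getLast?_concat rfl hdx.1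
      hdx.2 hdy.1 hdy.2
    exact ⟨P, hpath, fun v => hP.mem_iff.1, by
      rw [hP.length_eq]; exact hμ.trans (Nat.le_succ _)⟩

end IsDenseCycle

end DenseCycles

section HangingPaths

variable {G : SimpleGraph V} {X : Set V}

/-! ### Paths hanging off a cycle -/

/-- The paths `u i :: L i`, for `i < c`, start on the cyclic sequence `u` and are otherwise pairwise
disjoint paths in `X` avoiding it. -/
structure IsHanging (G : SimpleGraph V) (X : Set V) (c : ℕ) (u : ℕ → V) (L : ℕ → List V) :
    Prop where
  isChain : ∀ i < c, (u i :: L i).IsChain G.Adj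
  nodup : ∀ i < c, (L i).Nodup
  mem : ∀ i < c, ∀ x ∈ L i, x ∈ X \ Set.range u
  disjoint : ∀ i < c, ∀ j < c, i ≠ j → (L i).Disjoint (L j)

/-- The last vertex of the `i`-th hanging path; it is `u i` when `L i` is empty. -/
def tip (u : ℕ → V) (L : ℕ → List V) (i : ℕ) : V := (u i :: L i).getLast (List.cons_ne_nil _ _)

/-- The weight of a system of hanging paths: the number of their vertices off the cycle plus the
number of nontrivial paths. -/
def hangWeight (c : ℕ) (L : ℕ → List V) : ℕ :=
  ∑ i ∈ Finset.range c, ((L i).length + min 1 (L i).length)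

/-- A system of hanging paths of maximum weight. -/
structure IsMaxHanging (G : SimpleGraph V) (X : Set V) (c : ℕ) (u : ℕ → V) (L : ℕ → List V) : Prop
    extends IsHanging G X c u L where
  weight_le : ∀ L', IsHanging G X c u L' → hangWeight c L' ≤ hangWeight c L

open Classical in
/-- The neighbours of `v` in `X`. -/
noncomputable def nbrsIn [Fintype V] (G : SimpleGraph V) (X : Set V) (v : V) : Finset V :=
  Finset.univ.filter fun w => G.Adj v w ∧ w ∈ X

@[simp] lemma mem_nbrsIn [Fintype V] {v w : V} : w ∈ nbrsIn G X v ↔ G.Adj v w ∧ w ∈ X := by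
  simp [nbrsIn]

lemma sum_add_eq_sum_add_of_forall_ne {ι M : Type*} [AddCommMonoid M]
    {s : Finset ι} {i : ι} (hi : i ∈ s) {F F' : ι → M} (h : ∀ k, k ≠ i → F' k = F k) :
    ∑ k ∈ s, F' k + F i = ∑ k ∈ s, F k + F' i := by
  classical
  rw [← Finset.sum_erase_add s F' hi, ← Finset.sum_erase_add s F hi,
    Finset.sum_congr rfl fun k hk => h k (Finset.ne_of_mem_erase hk), add_right_comm]

variable {c : ℕ} {u : ℕ → V} {L : ℕ → List V} {i j : ℕ}

lemma tip_of_eq_nil (h : L i = []) : tip u L i = u i := by simp [tip, h]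

lemma tip_mem_of_ne_nil (h : L i ≠ []) : tip u L i ∈ L i := by
  rw [tip, List.getLast_cons h]
  exact List.getLast_mem h

lemma hangWeight_update (hi : i < c) (L : ℕ → List V) (L' : List V) :
    hangWeight c (Function.update L i L') + ((L i).length + min 1 (L i).length) =
      hangWeight c L + (L'.length + min 1 L'.length) := by
  have := sum_add_eq_sum_add_of_forall_ne (Finset.mem_range.2 hi)
    (F := fun k => (L k).length + min 1 (L k).length)
    (F' := fun k => (Function.update L i L' k).length + min 1 (Function.update L i L' k).length)
    fun k hk => by rw [Function.update_of_ne hk]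
  simpa only [hangWeight, Function.update_self] using this

namespace IsHanging

lemma isPathList (h : IsHanging G X c u L) (hi : i < c) :
    IsPathList G (u i) (u i :: L i) (tip u L i) :=
  ⟨List.nodup_cons.2 ⟨fun hu => (h.mem i hi _ hu).2 ⟨i, rfl⟩, h.nodup i hi⟩, h.isChain i hi, rfl,
    List.getLast?_eq_some_getLast _⟩

lemma tip_eq (h : IsHanging G X c u L) (hi : i < c) {e : V}
    (he : IsPathList G (u i) (u i :: L i) e) : tip u L i = e :=
  Option.some.inj ((h.isPathList hi).getLast?_eq.symm.trans he.getLast?_eq)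

lemma eq_of_mem_of_mem (h : IsHanging G X c u L) (hu : ∀ i < c, ∀ j < c, u i = u j → i = j)
    (hi : i < c) (hj : j < c) {x : V} (hxi : x ∈ u i :: L i) (hxj : x ∈ u j :: L j) : i = j := by
  rcases List.mem_cons.1 hxi with rfl | hxi <;> rcases List.mem_cons.1 hxj with hxj | hxj
  · exact hu i hi j hj hxj
  · exact absurd ⟨i, rfl⟩ (h.mem j hj _ hxj).2
  · exact absurd ⟨j, hxj.symm⟩ (h.mem i hi _ hxi).2
  · by_contra hij
    exact h.disjoint i hi j hj hij hxi hxj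

lemma update (h : IsHanging G X c u L) {L' : List V} {e : V}
    (hL : IsPathList G (u i) (u i :: L') e) (hX : ∀ x ∈ L', x ∈ X \ Set.range u)
    (hdisj : ∀ j < c, j ≠ i → L'.Disjoint (L j)) :
    IsHanging G X c u (Function.update L i L') where
  isChain := (Function.forall_update_iff L fun k P => k < c → (u k :: P).IsChain G.Adj).2
    ⟨fun _ => hL.isChain, fun k _ => h.isChain k⟩
  nodup := (Function.forall_update_iff L fun k P => k < c → P.Nodup).2
    ⟨fun _ => (List.nodup_cons.1 hL.nodup).2, fun k _ => h.nodup k⟩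
  mem := (Function.forall_update_iff L fun k P => k < c → ∀ x ∈ P, x ∈ X \ Set.range u).2
    ⟨fun _ => hX, fun k _ => h.mem k⟩
  disjoint k hk j hj hkj := by
    rcases eq_or_ne k i with rfl | hki
    · rw [Function.update_self, Function.update_of_ne hkj.symm]
      exact hdisj j hj hkj.symm
    rcases eq_or_ne j i with rfl | hji
    · rw [Function.update_self, Function.update_of_ne hki]
      exact (hdisj k hk hki).symm
    · rw [Function.update_of_ne hki, Function.update_of_ne hji]
      exact h.disjoint k hk j hj hkj

lemma move_tail (h : IsHanging G X c u L) (hi : i < c) (hj : j < c) (hL : L i = []) {A B : List V}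
    {w : V} (hw : G.Adj (u i) w) (hLj : L j = A ++ w :: B) :
    IsHanging G X c u (Function.update (Function.update L j A) i (w :: B)) ∧
    hangWeight c (Function.update (Function.update L j A) i (w :: B)) =
      hangWeight c L + min 1 A.length := by
  have hij : i ≠ j := by
    rintro rfl
    simp [hL] at hLj
  have hpath := h.isPathList hj
  rw [hLj, ← List.cons_append] at hpath
  have hA : ∀ x ∈ A, x ∈ L j := fun x hx => hLj ▸ List.mem_append_left _ hx
  have hB : ∀ x ∈ w :: B, x ∈ L j := fun x hx => hLj ▸ List.mem_append_right _ hx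
  have hnodup := List.nodup_append'.1 hpath.nodup
  have hcut := h.update (i := j) (L' := A)
    ⟨hnodup.1, (List.isChain_append.1 hpath.isChain).1, rfl,
      List.getLast?_eq_some_getLast (List.cons_ne_nil _ _)⟩
    (fun x hx => h.mem j hj x (hA x hx))
    fun k hk hkj x hx => h.disjoint j hj k hk hkj.symm (hA x hx)
  refine ⟨hcut.update (hpath.of_append_right.cons hw fun hu => (h.mem j hj _ (hB _ hu)).2 ⟨i, rfl⟩)
    (fun x hx => h.mem j hj x (hB x hx)) fun k hk _ x hx => ?_, ?_⟩
  · rcases eq_or_ne k j with rfl | hkj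
    · rw [Function.update_self]
      exact fun hxA => hnodup.2.2 (List.mem_cons_of_mem _ hxA) hx
    · rw [Function.update_of_ne hkj]
      exact h.disjoint j hj k hk hkj.symm (hB x hx)
  · have hwi := hangWeight_update hi (Function.update L j A) (w :: B)
    have hwj := hangWeight_update hj L A
    rw [Function.update_of_ne hij, hL] at hwi
    rw [hLj] at hwj
    simp only [List.length_cons, List.length_append, List.length_nil] at hwi hwj
    omega

end IsHanging

namespace IsMaxHanging

lemma of_hangWeight_eq (h : IsMaxHanging G X c u L) {L' : ℕ → List V} (h' : IsHanging G X c u L')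
    (hw : hangWeight c L' = hangWeight c L) : IsMaxHanging G X c u L' :=
  ⟨h', fun L'' hL'' => hw ▸ h.weight_le L'' hL''⟩

lemma exists_mem_of_adj_tip (h : IsMaxHanging G X c u L) (hi : i < c) {z : V}
    (hz : G.Adj (tip u L i) z) (hzX : z ∈ X \ Set.range u) : ∃ j < c, z ∈ L j := by
  by_contra! hno
  have hmem : ∀ x ∈ L i ++ [z], x ∈ L i ∨ x = z := by simp
  have hext := h.update (i := i) (L' := L i ++ [z])
    ((h.isPathList hi).concat hz
      (List.not_mem_cons_of_ne_of_not_mem (fun e => hzX.2 ⟨i, e.symm⟩) (hno i hi)))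
    (fun x hx => (hmem x hx).elim (h.mem i hi x) fun e => e ▸ hzX)
    (fun j hj hji x hx hxj => (hmem x hx).elim
      (fun hx => h.disjoint i hi j hj hji.symm hx hxj) fun e => hno j hj (e ▸ hxj))
  have hle := h.weight_le _ hext
  have hw := hangWeight_update hi L (L i ++ [z])
  simp only [List.length_append, List.length_singleton] at hw
  omega

lemma eq_nil_of_adj (h : IsMaxHanging G X c u L) (hi : i < c) (hj : j < c) (hL : L i = [])
    {A B : List V} {w : V} (hw : G.Adj (u i) w) (hLj : L j = A ++ w :: B) : A = [] := by
  obtain ⟨hmove, hweight⟩ := h.move_tail hi hj hL hw hLj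
  have := h.weight_le _ hmove
  exact List.length_eq_zero_iff.1 (by omega)

end IsMaxHanging

/-! ### Neighbours of the tips -/

/-- The interval of length `2 (q v + 1)` centred at `j v - 1/2` contains its two end positions
`j v + q v` and `j v - 1 - q v`, taken modulo `c`; the intervals are disjoint. -/
lemma two_mul_card_le_of_gaps {ι : Type*} {S : Finset ι} {j q : ι → ℕ} (hj : ∀ v ∈ S, j v < c)
    (hgap : ∀ v ∈ S, ∀ w ∈ S, j v < j w → q v + q w + 2 ≤ j w - j v ∧
      q v + q w + 2 + (j w - j v) ≤ c)
    (hinj : ∀ v ∈ S, ∀ w ∈ S, j v = j w → q v = q w → v = w)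
    (hne : ∀ v ∈ S, ∃ w ∈ S, j w ≠ j v) : 2 * S.card ≤ c := by
  classical
  have hq : ∀ v ∈ S, 2 * q v + 4 ≤ c := by
    intro v hv
    obtain ⟨w, hw, hwv⟩ := hne v hv
    have := hgap v hv w hw
    have := hgap w hw v hv
    omega
  have hcard : (S ×ˢ (Finset.univ : Finset Bool)).card ≤ (Finset.range c).card := by
    refine Finset.card_le_card_of_injOn (fun x =>
      if x.2 then (if j x.1 + q x.1 < c then j x.1 + q x.1 else j x.1 + q x.1 - c)
      else (if q x.1 + 1 ≤ j x.1 then j x.1 - 1 - q x.1 else j x.1 + c - 1 - q x.1)) ?_ ?_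
    · rintro ⟨v, β⟩ hx
      have hv : v ∈ S := (Finset.mem_product.1 hx).1
      have := hj v hv
      have := hq v hv
      rw [Finset.mem_coe, Finset.mem_range]
      dsimp only
      split_ifs <;> omega
    · rintro ⟨v, β⟩ hx ⟨w, β'⟩ hy heq
      have hv : v ∈ S := (Finset.mem_product.1 hx).1
      have hw : w ∈ S := (Finset.mem_product.1 hy).1
      have := hj v hv
      have := hj w hw
      have := hq v hv
      have := hq w hw
      have := hgap v hv w hw
      have := hgap w hw v hv
      have hpos : j v = j w ∧ q v = q w ∧ β = β' := by
        cases β <;> cases β' <;> simp only [if_true, if_false, Bool.false_eq_true] at heq <;>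
          simp only [and_true, reduceCtorEq, and_false] <;> split_ifs at heq <;> omega
      rw [hinj v hv w hw hpos.1 hpos.2.1, hpos.2.2]
  simpa [mul_comm] using hcard

lemma IsMaxCycle.length_add_one_le_of_chord {N : ℕ} {f : ℕ → V} (h : IsMaxCycle G X N f)
    {p q : ℕ} (hpq : p < q) (hqN : q < p + N) {P : List V}
    (hP : IsPathList G (f p) (f p :: P ++ [f q]) (f q)) (hPX : ∀ x ∈ P, x ∈ X \ Set.range f) :
    P.length + 1 ≤ q - p ∧ P.length + 1 + (q - p) ≤ N := by
  rcases P with _ | ⟨a, P⟩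
  · simp only [List.length_nil]
    omega
  obtain ⟨P', l, hP', hpath, hl⟩ := hP.exists_eq_cons_concat (h.apply_ne hpq hqN)
  obtain rfl : a :: P = P' := List.append_cancel_right (List.cons.inj hP').2
  have ha : G.Adj (f p) a := IsPathList.adj_of_append_cons_cons (P := []) hpath
  have hin : IsPathList G a (a :: P) l := IsPathList.of_append_right (P := [f p]) hpath
  have hfwd := h.length_add_one_le_of_attached (p := p) (k := q - p) (by omega) (by omega) hin hPX
    ha (by rwa [Nat.add_sub_cancel' hpq.le])
  have hbwd := h.length_add_one_le_of_attached (p := q) (k := N - (q - p)) (by omega) (by omega)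
    hin.reverse (fun x hx => hPX x (List.mem_reverse.1 hx)) hl.symm
    (by rw [show q + (N - (q - p)) = p + N by omega, h.periodic]; exact ha.symm)
  rw [List.length_reverse] at hbwd
  omega

namespace IsHanging

lemma gap_of_legs (hQ : IsMaxCycle G X c u) (h : IsHanging G X c u L) {t : V}
    (ht : t ∈ X \ Set.range u) (hij : i < j) (hj : j < c) {W W' : List V}
    (hW : IsPathList G (u i) (u i :: W ++ [t]) t) (hWL : W ⊆ L i)
    (hW' : IsPathList G (u j) (u j :: W' ++ [t]) t) (hWL' : W' ⊆ L j) :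
    W.length + W'.length + 2 ≤ j - i ∧ W.length + W'.length + 2 + (j - i) ≤ c := by
  have hi := hij.trans hj
  have hrev : IsPathList G t (t :: (W'.reverse ++ [u j])) (u j) := by simpa using hW'.reverse
  have hpath := hW.join hrev fun x hx hx' => by
    have hx' : x ∈ u j :: W' := by simpa [or_comm] using hx'
    rcases List.mem_append.1 hx with hx | hx
    · exact hij.ne (h.eq_of_mem_of_mem (fun _ hi _ hj => hQ.injOn _ _ hi hj) hi hj
        (List.cons_subset_cons _ hWL hx) (List.cons_subset_cons _ hWL' hx'))
    · exact (List.nodup_append'.1 hW'.nodup).2.2 hx' hx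
  have hgap := hQ.length_add_one_le_of_chord hij (P := W ++ t :: W'.reverse) (by omega)
    (by simpa using hpath) fun x hx => by
      simp only [List.mem_append, List.mem_cons, List.mem_reverse] at hx
      rcases hx with hx | rfl | hx
      exacts [h.mem i hi x (hWL hx), ht, h.mem j hj x (hWL' hx)]
  simp only [List.length_append, List.length_cons, List.length_reverse] at hgap
  omega

lemma exists_leg (hu : ∀ i < c, ∀ j < c, u i = u j → i = j) (h : IsHanging G X c u L) {q : ℕ}
    (hi : i < c) (hj : j < c) (hL : L i ≠ []) {v : V} (hv : G.Adj (tip u L i) v)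
    (hq : (u j :: L j)[q]? = some v) :
    ∃ W, q ≤ W.length ∧ IsPathList G (u j) (u j :: W ++ [tip u L i]) (tip u L i) ∧ W ⊆ L j := by
  have htip := tip_mem_of_ne_nil (u := u) hL
  obtain ⟨hlen, hqv⟩ := List.getElem?_eq_some_iff.1 hq
  rcases eq_or_ne j i with rfl | hij
  · obtain ⟨W, -, hW, -, -⟩ := (h.isPathList hj).exists_eq_cons_concat
      fun e => (h.mem j hj _ htip).2 ⟨j, e⟩
    refine ⟨W, ?_, hW ▸ h.isPathList hj, ?_⟩
    · rw [hW] at hlen hq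
      by_contra! hWq
      obtain rfl : q = W.length + 1 := by simp at hlen; omega
      simp only [List.cons_append, List.getElem?_cons_succ, List.getElem?_concat_length] at hq
      exact G.loopless.irrefl _ (Option.some.inj hq ▸ hv)
    · rw [(List.cons.inj hW).2]
      exact List.subset_append_left _ _
  · have hsplit : u j :: L j = (u j :: L j).take q ++ v :: (u j :: L j).drop (q + 1) := by
      rw [← hqv, List.cons_getElem_drop_succ, List.take_append_drop]
    have htake : (u j :: L j).take q ++ [v] = u j :: (L j).take q := by
      rw [← hqv, List.take_append_getElem, List.take_succ_cons]
    have hpath : IsPathList G (u j) (u j :: (L j).take q) v :=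
      htake ▸ (hsplit ▸ h.isPathList hj).of_append_left
    refine ⟨(L j).take q, ?_, hpath.concat hv.symm fun hx => hij ?_, List.take_subset _ _⟩
    · rw [List.length_cons] at hlen
      rw [List.length_take]
      omega
    · exact h.eq_of_mem_of_mem hu hj hi (List.cons_subset_cons _ (List.take_subset _ _) hx)
        (List.mem_cons_of_mem _ htip)

lemma exists_mem_nbrsIn_tip [Fintype V] (h : IsHanging G X c u L) (huX : ∀ i, u i ∈ X) (hi : i < c)
    (hL : L i ≠ []) : ∃ l ∈ nbrsIn G X (tip u L i), l ∈ u i :: L i := by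
  have htip := tip_mem_of_ne_nil (u := u) hL
  obtain ⟨W, l, hW, hpath, hl⟩ := (h.isPathList hi).exists_eq_cons_concat
    fun e => (h.mem i hi _ htip).2 ⟨i, e⟩
  have hli : l ∈ u i :: L i := hW ▸ List.mem_append_left _ hpath.getLast_mem
  exact ⟨l, mem_nbrsIn.2 ⟨hl.symm,
    (List.mem_cons.1 hli).elim (fun e => e ▸ huX i) fun hl => (h.mem i hi l hl).1⟩, hli⟩

end IsHanging

lemma IsMaxHanging.nbrsIn_tip_subset_or_two_mul_card_le [Fintype V] (hQ : IsMaxCycle G X c u)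
    (h : IsMaxHanging G X c u L) (hi : i < c) (hL : L i ≠ []) :
    (∀ v ∈ nbrsIn G X (tip u L i), v ∈ u i :: L i) ∨ 2 * (nbrsIn G X (tip u L i)).card ≤ c := by
  by_contra! hcon
  obtain ⟨⟨v₀, hv₀, hv₀i⟩, hcard⟩ := hcon
  refine hcard.not_ge ?_
  have htip := h.mem i hi _ (tip_mem_of_ne_nil (u := u) hL)
  have hu : ∀ i < c, ∀ j < c, u i = u j → i = j := fun _ hi _ hj => hQ.injOn _ _ hi hj
  have hcode : ∀ v ∈ nbrsIn G X (tip u L i), ∃ j q : ℕ, j < c ∧ (u j :: L j)[q]? = some v := by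
    intro v hv
    rw [mem_nbrsIn] at hv
    suffices ∃ j < c, v ∈ u j :: L j by
      obtain ⟨j, hj, hvj⟩ := this
      obtain ⟨q, hq⟩ := List.mem_iff_getElem?.1 hvj
      exact ⟨j, q, hj, hq⟩
    by_cases hvu : v ∈ Set.range u
    · obtain ⟨p, rfl⟩ := hvu
      exact ⟨p % c, Nat.mod_lt _ hQ.pos, by rw [hQ.map_mod]; exact List.mem_cons_self⟩
    · obtain ⟨j, hj, hvj⟩ := h.exists_mem_of_adj_tip hi hv.1 ⟨hv.2, hvu⟩
      exact ⟨j, hj, List.mem_cons_of_mem _ hvj⟩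
  choose! j q hj hq using hcode
  have hmem : ∀ v ∈ nbrsIn G X (tip u L i), v ∈ u (j v) :: L (j v) :=
    fun v hv => List.mem_of_getElem? (hq v hv)
  refine two_mul_card_le_of_gaps (q := q) hj (fun v hv w hw hvw => ?_)
    (fun v hv w hw hjvw hqvw => ?_) fun v _ => ?_
  · obtain ⟨W, hWlen, hW, hWL⟩ := h.exists_leg hu hi (hj v hv) hL (mem_nbrsIn.1 hv).1 (hq v hv)
    obtain ⟨W', hWlen', hW', hWL'⟩ :=
      h.exists_leg hu hi (hj w hw) hL (mem_nbrsIn.1 hw).1 (hq w hw)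
    have := h.gap_of_legs hQ htip hvw (hj w hw) hW hWL hW' hWL'
    omega
  · exact Option.some.inj ((hq v hv).symm.trans (hjvw ▸ hqvw ▸ hq w hw))
  · obtain ⟨l, hl, hli⟩ := h.exists_mem_nbrsIn_tip hQ.mem hi hL
    have hjl : j l = i := h.eq_of_mem_of_mem hu (hj l hl) hi (hmem l hl) hli
    by_cases hji : j v = i
    · exact ⟨v₀, hv₀, fun e => hv₀i (hji ▸ e ▸ hmem v₀ hv₀)⟩
    · exact ⟨l, hl, fun e => hji (e ▸ hjl)⟩

end HangingPaths

section OptimalSystems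

variable {G : SimpleGraph V} {X : Set V} {c : ℕ} {u y : ℕ → V} {M : Finset ℕ} {L : ℕ → List V}
  {i j : ℕ}

/-! ### Optimal systems of hanging paths -/

/-- The edges from `u i` to `y i`, for `i ∈ M`, match some of the `c` vertices of the cyclic
sequence `u` with distinct vertices off it. -/
structure IsCycleMatching (G : SimpleGraph V) (c : ℕ) (u : ℕ → V) (M : Finset ℕ) (y : ℕ → V) :
    Prop where
  lt : ∀ i ∈ M, i < c
  adj : ∀ i ∈ M, G.Adj (u i) (y i)
  notMem : ∀ i ∈ M, y i ∉ Set.range u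
  injOn : Set.InjOn y M

open Classical in
/-- The matched indices whose partner lies on their own hanging path. -/
noncomputable def goodIdx (M : Finset ℕ) (y : ℕ → V) (L : ℕ → List V) : Finset ℕ :=
  M.filter fun i => y i ∈ L i

lemma mem_goodIdx : i ∈ goodIdx M y L ↔ i ∈ M ∧ y i ∈ L i := by simp [goodIdx]

/-- The total number of neighbours of the tips in `X`. -/
noncomputable def tipCost [Fintype V] (G : SimpleGraph V) (X : Set V) (c : ℕ) (u : ℕ → V)
    (L : ℕ → List V) : ℕ := ∑ i ∈ Finset.range c, (nbrsIn G X (tip u L i)).card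

/-- A lexicographically optimal system of hanging paths: maximum weight, then as many good indices
as possible, then as few neighbours of tips as possible. -/
structure IsOptHanging [Fintype V] (G : SimpleGraph V) (X : Set V) (c : ℕ) (u : ℕ → V)
    (M : Finset ℕ) (y : ℕ → V) (L : ℕ → List V) : Prop extends IsMaxHanging G X c u L where
  card_goodIdx_le : ∀ L', IsMaxHanging G X c u L' → (goodIdx M y L').card ≤ (goodIdx M y L).card
  tipCost_le : ∀ L', IsMaxHanging G X c u L' → (goodIdx M y L').card = (goodIdx M y L).card →
    tipCost G X c u L ≤ tipCost G X c u L'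

lemma exists_isMaxHanging [Finite V] (G : SimpleGraph V) (X : Set V) (c : ℕ) (u : ℕ → V) :
    ∃ L, IsMaxHanging G X c u L := by
  have := Fintype.ofFinite V
  obtain ⟨L, hL, hmax⟩ := exists_forall_apply_le_of_bounded (p := IsHanging G X c u)
    ⟨fun _ => [], by constructor <;> simp⟩ (hangWeight c) (B := c * (Fintype.card V + 1)) (by
      intro L hL
      refine (Finset.sum_le_card_nsmul _ _ (Fintype.card V + 1) fun i hi => ?_).trans_eq (by simp)
      have := (hL.nodup i (Finset.mem_range.1 hi)).length_le_card
      omega)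
  exact ⟨L, hL, hmax⟩

lemma exists_isOptHanging [Fintype V] (G : SimpleGraph V) (X : Set V) (c : ℕ) (u : ℕ → V)
    (M : Finset ℕ) (y : ℕ → V) : ∃ L, IsOptHanging G X c u M y L := by
  obtain ⟨L₁, hL₁, hgood⟩ := exists_forall_apply_le_of_bounded (exists_isMaxHanging G X c u)
    (fun L => (goodIdx M y L).card) (B := M.card)
    fun L _ => by classical exact Finset.card_filter_le _ _
  obtain ⟨L₂, ⟨hL₂, hcard⟩, hcost⟩ := exists_forall_apply_le_of_bounded
    (p := fun L => IsMaxHanging G X c u L ∧ (goodIdx M y L).card = (goodIdx M y L₁).card)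
    ⟨L₁, hL₁, rfl⟩ (fun L => c * Fintype.card V - tipCost G X c u L) fun _ _ => Nat.sub_le _ _
  have hbound : ∀ L, tipCost G X c u L ≤ c * Fintype.card V := fun L =>
    (Finset.sum_le_card_nsmul _ _ _ fun i _ => Finset.card_le_univ _).trans_eq (by simp)
  refine ⟨L₂, hL₂, fun L hL => hcard ▸ hgood L hL, fun L hL hLcard => ?_⟩
  have := hcost L ⟨hL, hLcard.trans hcard⟩
  have := hbound L
  have := hbound L₂
  omega

lemma IsMaxHanging.exists_move_path (h : IsMaxHanging G X c u L) (hi : i < c) (hj : j < c)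
    (hL : L i = []) {w : V} (hw : G.Adj (u i) w) (hwj : w ∈ L j) :
    ∃ B, L j = w :: B ∧
      IsMaxHanging G X c u (Function.update (Function.update L j []) i (w :: B)) := by
  obtain ⟨A, B, hAB⟩ := List.append_of_mem hwj
  obtain rfl := h.eq_nil_of_adj hi hj hL hw hAB
  obtain ⟨hmove, hweight⟩ := h.move_tail hi hj hL hw hAB
  exact ⟨B, hAB, h.of_hangWeight_eq hmove hweight⟩

namespace IsOptHanging

variable [Fintype V]

lemma notMem_of_eq_nil (h : IsOptHanging G X c u M y L) (hM : IsCycleMatching G c u M y)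
    (hi : i ∈ M) (hL : L i = []) : y i ∉ X := by
  intro hX
  have hic := hM.lt i hi
  obtain ⟨j, hj, hyj⟩ := h.exists_mem_of_adj_tip hic
    (by rw [tip_of_eq_nil hL]; exact hM.adj i hi) ⟨hX, hM.notMem i hi⟩
  obtain ⟨B, hB, hL'⟩ := h.exists_move_path hic hj hL (hM.adj i hi) hyj
  have hij : i ≠ j := by
    rintro rfl
    simp [hL] at hB
  set L' := Function.update (Function.update L j []) i (y i :: B) with hL'_def
  have hL'i : L' i = y i :: B := by simp [hL'_def]
  have hL'j : L' j = [] := by simp [hL'_def, hij.symm]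
  have hjgood : j ∉ goodIdx M y L := by
    intro hjgood
    obtain ⟨hjM, hyjL⟩ := mem_goodIdx.1 hjgood
    rw [hB, ← hL'i] at hyjL
    obtain ⟨B', hB', -⟩ := hL'.exists_move_path hj hic hL'j (hM.adj j hjM) hyjL
    rw [hL'i] at hB'
    exact hij (hM.injOn hi hjM (List.cons.inj hB').1)
  have higood : i ∉ goodIdx M y L := fun higood => by
    have := (mem_goodIdx.1 higood).2
    simp [hL] at this
  have hsub : insert i (goodIdx M y L) ⊆ goodIdx M y L' := by
    intro k hk
    rcases Finset.mem_insert.1 hk with rfl | hk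
    · exact mem_goodIdx.2 ⟨hi, hL'i ▸ List.mem_cons_self⟩
    · have hkj : k ≠ j := fun e => hjgood (e ▸ hk)
      have hki : k ≠ i := fun e => higood (e ▸ hk)
      obtain ⟨hkM, hykL⟩ := mem_goodIdx.1 hk
      exact mem_goodIdx.2 ⟨hkM, by rwa [hL'_def, Function.update_of_ne hki,
        Function.update_of_ne hkj]⟩
  have := Finset.card_le_card hsub
  rw [Finset.card_insert_of_notMem higood] at this
  exact (h.card_goodIdx_le L' hL').not_gt this

lemma nbrsIn_of_perm (hQ : IsMaxCycle G X c u) (h : IsOptHanging G X c u M y L) (hj : j < c)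
    (hL : L j ≠ []) {ρ : List V} {e : V} (hρ : IsPathList G (u j) ρ e)
    (hperm : ρ.Perm (u j :: L j)) :
    (nbrsIn G X (tip u L j)).card ≤ (nbrsIn G X e).card ∧
      ((∀ v ∈ nbrsIn G X e, v ∈ u j :: L j) ∨ 2 * (nbrsIn G X e).card ≤ c) := by
  obtain ⟨L', rfl⟩ := hρ.exists_eq_cons
  have hp : L'.Perm (L j) := (List.perm_cons _).1 hperm
  have hL' := h.update hρ (fun x hx => h.mem j hj x (hp.mem_iff.1 hx))
    fun k hk hkj x hx => h.disjoint j hj k hk hkj.symm (hp.mem_iff.1 hx)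
  have hmax := h.of_hangWeight_eq hL' (by
    have := hangWeight_update hj L L'
    rw [hp.length_eq] at this
    omega)
  have hgood : goodIdx M y (Function.update L j L') = goodIdx M y L := by
    ext k
    rw [mem_goodIdx, mem_goodIdx]
    rcases eq_or_ne k j with rfl | hkj
    · rw [Function.update_self, hp.mem_iff]
    · rw [Function.update_of_ne hkj]
  have htip : tip u (Function.update L j L') j = e :=
    hL'.tip_eq hj (by rwa [Function.update_self])
  have hcost := h.tipCost_le _ hmax (by rw [hgood])
  have hsum := sum_add_eq_sum_add_of_forall_ne (Finset.mem_range.2 hj)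
    (F := fun k => (nbrsIn G X (tip u L k)).card)
    (F' := fun k => (nbrsIn G X (tip u (Function.update L j L') k)).card)
    fun k hk => by simp only [tip, Function.update_of_ne hk]
  rw [htip] at hsum
  refine ⟨by simp only [tipCost] at hcost; omega, ?_⟩
  have := hmax.nbrsIn_tip_subset_or_two_mul_card_le hQ hj
    (by rw [Function.update_self]; rintro rfl; exact hL hp.nil_eq.symm)
  rw [htip, Function.update_self] at this
  exact this.imp_left fun hsub v hv => hperm.mem_iff.1 (hsub v hv)

/-- Otherwise every rearrangement of the path ends in a vertex with at least `μ` neighbours on it,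
and the rotations of the path produce a well-linked set. -/
lemma card_nbrsIn_tip_lt (hQ : IsMaxCycle G X c u) (h : IsOptHanging G X c u M y L) {μ : ℕ}
    (hμ : 1 ≤ μ) (hc : c + 3 ≤ 2 * μ ∨ c = μ)
    (hX : ∀ B, WellLinked G μ B → μ + 1 ≤ B.card → ∃ x ∈ B, x ∉ X) (hj : j < c) (hL : L j ≠ []) :
    (nbrsIn G X (tip u L j)).card < μ := by
  classical
  by_contra! hcard
  have hpath := h.isPathList hj
  obtain ⟨z, A, e, hA, hAsub⟩ := hpath.exists_isDenseCycle (D := nbrsIn G X)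
    (fun v w hw => (mem_nbrsIn.1 hw).1) hμ fun ρ e hρ hperm => by
      obtain ⟨hle, hown | hfew⟩ := h.nbrsIn_of_perm hQ hj hL hρ hperm
      · exact ⟨hcard.trans hle, hown⟩
      · omega
  have hsub : ∀ x ∈ z :: A, x ∈ X := fun x hx =>
    (List.mem_cons.1 (hAsub x hx)).elim (fun e => e ▸ hQ.mem j) fun hx => (h.mem j hj x hx).1
  have hlen := hQ.length_le _ hA.isGenCycle hsub
  have hμlen := hA.succ_le_length
  obtain ⟨x, hx, hxX⟩ := hX _ (hA.wellLinked (by omega))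
    (by rwa [List.toFinset_card_of_nodup hA.isPathList.nodup])
  exact hxX (hsub x (List.mem_toFinset.1 hx))

end IsOptHanging

end OptimalSystems

section Charging

variable {G : SimpleGraph V} {X : Set V} {N c : ℕ} {f u : ℕ → V} {L : ℕ → List V} {i j : ℕ}

/-! ### Charging the neighbours on the cycle to the tips -/

open Classical in
/-- The positions on the cycle `f` of length `N` adjacent to `v`. -/
noncomputable def attach (G : SimpleGraph V) (f : ℕ → V) (N : ℕ) (v : V) : Finset ℕ :=
  (Finset.range N).filter fun p => G.Adj v (f p)

lemma mem_attach {v : V} {p : ℕ} : p ∈ attach G f N v ↔ p < N ∧ G.Adj v (f p) := by simp [attach]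

/-- Vertices `E i`, for `i < c`, outside the cycle `f`, with depths `τ i` and weights `ω i`, joined
to each other outside `f` by paths whose lengths grow with the depths and with both distances of the
indices on a cycle of length `c`. -/
structure IsCharging (G : SimpleGraph V) (f : ℕ → V) (c : ℕ) (E : ℕ → V) (τ ω : ℕ → ℕ) : Prop where
  notMem : ∀ i < c, E i ∉ Set.range f
  weight : ∀ i < c, ω i = 2 ∨ ω i = 3 ∧ c + 1 ≤ 2 * τ i ∧ 3 ≤ c
  link : ∀ i < c, ∀ j < c, i < j → ∃ P, IsPathList G (E i) P (E j) ∧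
    (∀ x ∈ P, x ∉ Set.range f) ∧
    τ i + τ j + 1 + (j - i) ≤ P.length ∧ τ i + τ j + 1 + (c - (j - i)) ≤ P.length

lemma IsMaxCycle.degree_le_card_attach_add [Fintype V] [DecidableRel G.Adj]
    (h : IsMaxCycle G X N f) (v : V) :
    G.degree v ≤ (attach G f N v).card + (nbrsIn G (Set.range f)ᶜ v).card := by
  classical
  have hsub : G.neighborFinset v ⊆ (attach G f N v).image f ∪ nbrsIn G (Set.range f)ᶜ v := by
    intro w hw
    rw [mem_neighborFinset] at hw
    rw [Finset.mem_union, Finset.mem_image, mem_nbrsIn]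
    by_cases hwf : w ∈ Set.range f
    · obtain ⟨p, rfl⟩ := hwf
      exact Or.inl ⟨p % N, mem_attach.2 ⟨Nat.mod_lt _ h.pos, by rwa [h.map_mod]⟩, h.map_mod p⟩
    · exact Or.inr ⟨hw, hwf⟩
  exact (Finset.card_le_card hsub).trans ((Finset.card_union_le _ _).trans
    (Nat.add_le_add_right Finset.card_image_le _))

lemma IsMaxCycle.exists_isPathList_long_arc (hQ : IsMaxCycle G X c u) (hj : j < c) (hij : i < j) :
    ∃ P, IsPathList G (u i) P (u j) ∧ (∀ x ∈ P, x ∈ Set.range u) ∧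
      j - i + 1 ≤ P.length ∧ c - (j - i) + 1 ≤ P.length := by
  rcases le_total (c - (j - i)) (j - i) with hle | hle
  · exact ⟨arc u i (j - i + 1), hQ.isPathList_arc (by omega) (by omega) (by omega),
      fun x hx => mem_range_of_mem_arc hx, by simp, by simp; omega⟩
  · have hback := (hQ.isPathList_arc (s := j) (len := c - (j - i) + 1) (e := i + c)
      (by omega) (by omega) (by omega)).reverse
    rw [hQ.periodic] at hback
    exact ⟨_, hback, fun x hx => mem_range_of_mem_arc (List.mem_reverse.1 hx), by simp; omega,
      by simp⟩

lemma IsHanging.exists_isPathList_tip_tip (hQ : IsMaxCycle G X c u) (h : IsHanging G X c u L)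
    (hj : j < c) (hij : i < j) :
    ∃ P, IsPathList G (tip u L i) P (tip u L j) ∧ (∀ x ∈ P, x ∈ X) ∧
      (L i).length + (L j).length + 1 + (j - i) ≤ P.length ∧
      (L i).length + (L j).length + 1 + (c - (j - i)) ≤ P.length := by
  have hi : i < c := hij.trans hj
  obtain ⟨M, hM, hMu, h1, h2⟩ := hQ.exists_isPathList_long_arc hj hij
  refine ⟨_, IsPathList.detour (h.isPathList hi) hM (h.isPathList hj)
    (fun x hx hx' => (h.mem i hi x hx).2 (hMu x hx'))
    (fun x hx hx' => (h.mem j hj x hx).2 (hMu x hx')) (h.disjoint i hi j hj hij.ne), ?_, ?_, ?_⟩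
  · intro x hx
    simp only [List.mem_append, List.mem_reverse] at hx
    rcases hx with (hx | hx) | hx
    · exact (h.mem i hi x hx).1
    · obtain ⟨p, rfl⟩ := hMu x hx
      exact hQ.mem p
    · exact (h.mem j hj x hx).1
  all_goals
    simp only [List.length_append, List.length_reverse]
    omega

open Classical in
/-- A vertex off a longest cycle is never adjacent to two consecutive vertices of it. -/
lemma IsMaxCycle.two_mul_card_filter_adj_le (hQ : IsMaxCycle G X c u) {t : V}
    (ht : t ∈ X \ Set.range u) : 2 * ((Finset.range c).filter fun i => G.Adj (u i) t).card ≤ c := by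
  set A := (Finset.range c).filter fun i => G.Adj (u i) t with hA
  have hc := hQ.pos
  have hno : ∀ p, G.Adj (u p) t → ¬ G.Adj (u (p + 1)) t := fun p h1 h2 => by
    simpa using hQ.length_add_one_le_of_attached (p := p) (k := 1) le_rfl hc
      (IsPathList.singleton t) (by simpa using ht) h1 h2.symm
  have hinj : Set.InjOn (fun p => (p + 1) % c) (A : Set ℕ) := by
    intro p hp q hq e
    have : p % c = q % c := Nat.ModEq.add_right_cancel' 1 e
    rwa [Nat.mod_eq_of_lt (Finset.mem_range.1 (Finset.mem_filter.1 hp).1),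
      Nat.mod_eq_of_lt (Finset.mem_range.1 (Finset.mem_filter.1 hq).1)] at this
  have hdisj : Disjoint A (A.image fun p => (p + 1) % c) := by
    rw [Finset.disjoint_left]
    intro p hp hp'
    obtain ⟨q, hq, rfl⟩ := Finset.mem_image.1 hp'
    rw [hA, Finset.mem_filter] at hp hq
    rw [hQ.map_mod] at hp
    exact hno q hq.2 hp.2
  have hsub : A ∪ A.image (fun p => (p + 1) % c) ⊆ Finset.range c :=
    Finset.union_subset (Finset.filter_subset _ _)
      (Finset.image_subset_iff.2 fun q _ => Finset.mem_range.2 (Nat.mod_lt _ hc))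
  have hcard := Finset.card_le_card hsub
  rw [Finset.card_union_of_disjoint hdisj, Finset.card_image_of_injOn hinj,
    Finset.card_range] at hcard
  omega

/-- The hanging path at `u i` is trivial, and `u i` is adjacent to the first vertex of the one at
`u j`. -/
def IsFirstNbr (G : SimpleGraph V) (u : ℕ → V) (L : ℕ → List V) (i j : ℕ) : Prop :=
  L i = [] ∧ ∃ t ∈ (L j).head?, G.Adj (u i) t

open Classical in
lemma IsHanging.two_mul_card_filter_isFirstNbr_le (hQ : IsMaxCycle G X c u)
    (h : IsHanging G X c u L) (hi : i < c) (hL : L i ≠ []) :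
    2 * ((Finset.range c).filter fun k => IsFirstNbr G u L k i).card + 2 ≤ c := by
  obtain ⟨t, B, hB⟩ := List.exists_cons_of_ne_nil hL
  have hut : G.Adj (u i) t := by
    have := h.isChain i hi
    rw [hB] at this
    exact (List.isChain_cons_cons.1 this).1
  have hsub : insert i ((Finset.range c).filter fun k => IsFirstNbr G u L k i) ⊆
      (Finset.range c).filter fun k => G.Adj (u k) t := by
    intro k hk
    rcases Finset.mem_insert.1 hk with rfl | hk
    · exact Finset.mem_filter.2 ⟨Finset.mem_range.2 hi, hut⟩
    · obtain ⟨hkc, -, t', ht', hkt'⟩ := Finset.mem_filter.1 hk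
      obtain rfl : t = t' := by simpa [hB] using ht'
      exact Finset.mem_filter.2 ⟨hkc, hkt'⟩
  have hcard := Finset.card_le_card hsub
  rw [Finset.card_insert_of_notMem fun hmem => hL (Finset.mem_filter.1 hmem).2.1] at hcard
  have := hQ.two_mul_card_filter_adj_le (h.mem i hi t (by simp [hB]))
  omega

section Fintype

variable [Fintype V]

open Classical in
lemma IsMaxHanging.card_nbrsIn_add_one_le (hQ : IsMaxCycle G X c u) (h : IsMaxHanging G X c u L)
    (hi : i < c) (hL : L i = []) :
    (nbrsIn G X (u i)).card + 1 ≤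
      c + ((Finset.range c).filter fun j => IsFirstNbr G u L i j).card := by
  set A := (Finset.range c).filter fun j => IsFirstNbr G u L i j
  have hsub : nbrsIn G X (u i) ⊆
      ((Finset.range c).erase i).image u ∪ A.image (fun j => ((L j).head?).getD (u i)) := by
    intro w hw
    rw [mem_nbrsIn] at hw
    rw [Finset.mem_union, Finset.mem_image, Finset.mem_image]
    by_cases hwu : w ∈ Set.range u
    · obtain ⟨p, rfl⟩ := hwu
      refine Or.inl ⟨p % c, Finset.mem_erase.2 ⟨fun e => hw.1.ne ?_,
        Finset.mem_range.2 (Nat.mod_lt _ hQ.pos)⟩, hQ.map_mod p⟩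
      rw [← hQ.map_mod p, e]
    · obtain ⟨j, hj, hwj⟩ := h.exists_mem_of_adj_tip hi
        (by rw [tip_of_eq_nil hL]; exact hw.1) ⟨hw.2, hwu⟩
      obtain ⟨A', B, hAB⟩ := List.append_of_mem hwj
      obtain rfl := h.eq_nil_of_adj hi hj hL hw.1 hAB
      exact Or.inr ⟨j, Finset.mem_filter.2 ⟨Finset.mem_range.2 hj, hL, w, by simp [hAB], hw.1⟩,
        by simp [hAB]⟩
  have hcard := (Finset.card_le_card hsub).trans ((Finset.card_union_le _ _).trans
    (Nat.add_le_add Finset.card_image_le Finset.card_image_le))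
  rw [Finset.card_erase_of_mem (Finset.mem_range.2 hi), Finset.card_range] at hcard
  omega

open Classical in
/-- The weight with which the tip of the `i`-th hanging path is charged. -/
noncomputable def tipWeight (G : SimpleGraph V) (X : Set V) (c : ℕ) (u : ℕ → V) (L : ℕ → List V)
    (i : ℕ) : ℕ := if L i ≠ [] ∧ c < 2 * (nbrsIn G X (tip u L i)).card then 3 else 2

lemma IsMaxHanging.lt_two_mul_length (hQ : IsMaxCycle G X c u) (h : IsMaxHanging G X c u L)
    (hi : i < c) (hL : L i ≠ []) (hcard : c < 2 * (nbrsIn G X (tip u L i)).card) :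
    c < 2 * (L i).length := by
  classical
  obtain hown | hfew := h.nbrsIn_tip_subset_or_two_mul_card_le hQ hi hL
  · have hsub : nbrsIn G X (tip u L i) ⊆ (u i :: L i).toFinset.erase (tip u L i) := fun v hv =>
      Finset.mem_erase.2 ⟨(mem_nbrsIn.1 hv).1.ne', List.mem_toFinset.2 (hown v hv)⟩
    have hle := Finset.card_le_card hsub
    rw [Finset.card_erase_of_mem (List.mem_toFinset.2 (h.isPathList hi).getLast_mem)] at hle
    have := List.toFinset_card_le (u i :: L i)
    rw [List.length_cons] at this
    omega
  · omega

section Tips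

variable {δ μ : ℕ} (hC : IsMaxCycle G Set.univ N f) (hQ : IsMaxCycle G (Set.range f)ᶜ c u)
  (h : IsMaxHanging G (Set.range f)ᶜ c u L)
  (htip : ∀ j < c, L j ≠ [] → (nbrsIn G (Set.range f)ᶜ (tip u L j)).card < μ)

include hQ h htip in
lemma IsMaxHanging.isCharging (hμc : μ ≤ c) :
    IsCharging G f c (tip u L) (fun i => (L i).length) (tipWeight G (Set.range f)ᶜ c u L) where
  notMem i hi := by
    by_cases hL : L i = []
    · rw [tip_of_eq_nil hL]
      exact hQ.mem i
    · exact (h.mem i hi _ (tip_mem_of_ne_nil hL)).1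
  weight i hi := by
    by_cases hcase : L i ≠ [] ∧ c < 2 * (nbrsIn G (Set.range f)ᶜ (tip u L i)).card
    · have := htip i hi hcase.1
      exact Or.inr ⟨if_pos hcase, h.lt_two_mul_length hQ hi hcase.1 hcase.2, by omega⟩
    · exact Or.inl (if_neg hcase)
  link i _ j hj hij := h.exists_isPathList_tip_tip hQ hj hij

variable [DecidableRel G.Adj] (hdeg : ∀ v, δ ≤ G.degree v)

include hC hdeg in
lemma le_card_attach_add (v : V) :
    δ ≤ (attach G f N v).card + (nbrsIn G (Set.range f)ᶜ v).card :=
  (hdeg v).trans (hC.degree_le_card_attach_add v)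

open Classical in
include hC hQ h htip hdeg in
lemma IsMaxHanging.two_mul_add_card_isFirstNbr_le (hδ : 2 * μ ≤ δ + 1)
    (hμc : μ ≤ c) (hc : c + 3 ≤ 2 * μ ∨ c = μ) (hi : i < c) :
    2 * (δ + 1 - c) + 2 * ((Finset.range c).filter fun k => IsFirstNbr G u L k i).card ≤
      tipWeight G (Set.range f)ᶜ c u L i * (attach G f N (tip u L i)).card +
        2 * ((Finset.range c).filter fun j => IsFirstNbr G u L i j).card := by
  have hdeg_tip := le_card_attach_add hC hdeg (tip u L i)
  by_cases hL : L i = []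
  · have hown := h.card_nbrsIn_add_one_le hQ hi hL
    have hnone : ((Finset.range c).filter fun k => IsFirstNbr G u L k i) = ∅ := by
      rw [Finset.filter_eq_empty_iff]
      rintro k - ⟨-, t, ht, -⟩
      simp [hL] at ht
    rw [hnone, Finset.card_empty, tipWeight, if_neg (by simp [hL])]
    rw [tip_of_eq_nil hL] at *
    omega
  · have hfirst := h.two_mul_card_filter_isFirstNbr_le hQ hi hL
    have hcard := htip i hi hL
    by_cases hcase : c < 2 * (nbrsIn G (Set.range f)ᶜ (tip u L i)).card
    · rw [tipWeight, if_pos ⟨hL, hcase⟩]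
      omega
    · rw [tipWeight, if_neg fun hh => hcase hh.2]
      omega

include hC hQ h htip hdeg in
/-- Each edge counted by `IsFirstNbr` is paid by its trivial end and received by its nontrivial
end, so that these contributions cancel in the sum. -/
lemma IsMaxHanging.two_mul_mul_le_sum (hδ : 2 * μ ≤ δ + 1) (hμc : μ ≤ c)
    (hc : c + 3 ≤ 2 * μ ∨ c = μ) :
    2 * c * (δ + 1 - c) ≤ ∑ i ∈ Finset.range c,
      tipWeight G (Set.range f)ᶜ c u L i * (attach G f N (tip u L i)).card := by
  classical
  have hsum := Finset.sum_le_sum fun i hi =>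
    h.two_mul_add_card_isFirstNbr_le hC hQ htip hdeg hδ hμc hc (Finset.mem_range.1 hi)
  rw [Finset.sum_add_distrib, Finset.sum_add_distrib, Finset.sum_const, Finset.card_range,
    ← Finset.mul_sum, ← Finset.mul_sum, smul_eq_mul] at hsum
  have hdouble : ∑ i ∈ Finset.range c, ((Finset.range c).filter fun j => IsFirstNbr G u L i j).card
      = ∑ i ∈ Finset.range c, ((Finset.range c).filter fun k => IsFirstNbr G u L k i).card :=
    Finset.sum_card_bipartiteAbove_eq_sum_card_bipartiteBelow (IsFirstNbr G u L)
  rw [hdouble, show c * (2 * (δ + 1 - c)) = 2 * c * (δ + 1 - c) by ring] at hsum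
  exact Nat.le_of_add_le_add_right hsum

end Tips

lemma exists_isCharging [DecidableRel G.Adj] {δ μ M : ℕ} (hC : IsMaxCycle G Set.univ N f)
    (hQ : IsMaxCycle G (Set.range f)ᶜ c u) (hdeg : ∀ v, δ ≤ G.degree v) (hμ : 1 ≤ μ)
    (hμM : μ ≤ M) (hδ : δ + 1 = M + μ) (hμc : μ ≤ c) (hc : c + 3 ≤ 2 * μ ∨ c = μ)
    (hlinked : ∀ B, WellLinked G μ B → μ + 1 ≤ B.card → ∃ x ∈ B, x ∈ Set.range f)
    {I : Finset ℕ} {y : ℕ → V} (hI : IsCycleMatching G c u I y) :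
    ∃ E τ ω, IsCharging G f c E τ ω ∧
      2 * c * (δ + 1 - c) ≤ ∑ i ∈ Finset.range c, ω i * (attach G f N (E i)).card ∧
      ∀ i ∈ I, (y i ∈ Set.range f ∧ G.Adj (E i) (y i)) ∨ M ≤ (attach G f N (E i)).card := by
  obtain ⟨L, hL⟩ := exists_isOptHanging G (Set.range f)ᶜ c u I y
  have htip : ∀ j < c, L j ≠ [] → (nbrsIn G (Set.range f)ᶜ (tip u L j)).card < μ :=
    fun j hj => hL.card_nbrsIn_tip_lt hQ hμ hc (by simpa using hlinked) hj
  refine ⟨tip u L, _, _, hL.isCharging hQ htip hμc,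
    hL.two_mul_mul_le_sum hC hQ htip hdeg (by omega) hμc hc, fun i hi => ?_⟩
  by_cases hLi : L i = []
  · rw [tip_of_eq_nil hLi]
    exact Or.inl ⟨not_not.1 (hL.notMem_of_eq_nil hI hi hLi), hI.adj i hi⟩
  · have := htip i (hI.lt i hi) hLi
    have := le_card_attach_add hC hdeg (tip u L i)
    exact Or.inr (by omega)

end Fintype

end Charging

section Gaps

/-! ### Gap estimates -/

/-- The longer one of the two distances of `i` and `j` around a cycle of length `c`. -/
def span (c i j : ℕ) : ℕ := max (i - j + (j - i)) (c - (i - j + (j - i)))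

lemma span_comm (c i j : ℕ) : span c i j = span c j i := by
  rw [span, span, Nat.add_comm]

lemma card_add_le_of_span_le {c i m : ℕ} (hi : i < c) {B : Finset ℕ} (hne : B.Nonempty)
    (hB : ∀ j ∈ B, j < c ∧ span c i j ≤ m) : B.card + c ≤ 2 * m + 1 := by
  have hcard : B.card ≤ (Finset.Icc (c - m) m).card := by
    apply Finset.card_le_card_of_injOn fun j => if i < j then j - i else j + c - i
    · intro j hj
      obtain ⟨hjc, hspan⟩ := hB j hj
      rw [span] at hspan
      simp only [Finset.mem_coe, Finset.mem_Icc]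
      split_ifs <;> omega
    · intro j hj k hk e
      have := hB j hj
      have := hB k hk
      simp only at e
      split_ifs at e <;> omega
  have := Finset.card_pos.2 hne
  rw [Nat.card_Icc] at hcard
  omega

lemma exists_add_card_le_two_mul_span {c i : ℕ} (hi : i < c) {B : Finset ℕ} (hB : ∀ j ∈ B, j < c)
    (hne : ∃ j ∈ B, j ≠ i) : ∃ j ∈ B, j ≠ i ∧ c + B.card ≤ 2 * span c i j + 2 := by
  by_contra! hcon
  obtain ⟨j₀, hj₀, hj₀i⟩ := hne
  have hj₀_near := hcon j₀ hj₀ hj₀i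
  have hnear := card_add_le_of_span_le (m := (c + B.card - 3) / 2) hi
    ⟨j₀, Finset.mem_erase.2 ⟨hj₀i, hj₀⟩⟩ fun j hj => by
      obtain ⟨hji, hj⟩ := Finset.mem_erase.1 hj
      have := hcon j hj hji
      exact ⟨hB j hj, by omega⟩
  have := Finset.pred_card_le_card_erase (s := B) (a := i)
  omega

/-- Sets `A` and `B` of indices less than `c` that can be attached at two positions at distance `g`
of a longest cycle. -/
structure IsGap (c g : ℕ) (τ : ℕ → ℕ) (A B : Finset ℕ) : Prop where
  left_lt : ∀ i ∈ A, i < c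
  right_lt : ∀ i ∈ B, i < c
  add_span_le : ∀ i ∈ A, ∀ j ∈ B, i ≠ j → τ i + τ j + 2 + span c i j ≤ g

/-- The two estimates of the weight of the sets at the ends of a gap by its length `g`: the first
one leaves a bonus, the second one has a better slope. -/
def GapBound (c g : ℕ) (ω : ℕ → ℕ) (A B : Finset ℕ) : Prop :=
  ∑ i ∈ A, ω i + ∑ i ∈ B, ω i + (4 * c + 8) ≤ 8 * g ∧
    (c + 1) * (∑ i ∈ A, ω i + ∑ i ∈ B, ω i) ≤ 4 * c * g

lemma GapBound.symm {c g : ℕ} {ω : ℕ → ℕ} {A B : Finset ℕ} (h : GapBound c g ω A B) :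
    GapBound c g ω B A := by
  rwa [GapBound, Nat.add_comm (∑ i ∈ B, ω i)]

lemma card_le_of_forall_lt {c : ℕ} {S : Finset ℕ} (hS : ∀ i ∈ S, i < c) : S.card ≤ c := by
  simpa using Finset.card_le_card fun i hi => Finset.mem_range.2 (hS i hi)

namespace IsGap

variable {c g i : ℕ} {τ ω : ℕ → ℕ} {A B : Finset ℕ}

lemma symm (h : IsGap c g τ A B) : IsGap c g τ B A where
  left_lt := h.right_lt
  right_lt := h.left_lt
  add_span_le i hi j hj hij := by
    have := h.add_span_le j hj i hi hij.symm
    rw [span_comm]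
    omega

lemma gapBound_of_heavy_of_ne (h : IsGap c g τ A B)
    (hω : ∀ i < c, ω i = 2 ∨ ω i = 3 ∧ c + 1 ≤ 2 * τ i ∧ 3 ≤ c)
    (hi : i ∈ A) (hi3 : ω i = 3) (hne : ∃ j ∈ B, j ≠ i) : GapBound c g ω A B := by
  have hsum : ∀ S : Finset ℕ, (∀ i ∈ S, i < c) → ∑ i ∈ S, ω i ≤ 3 * S.card := fun S hS =>
    (Finset.sum_le_card_nsmul _ _ 3 fun i hi => by
      have := hω i (hS i hi)
      omega).trans_eq (by rw [smul_eq_mul, Nat.mul_comm])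
  have hA := hsum A h.left_lt
  have hB := hsum B h.right_lt
  have hAc := card_le_of_forall_lt h.left_lt
  have hBc := card_le_of_forall_lt h.right_lt
  obtain ⟨j, hj, hji, hfar⟩ := exists_add_card_le_two_mul_span (h.left_lt i hi) h.right_lt hne
  have hle := h.add_span_le i hi j hj hji.symm
  have hωi := hω i (h.left_lt i hi)
  have hg : 2 * c + 3 + B.card ≤ 2 * g := by omega
  refine ⟨by omega, ?_⟩
  calc (c + 1) * (∑ i ∈ A, ω i + ∑ i ∈ B, ω i) ≤ (c + 1) * (3 * c + 3 * B.card) :=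
        Nat.mul_le_mul_left _ (by omega)
    _ ≤ 2 * c * (2 * c + 3 + B.card) := by nlinarith
    _ ≤ 2 * c * (2 * g) := Nat.mul_le_mul_left _ hg
    _ = 4 * c * g := by ring

lemma gapBound_of_heavy (h : IsGap c g τ A B)
    (hω : ∀ i < c, ω i = 2 ∨ ω i = 3 ∧ c + 1 ≤ 2 * τ i ∧ 3 ≤ c)
    (hi : i ∈ A) (hi3 : ω i = 3) (hne : ∃ a ∈ A, ∃ b ∈ B, b ≠ a) : GapBound c g ω A B := by
  by_cases hB : ∃ j ∈ B, j ≠ i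
  · exact h.gapBound_of_heavy_of_ne hω hi hi3 hB
  · push Not at hB
    obtain ⟨a, ha, b, hb, hba⟩ := hne
    obtain rfl := hB b hb
    exact (h.symm.gapBound_of_heavy_of_ne hω hb hi3 ⟨a, ha, hba.symm⟩).symm

lemma gapBound_of_light (h : IsGap c g τ A B) (hA : ∀ i ∈ A, ω i = 2) (hB : ∀ i ∈ B, ω i = 2)
    (hAB : A.card ≤ B.card) (hne : ∃ a ∈ A, ∃ b ∈ B, b ≠ a) : GapBound c g ω A B := by
  obtain ⟨i, hi, hne⟩ := hne
  obtain ⟨j, hj, hji, hfar⟩ := exists_add_card_le_two_mul_span (h.left_lt i hi) h.right_lt hne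
  have hle := h.add_span_le i hi j hj hji.symm
  have hBc := card_le_of_forall_lt h.right_lt
  have hg : c + 2 + B.card ≤ 2 * g := by omega
  rw [GapBound, Finset.sum_congr rfl hA, Finset.sum_congr rfl hB, Finset.sum_const,
    Finset.sum_const, smul_eq_mul, smul_eq_mul]
  refine ⟨by omega, ?_⟩
  calc (c + 1) * (A.card * 2 + B.card * 2) ≤ (c + 1) * (4 * B.card) :=
        Nat.mul_le_mul_left _ (by omega)
    _ ≤ 2 * c * (c + 2 + B.card) := by nlinarith
    _ ≤ 2 * c * (2 * g) := Nat.mul_le_mul_left _ hg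
    _ = 4 * c * g := by ring

lemma gapBound (h : IsGap c g τ A B)
    (hω : ∀ i < c, ω i = 2 ∨ ω i = 3 ∧ c + 1 ≤ 2 * τ i ∧ 3 ≤ c)
    (hne : ∃ a ∈ A, ∃ b ∈ B, b ≠ a) : GapBound c g ω A B := by
  have hne' : ∃ b ∈ B, ∃ a ∈ A, a ≠ b := by
    obtain ⟨a, ha, b, hb, hba⟩ := hne
    exact ⟨b, hb, a, ha, hba.symm⟩
  by_cases hA : ∃ i ∈ A, ω i = 3
  · obtain ⟨i, hi, hi3⟩ := hA
    exact h.gapBound_of_heavy hω hi hi3 hne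
  by_cases hB : ∃ i ∈ B, ω i = 3
  · obtain ⟨i, hi, hi3⟩ := hB
    exact (h.symm.gapBound_of_heavy hω hi hi3 hne').symm
  push Not at hA hB
  have hA2 : ∀ i ∈ A, ω i = 2 := fun i hi =>
    (hω i (h.left_lt i hi)).resolve_right fun h3 => hA i hi h3.1
  have hB2 : ∀ i ∈ B, ω i = 2 := fun i hi =>
    (hω i (h.right_lt i hi)).resolve_right fun h3 => hB i hi h3.1
  rcases le_total A.card B.card with hle | hle
  · exact h.gapBound_of_light hA2 hB2 hle hne
  · exact (h.symm.gapBound_of_light hB2 hA2 hle hne').symm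

end IsGap

lemma exists_sum_Ico_eq_sum_Ico_add {w : ℕ → ℕ} {s q : ℕ} (hsq : s < q) (hs : 0 < w s) :
    ∃ r, s ≤ r ∧ r < q ∧ 0 < w r ∧
      ∑ t ∈ Finset.Ico s q, w t = ∑ t ∈ Finset.Ico s r, w t + w r := by
  induction q, hsq using Nat.le_induction with
  | base => exact ⟨s, le_rfl, Nat.lt_succ_self s, hs, by simp⟩
  | succ q hsq ih =>
    rcases Nat.eq_zero_or_pos (w q) with hq | hq
    · obtain ⟨r, hsr, hrq, hr, hsum⟩ := ih
      exact ⟨r, hsr, hrq.trans (Nat.lt_succ_self q), hr, by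
        rw [Finset.sum_Ico_succ_top (Nat.le_of_succ_le hsq), hq, hsum, Nat.add_zero]⟩
    · exact ⟨q, Nat.le_of_succ_le hsq, Nat.lt_succ_self q, hq,
        Finset.sum_Ico_succ_top (Nat.le_of_succ_le hsq) w⟩

lemma sum_Ico_add_le_of_gaps {w : ℕ → ℕ} {s e α β K : ℕ} {T : ℕ → ℕ → Prop}
    (hT : ∀ p q r, T p q → T q r → T p r)
    (hgap : ∀ p q, s ≤ p → p < q → q ≤ e → 0 < w p → 0 < w q →
      β * (w p + w q) + K ≤ α * (q - p) ∨ β * (w p + w q) ≤ α * (q - p) ∧ T p q)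
    (hs : 0 < w s) : ∀ q, s < q → q ≤ e → 0 < w q →
      β * (2 * ∑ r ∈ Finset.Ico s q, w r + w q) + K ≤ α * (q - s) + β * w s ∨
      β * (2 * ∑ r ∈ Finset.Ico s q, w r + w q) ≤ α * (q - s) + β * w s ∧ T s q := by
  intro q
  induction q using Nat.strong_induction_on with
  | _ q ih =>
  intro hsq hqe hq
  obtain ⟨r, hsr, hrq, hr, hsum⟩ := exists_sum_Ico_eq_sum_Ico_add hsq hs
  have hweight : β * (2 * ∑ r ∈ Finset.Ico s q, w r + w q) =
      β * (2 * ∑ t ∈ Finset.Ico s r, w t + w r) + β * (w r + w q) := by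
    rw [hsum]
    ring
  have hlength : α * (q - s) = α * (q - r) + α * (r - s) := by
    rw [← Nat.mul_add, Nat.sub_add_sub_cancel hrq.le hsr]
  rw [hweight, hlength]
  rcases hsr.eq_or_lt with rfl | hsr'
  · rw [Finset.Ico_self, Finset.sum_empty, Nat.mul_zero, Nat.zero_add, Nat.sub_self, Nat.mul_zero]
    exact (hgap s q le_rfl hrq hqe hr hq).imp (by omega) (And.imp_left (by omega))
  · rcases ih r hrq hsr' (hrq.le.trans hqe) hr, hgap r q hsr hrq hqe hr hq with
      ⟨h | ⟨h, hTr⟩, hg | ⟨hg, hTq⟩⟩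
    on_goal 4 => exact Or.inr ⟨by omega, hT _ _ _ hTr hTq⟩
    all_goals exact Or.inl (by omega)

end Gaps

section AttachedWeight

variable {G : SimpleGraph V} {f : ℕ → V} {N c : ℕ} {E : ℕ → V} {τ ω : ℕ → ℕ}

/-! ### The weight attached to the cycle -/

open Classical in
/-- The indices attached to the position `p` of the cycle `f`. -/
noncomputable def attSet (G : SimpleGraph V) (f : ℕ → V) (c : ℕ) (E : ℕ → V) (p : ℕ) : Finset ℕ :=
  (Finset.range c).filter fun i => G.Adj (E i) (f p)

lemma mem_attSet {p i : ℕ} : i ∈ attSet G f c E p ↔ i < c ∧ G.Adj (E i) (f p) := by simp [attSet]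

/-- The total weight attached to the position `p` of the cycle `f`. -/
noncomputable def attWeight (G : SimpleGraph V) (f : ℕ → V) (c : ℕ) (E : ℕ → V) (ω : ℕ → ℕ)
    (p : ℕ) : ℕ := ∑ i ∈ attSet G f c E p, ω i

lemma sum_attWeight (G : SimpleGraph V) (f : ℕ → V) (N c : ℕ) (E : ℕ → V) (ω : ℕ → ℕ) :
    ∑ p ∈ Finset.range N, attWeight G f c E ω p =
      ∑ i ∈ Finset.range c, ω i * (attach G f N (E i)).card := by
  simp only [attWeight]
  rw [Finset.sum_comm' (t' := Finset.range c) (s' := fun i => attach G f N (E i))]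
  · exact Finset.sum_congr rfl fun i _ => by rw [Finset.sum_const, smul_eq_mul, Nat.mul_comm]
  · intro p i
    simp only [Finset.mem_range, mem_attSet, mem_attach]
    tauto

lemma attSet_periodic (hf : Function.Periodic f N) : Function.Periodic (attSet G f c E) N := by
  intro p
  ext i
  rw [mem_attSet, mem_attSet, hf]

lemma attWeight_periodic (hf : Function.Periodic f N) :
    Function.Periodic (attWeight G f c E ω) N := by
  intro p
  rw [attWeight, attSet_periodic hf, attWeight]

lemma sum_Ico_attWeight (hf : Function.Periodic f N) (s : ℕ) :
    ∑ p ∈ Finset.Ico s (s + N), attWeight G f c E ω p =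
      ∑ p ∈ Finset.range N, attWeight G f c E ω p := by
  rw [Finset.sum_Ico_eq_sum_range, Nat.add_sub_cancel_left]
  exact sum_range_add_of_periodic (attWeight_periodic hf) s

namespace IsCharging

variable {p q i j : ℕ}

lemma attWeight_pos (h : IsCharging G f c E τ ω) :
    0 < attWeight G f c E ω p ↔ (attSet G f c E p).Nonempty := by
  rw [attWeight, Finset.sum_pos_iff]
  refine ⟨fun ⟨i, hi, _⟩ => ⟨i, hi⟩, fun ⟨i, hi⟩ => ⟨i, hi, ?_⟩⟩
  have := h.weight i (mem_attSet.1 hi).1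
  omega

lemma exists_isPathList (h : IsCharging G f c E τ ω) (hi : i < c) (hj : j < c) (hij : i ≠ j) :
    ∃ P, IsPathList G (E i) P (E j) ∧ (∀ x ∈ P, x ∉ Set.range f) ∧
      τ i + τ j + 1 + span c i j ≤ P.length := by
  rcases lt_or_gt_of_ne hij with hlt | hlt
  · obtain ⟨P, hP, hPf, h1, h2⟩ := h.link i hi j hj hlt
    exact ⟨P, hP, hPf, by rw [span]; omega⟩
  · obtain ⟨P, hP, hPf, h1, h2⟩ := h.link j hj i hi hlt
    exact ⟨P.reverse, hP.reverse, by simpa using hPf, by rw [span, List.length_reverse]; omega⟩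

lemma length_add_one_le (hC : IsMaxCycle G Set.univ N f) (hpq : p < q) (hq : q ≤ p + N)
    (hi : i ∈ attSet G f c E p) (hj : j ∈ attSet G f c E q) {P : List V}
    (hP : IsPathList G (E i) P (E j)) (hPf : ∀ x ∈ P, x ∉ Set.range f) : P.length + 1 ≤ q - p :=
  hC.length_add_one_le_of_attached (by omega) (by omega) hP (fun x hx => ⟨trivial, hPf x hx⟩)
    (mem_attSet.1 hi).2.symm (by rw [Nat.add_sub_of_le hpq.le]; exact (mem_attSet.1 hj).2)

lemma isGap (hC : IsMaxCycle G Set.univ N f) (h : IsCharging G f c E τ ω) (hpq : p < q)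
    (hq : q ≤ p + N) : IsGap c (q - p) τ (attSet G f c E p) (attSet G f c E q) where
  left_lt i hi := (mem_attSet.1 hi).1
  right_lt i hi := (mem_attSet.1 hi).1
  add_span_le i hi j hj hij := by
    obtain ⟨P, hP, hPf, hlen⟩ := h.exists_isPathList (mem_attSet.1 hi).1 (mem_attSet.1 hj).1 hij
    have := length_add_one_le hC hpq hq hi hj hP hPf
    omega

lemma weight_le_of_attSet_eq_singleton (hC : IsMaxCycle G Set.univ N f)
    (h : IsCharging G f c E τ ω) (hpq : p < q) (hq : q ≤ p + N) (hip : attSet G f c E p = {i})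
    (hiq : attSet G f c E q = {i}) :
    attWeight G f c E ω p + attWeight G f c E ω q ≤ 8 * (q - p) ∧
      (c + 1) * (attWeight G f c E ω p + attWeight G f c E ω q) ≤ 4 * c * (q - p) := by
  have hi : i ∈ attSet G f c E p := hip ▸ Finset.mem_singleton_self i
  have hi' : i ∈ attSet G f c E q := hiq ▸ Finset.mem_singleton_self i
  have hic := (mem_attSet.1 hi).1
  have hgap := length_add_one_le hC hpq hq hi hi' (IsPathList.singleton (E i))
    (by simpa using h.notMem i hic)
  rw [List.length_singleton] at hgap
  have hω := h.weight i hic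
  simp only [attWeight, hip, hiq, Finset.sum_singleton]
  refine ⟨by omega, ?_⟩
  calc (c + 1) * (ω i + ω i) ≤ 4 * c * 2 := by
        rcases hω with hω | ⟨hω, -, hc⟩ <;> rw [hω] <;> omega
    _ ≤ 4 * c * (q - p) := Nat.mul_le_mul_left _ hgap

lemma weight_le (hC : IsMaxCycle G Set.univ N f) (h : IsCharging G f c E τ ω) (hpq : p < q)
    (hq : q ≤ p + N) (hp_pos : 0 < attWeight G f c E ω p) (hq_pos : 0 < attWeight G f c E ω q) :
    (attWeight G f c E ω p + attWeight G f c E ω q + (4 * c + 8) ≤ 8 * (q - p) ∨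
      attWeight G f c E ω p + attWeight G f c E ω q ≤ 8 * (q - p) ∧
        ∃ i, attSet G f c E p = {i} ∧ attSet G f c E q = {i}) ∧
    (c + 1) * (attWeight G f c E ω p + attWeight G f c E ω q) ≤ 4 * c * (q - p) := by
  obtain ⟨a, ha⟩ := h.attWeight_pos.1 hp_pos
  obtain ⟨b, hb⟩ := h.attWeight_pos.1 hq_pos
  by_cases hne : ∃ a ∈ attSet G f c E p, ∃ b ∈ attSet G f c E q, b ≠ a
  · exact ((h.isGap hC hpq hq).gapBound h.weight hne).imp_left Or.inl
  · push Not at hne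
    have hpa : attSet G f c E p = {a} := Finset.eq_singleton_iff_unique_mem.2
      ⟨ha, fun x hx => (hne x hx b hb).symm.trans (hne a ha b hb)⟩
    have hqa : attSet G f c E q = {a} := Finset.eq_singleton_iff_unique_mem.2
      ⟨hne a ha b hb ▸ hb, fun x hx => hne a ha x hx⟩
    exact (h.weight_le_of_attSet_eq_singleton hC hpq hq hpa hqa).imp_left
      fun hle => Or.inr ⟨hle, a, hpa, hqa⟩

lemma mul_sum_attWeight_le (hC : IsMaxCycle G Set.univ N f) (h : IsCharging G f c E τ ω) :
    2 * (c + 1) * ∑ p ∈ Finset.range N, attWeight G f c E ω p ≤ 4 * c * N := by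
  by_cases hzero : ∀ p ∈ Finset.range N, attWeight G f c E ω p = 0
  · simp [Finset.sum_eq_zero hzero]
  push Not at hzero
  obtain ⟨s, -, hs⟩ := hzero
  have hs_pos : 0 < attWeight G f c E ω s := Nat.pos_of_ne_zero hs
  have hper := attWeight_periodic (G := G) (c := c) (E := E) (ω := ω) hC.periodic s
  have hrun := sum_Ico_add_le_of_gaps (e := s + N) (α := 4 * c) (β := c + 1) (K := 0)
    (T := fun _ _ => False) (fun _ _ _ h _ => h)
    (fun p q hp hpq hq hp_pos hq_pos =>
      Or.inl (h.weight_le hC hpq (by omega) hp_pos hq_pos).2) hs_pos (s + N)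
    (Nat.lt_add_of_pos_right hC.pos) le_rfl (by rwa [hper])
  rw [and_false, or_false, hper, sum_Ico_attWeight hC.periodic, Nat.add_sub_cancel_left] at hrun
  linarith

/-- Some gap between positions attached to different indices earns the bonus. -/
lemma two_mul_sum_Ico_attWeight_add_le (hC : IsMaxCycle G Set.univ N f)
    (h : IsCharging G f c E τ ω) (hpq : p < q) (hq : q ≤ p + N) (hi : i ∈ attSet G f c E p)
    (hj : j ∈ attSet G f c E q) (hij : i ≠ j) :
    2 * ∑ r ∈ Finset.Ico p q, attWeight G f c E ω r + attWeight G f c E ω q + (4 * c + 8) ≤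
      8 * (q - p) + attWeight G f c E ω p := by
  have hrun := sum_Ico_add_le_of_gaps (w := attWeight G f c E ω) (s := p) (e := p + N) (α := 8)
    (β := 1) (K := 4 * c + 8)
    (T := fun p q => ∃ i, attSet G f c E p = {i} ∧ attSet G f c E q = {i})
    (fun p q r ⟨i, hp, hq⟩ ⟨j, hq', hr⟩ =>
      ⟨i, hp, Finset.singleton_injective (hq.symm.trans hq') ▸ hr⟩)
    (fun p q hp hpq hq hp_pos hq_pos => by
      rw [Nat.one_mul]
      exact (h.weight_le hC hpq (by omega) hp_pos hq_pos).1)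
    (h.attWeight_pos.2 ⟨i, hi⟩) q hpq hq (h.attWeight_pos.2 ⟨j, hj⟩)
  rw [Nat.one_mul, Nat.one_mul] at hrun
  refine hrun.resolve_right fun ⟨_, k, hk, hk'⟩ => hij ?_
  rw [hk, Finset.mem_singleton] at hi
  rw [hk', Finset.mem_singleton] at hj
  rw [hi, hj]

lemma two_mul_sum_attWeight_add_le (hC : IsMaxCycle G Set.univ N f) (h : IsCharging G f c E τ ω)
    {m : ℕ} (hm : 2 ≤ m) {idx pos : Fin m → ℕ} (hidx : Function.Injective idx)
    (hpos : Function.Injective pos) (hlt : ∀ k, pos k < N)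
    (hatt : ∀ k, idx k ∈ attSet G f c E (pos k)) :
    2 * ∑ p ∈ Finset.range N, attWeight G f c E ω p + m * (4 * c + 8) ≤ 8 * N := by
  obtain ⟨p, σ, hp, hpm, hpσ, hσ⟩ := exists_periodic_enum (by omega) pos hpos hlt
  have hatt' : ∀ k, idx (σ k) ∈ attSet G f c E (p k) := fun k => by
    rw [← (attSet_periodic hC.periodic).map_mod_nat, hpσ]
    exact hatt (σ k)
  have hrun : ∀ k, 2 * ∑ r ∈ Finset.Ico (p 0) (p k), attWeight G f c E ω r +
      attWeight G f c E ω (p k) + k * (4 * c + 8) ≤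
      8 * (p k - p 0) + attWeight G f c E ω (p 0) := by
    intro k
    induction k with
    | zero => simp
    | succ k ih =>
      have h0k : p 0 ≤ p k := hp.monotone (Nat.zero_le k)
      have hk : p k < p (k + 1) := hp (Nat.lt_succ_self k)
      have hsegment := h.two_mul_sum_Ico_attWeight_add_le hC hk
        (by rw [← hpm]; exact hp.monotone (by omega)) (hatt' k) (hatt' (k + 1))
        (hidx.ne (hσ k (k + 1) (by omega) (by omega)))
      rw [← Finset.sum_Ico_consecutive _ h0k hk.le, Nat.add_one_mul k]
      omega
  have hturn := hrun m
  have hpm0 : p m = p 0 + N := by simpa using hpm 0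
  rw [hpm0, attWeight_periodic hC.periodic, sum_Ico_attWeight hC.periodic,
    Nat.add_sub_cancel_left] at hturn
  omega

end IsCharging

end AttachedWeight

section OffCycle

variable {G : SimpleGraph V} {X : Set V} {f u : ℕ → V} {N c : ℕ}

/-! ### The longest cycle off a longest cycle -/

lemma kConnected_mono [Fintype V] {k m : ℕ} (hG : KConnected G k) (hmk : m ≤ k) :
    KConnected G m :=
  ⟨hmk.trans_lt hG.1, fun S hS => hG.2 S (hS.trans_le hmk)⟩

lemma IsPathList.exists_adj_head {a b : V} {P : List V} (h : IsPathList G a P b) (hab : a ≠ b) :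
    ∃ y ∈ P, G.Adj a y := by
  obtain ⟨_ | ⟨y, L⟩, rfl⟩ := h.exists_eq_cons
  · exact absurd (Option.some.inj h.getLast?_eq) hab
  · exact ⟨y, by simp, (List.isChain_cons_cons.1 h.isChain).1⟩

lemma IsLinkage.exists_isCycleMatching [DecidableEq V] {l : ℕ} {B : Finset V} {s e : Fin l → V}
    {R : Fin l → List V} (h : IsLinkage G (cycleVerts u c) B s e R)
    (hu : IsMaxCycle G X c u) (hB : Disjoint (cycleVerts u c) B) :
    ∃ (idx : Fin l → ℕ) (y : ℕ → V), Function.Injective idx ∧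
      IsCycleMatching G c u (Finset.univ.image idx) y := by
  have hidx : ∀ k, ∃ i < c, u i = s k := fun k => by
    simpa [cycleVerts] using h.start_mem k
  have hse : ∀ k, s k ≠ e k := fun k hk =>
    Finset.disjoint_left.1 hB (h.start_mem k) (hk ▸ h.end_mem k)
  choose idx hlt hidx using hidx
  choose y hyR hadj using fun k => (h.isPathList k).exists_adj_head (hse k)
  have hidx_inj : Function.Injective idx := fun k k' hk => by
    by_contra hne
    have hs : s k = s k' := by rw [← hidx, hk, hidx]
    exact h.disjoint k k' hne _ (h.isPathList k).head_mem (hs ▸ (h.isPathList k').head_mem)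
  have hy_inj : Function.Injective y := fun k k' hk => by
    by_contra hne
    exact h.disjoint k k' hne _ (hyR k) (hk ▸ hyR k')
  have hextend : ∀ k, Function.extend idx y u (idx k) = y k := hidx_inj.extend_apply y u
  refine ⟨idx, Function.extend idx y u, hidx_inj, ?_, ?_, ?_, ?_⟩
  · simpa using hlt
  · simpa [hextend, hidx] using hadj
  · simp only [Finset.mem_image, Finset.mem_univ, true_and, forall_exists_index,
      forall_apply_eq_imp_iff, hextend]
    exact fun k hk => (hadj k).ne (h.eq_start k _ (hyR k) (hu.mem_cycleVerts.2 hk)).symm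
  · rw [Finset.coe_image, Finset.coe_univ, Set.image_univ]
    rintro - ⟨k, rfl⟩ - ⟨k', rfl⟩ hk
    rw [hextend, hextend] at hk
    rw [hy_inj hk]

lemma exists_distinct_representatives {ι α : Type*} [Fintype ι] {M : ℕ}
    (hM : Fintype.card ι ≤ M) {t : ι → Finset α} {p : ι → α} (hp : Function.Injective p)
    (ht : ∀ i, p i ∈ t i ∨ M ≤ (t i).card) :
    ∃ r : ι → α, Function.Injective r ∧ ∀ i, r i ∈ t i := by
  classical
  refine (Finset.all_card_le_biUnion_card_iff_exists_injective t).1 fun s => ?_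
  by_cases hs : ∃ i ∈ s, M ≤ (t i).card
  · obtain ⟨i, hi, hMi⟩ := hs
    calc s.card ≤ M := (Finset.card_le_univ s).trans hM
      _ ≤ (t i).card := hMi
      _ ≤ (s.biUnion t).card := Finset.card_le_card (Finset.subset_biUnion_of_mem t hi)
  · push Not at hs
    exact Finset.card_le_card_of_injOn p (fun i hi => Finset.mem_biUnion.2
      ⟨i, hi, (ht i).resolve_right (hs i hi).not_ge⟩) hp.injOn

lemma IsMaxCycle.length_le_length {Y : Set V} (hC : IsMaxCycle G X N f) (hQ : IsMaxCycle G Y c u)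
    (hYX : Y ⊆ X) : c ≤ N := by
  have hpos := hQ.pos
  have harc := hQ.isPathList_arc (s := 0) (len := c) (e := c - 1) hpos le_rfl (by omega)
  have hadj : 2 ≤ c → G.Adj (u (c - 1)) (u 0) := fun h => by
    have := hQ.adj h (c - 1)
    rwa [Nat.sub_add_cancel hpos, ← hQ.map_mod c, Nat.mod_self] at this
  simpa using hC.length_le (arc u 0 c) ⟨_, _, harc, by simpa using hadj⟩ fun x hx =>
    hYX (hQ.mem_of_mem_arc hx)

lemma IsMaxCycle.wellLinked_cycleVerts [DecidableEq V] {m : ℕ} (hu : IsMaxCycle G X c u)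
    (hm : 2 * m ≤ c + 2) : WellLinked G m (cycleVerts u c) := by
  suffices key : ∀ i j, i < j → j < c →
      ∃ P, IsPathList G (u i) P (u j) ∧ (∀ z ∈ P, z ∈ cycleVerts u c) ∧ m ≤ P.length by
    intro x hx y hy hxy
    simp only [cycleVerts, Finset.mem_image, Finset.mem_range] at hx hy
    obtain ⟨i, hi, rfl⟩ := hx
    obtain ⟨j, hj, rfl⟩ := hy
    rcases lt_trichotomy i j with hij | rfl | hij
    · exact key i j hij hj
    · exact absurd rfl hxy
    · obtain ⟨P, hP, hPu, hlen⟩ := key j i hij hi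
      exact ⟨P.reverse, hP.reverse, by simpa using hPu, by simpa using hlen⟩
  intro i j hij hj
  obtain ⟨P, hP, hPu, hshort, hlong⟩ := hu.exists_isPathList_long_arc hj hij
  exact ⟨P, hP, fun z hz => hu.mem_cycleVerts.2 (hPu z hz), by omega⟩

lemma disjoint_cycleVerts [DecidableEq V] (hC : IsMaxCycle G X N f)
    (hQ : IsMaxCycle G (Set.range f)ᶜ c u) :
    Disjoint (cycleVerts u c) (cycleVerts f N) := by
  refine Finset.disjoint_left.2 fun x hxu hxf => ?_
  obtain ⟨q, rfl⟩ := hQ.mem_cycleVerts.1 hxu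
  exact hQ.mem q (hC.mem_cycleVerts.1 hxf)

lemma length_add_length_le_card [Fintype V] (hC : IsMaxCycle G X N f)
    (hQ : IsMaxCycle G (Set.range f)ᶜ c u) : c + N ≤ Fintype.card V := by
  classical
  have := Finset.card_le_univ (cycleVerts u c ∪ cycleVerts f N)
  rwa [Finset.card_union_of_disjoint (disjoint_cycleVerts hC hQ), hC.card_cycleVerts,
    hQ.card_cycleVerts] at this

lemma IsMaxCycle.exists_distinct_attachments {l M : ℕ} (hC : IsMaxCycle G X N f) (hlM : l ≤ M)
    {t y : Fin l → V} (hy : Function.Injective y)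
    (h : ∀ k, (y k ∈ Set.range f ∧ G.Adj (t k) (y k)) ∨ M ≤ (attach G f N (t k)).card) :
    ∃ pos : Fin l → ℕ, Function.Injective pos ∧ ∀ k, pos k ∈ attach G f N (t k) := by
  classical
  have himage : ∀ k, y k ∈ (attach G f N (t k)).image f ∨
      M ≤ ((attach G f N (t k)).image f).card := fun k => (h k).imp
    (fun ⟨⟨p, hp⟩, hadj⟩ => Finset.mem_image.2 ⟨p % N,
      mem_attach.2 ⟨Nat.mod_lt _ hC.pos, by rwa [hC.map_mod, hp]⟩, by rw [hC.map_mod, hp]⟩)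
    fun hk => by
      rwa [Finset.card_image_of_injOn fun p hp q hq =>
        hC.injOn p q (mem_attach.1 hp).1 (mem_attach.1 hq).1]
  obtain ⟨r, hr, hrt⟩ := exists_distinct_representatives (by simpa using hlM) hy himage
  choose pos hpos hposr using fun k => Finset.mem_image.1 (hrt k)
  exact ⟨pos, fun k k' hk => hr (by rw [← hposr, hk, hposr]), hpos⟩

section

variable [Fintype V] [DecidableRel G.Adj] {δ μ M : ℕ}

lemma succ_mul_le_length (hC : IsMaxCycle G Set.univ N f)
    (hQ : IsMaxCycle G (Set.range f)ᶜ c u) (hdeg : ∀ v, δ ≤ G.degree v) (hμ : 1 ≤ μ)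
    (hμM : μ ≤ M) (hδ : δ + 1 = M + μ) (hμc : μ ≤ c) (hc : c + 3 ≤ 2 * μ ∨ c = μ)
    (hlinked : ∀ B, WellLinked G μ B → μ + 1 ≤ B.card → ∃ x ∈ B, x ∈ Set.range f) :
    (c + 1) * (δ + 1 - c) ≤ N := by
  obtain ⟨E, τ, ω, hE, hsum, -⟩ := exists_isCharging hC hQ hdeg hμ hμM hδ hμc hc hlinked
    (I := ∅) (y := u) ⟨by simp, by simp, by simp, by simp⟩
  have hweight := hE.mul_sum_attWeight_le hC
  rw [sum_attWeight] at hweight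
  refine Nat.le_of_mul_le_mul_left (c := 4 * c) ?_ (by have := hQ.pos; omega)
  calc 4 * c * ((c + 1) * (δ + 1 - c)) = 2 * (c + 1) * (2 * c * (δ + 1 - c)) := by ring
    _ ≤ 2 * (c + 1) * ∑ i ∈ Finset.range c, ω i * (attach G f N (E i)).card := by gcongr
    _ ≤ 4 * c * N := hweight

lemma mul_add_mul_le_length {l : ℕ} (hG : KConnected G l) (hl : 2 ≤ l) (hlM : l ≤ M)
    (hlc : l ≤ c) (hC : IsMaxCycle G Set.univ N f) (hQ : IsMaxCycle G (Set.range f)ᶜ c u)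
    (hdeg : ∀ v, δ ≤ G.degree v) (hμ : 1 ≤ μ) (hμM : μ ≤ M) (hδ : δ + 1 = M + μ) (hμc : μ ≤ c)
    (hc : c + 3 ≤ 2 * μ ∨ c = μ)
    (hlinked : ∀ B, WellLinked G μ B → μ + 1 ≤ B.card → ∃ x ∈ B, x ∈ Set.range f) :
    4 * c * (δ + 1 - c) + l * (4 * c + 8) ≤ 8 * N := by
  classical
  obtain ⟨s, e, R, hR⟩ := exists_isLinkage hG (A := cycleVerts u c) (B := cycleVerts f N)
    (by rwa [hQ.card_cycleVerts])
    (by rw [hC.card_cycleVerts]; exact hlc.trans (hC.length_le_length hQ (Set.subset_univ _)))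
  obtain ⟨idx, y, hidx, hmatch⟩ := hR.exists_isCycleMatching hQ (disjoint_cycleVerts hC hQ)
  have hmem : ∀ k, idx k ∈ Finset.univ.image idx := fun k => by simp
  obtain ⟨E, τ, ω, hE, hsum, hatt⟩ := exists_isCharging hC hQ hdeg hμ hμM hδ hμc hc hlinked hmatch
  obtain ⟨pos, hpos, hpos_att⟩ := hC.exists_distinct_attachments hlM (t := fun k => E (idx k))
    (y := fun k => y (idx k)) (fun k k' hk => hidx (hmatch.injOn (hmem k) (hmem k') hk))
    fun k => hatt _ (hmem k)
  have hweight := hE.two_mul_sum_attWeight_add_le hC hl hidx hpos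
    (fun k => (mem_attach.1 (hpos_att k)).1)
    fun k => mem_attSet.2 ⟨hmatch.lt _ (hmem k), (mem_attach.1 (hpos_att k)).2⟩
  rw [sum_attWeight] at hweight
  calc 4 * c * (δ + 1 - c) + l * (4 * c + 8)
      = 2 * (2 * c * (δ + 1 - c)) + l * (4 * c + 8) := by ring
    _ ≤ 8 * N := by omega

lemma card_add_mul_le {n δ μ M : ℕ} (hμ : 1 ≤ μ) (hδ : δ + 1 = M + μ)
    (hn : n + 2 ≤ (μ + 1) * (M + 1)) : n + μ * (μ - 1) ≤ (μ + 1) * δ := by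
  obtain ⟨k, rfl⟩ := Nat.exists_eq_add_of_le' hμ
  obtain rfl : δ = M + k := by omega
  rw [Nat.add_sub_cancel]
  nlinarith

lemma lt_succ_mul {N c δ μ M : ℕ} (hμc : μ ≤ c) (hcM : c ≤ M) (hδ : δ + 1 = M + μ)
    (hn : c + N + 2 ≤ (μ + 1) * (M + 1)) : N < (c + 1) * (δ + 1 - c) := by
  obtain ⟨d, rfl⟩ := Nat.exists_eq_add_of_le hμc
  obtain ⟨e, rfl⟩ := Nat.exists_eq_add_of_le hcM
  rw [show δ + 1 - (μ + d) = μ + e by omega]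
  nlinarith [Nat.zero_le (d * e)]

lemma lt_mul_add_mul {N c δ l m : ℕ} (hmc : m ≤ c) (hcl : c + 3 ≤ 2 * l) (hcδ : c ≤ δ)
    (hδ : δ + 1 = l + m) (hn : c + N + 2 ≤ (l + 1) * (m + 1)) :
    8 * N < 4 * c * (δ + 1 - c) + l * (4 * c + 8) := by
  obtain ⟨d, rfl⟩ := Nat.exists_eq_add_of_le hmc
  obtain ⟨e, he⟩ := Nat.exists_eq_add_of_le hcl
  obtain ⟨a, ha⟩ : ∃ a, l = a + d := ⟨l - d, by omega⟩
  rw [show δ + 1 - (m + d) = a by omega]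
  nlinarith [he, Nat.zero_le (d * e)]

theorem length_lt_of_off_cycle {l m : ℕ} (hG : KConnected G l) (hl : 1 ≤ l) (hm : 1 ≤ m)
    (hδ : δ + 1 = l + m) (hn : Fintype.card V + 2 ≤ (l + 1) * (m + 1))
    (hdeg : ∀ v, δ ≤ G.degree v) (hC : IsMaxCycle G Set.univ N f)
    (hQ : IsMaxCycle G (Set.range f)ᶜ c u) : c < min l m := by
  classical
  by_contra! hμc
  have hmM : min l m + max l m = δ + 1 := by rw [min_add_max, hδ]
  have hprod : (min l m + 1) * (max l m + 1) = (l + 1) * (m + 1) := by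
    rcases le_total l m with h | h <;> simp [h, mul_comm]
  set μ := min l m
  set M := max l m
  have hμl : μ ≤ l := min_le_left l m
  have hlM : l ≤ M := le_max_left l m
  have hlinked : ∀ B, WellLinked G μ B → μ + 1 ≤ B.card → ∃ x ∈ B, x ∈ Set.range f :=
    fun B hB hcard => hB.exists_mem_range (kConnected_mono hG hμl) (by omega) hdeg
      (card_add_mul_le (M := M) (by omega) (by omega) (by omega)) hC
      (hμc.trans (hC.length_le_length hQ (Set.subset_univ _))) hcard
  have hc : c + 3 ≤ 2 * μ ∨ c = μ := by
    by_contra!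
    obtain ⟨x, hx, hxf⟩ := hlinked _ (hQ.wellLinked_cycleVerts (m := μ) (by omega))
      (by rw [hQ.card_cycleVerts]; omega)
    exact Finset.disjoint_left.1 (disjoint_cycleVerts hC hQ) hx (hC.mem_cycleVerts.2 hxf)
  have hcN := length_add_length_le_card hC hQ
  rcases le_or_gt c M with hcM | hMc
  · have := succ_mul_le_length (M := M) hC hQ hdeg (by omega) (by omega) (by omega) hμc hc hlinked
    exact absurd this (lt_succ_mul hμc hcM (by omega) (by omega)).not_ge
  · have := mul_add_mul_le_length hG (by omega) hlM (by omega) hC hQ hdeg (by omega) (by omega)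
      (by omega) hμc hc hlinked
    exact absurd this
      (lt_mul_add_mul (m := m) (by omega) (by omega) (by omega) (by omega) (by omega)).not_ge

end

end OffCycle

section ClosedWalks

variable {G : SimpleGraph V} {X : Set V} {L : List V}

/-! ### Cycles as closed walks -/

lemma IsGenCycle.length_pos (hL : IsGenCycle G L) : 0 < L.length := by
  obtain ⟨_, _, h, -⟩ := hL
  exact h.length_pos

lemma IsGenCycle.adj_getElem_mod (hL : IsGenCycle G L) (h2 : 2 ≤ L.length) (p : ℕ) :
    G.Adj (L[p % L.length]'(Nat.mod_lt _ hL.length_pos))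
      (L[(p + 1) % L.length]'(Nat.mod_lt _ hL.length_pos)) := by
  obtain ⟨a, b, h, hba⟩ := hL
  have hlt := Nat.mod_lt p h.length_pos
  rcases Nat.lt_or_ge (p % L.length + 1) L.length with hsucc | hlast
  · have hmod : (p + 1) % L.length = p % L.length + 1 := by
      rw [← Nat.mod_add_mod, Nat.mod_eq_of_lt hsucc]
    simpa only [hmod] using List.isChain_iff_getElem.1 h.isChain _ hsucc
  · have hpred : p % L.length = L.length - 1 := by omega
    have hmod : (p + 1) % L.length = 0 := by
      rw [← Nat.mod_add_mod, hpred, Nat.sub_add_cancel h.length_pos, Nat.mod_self]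
    have ha := h.head?_eq
    have hb := h.getLast?_eq
    rw [List.head?_eq_getElem?, List.getElem?_eq_some_iff] at ha
    rw [List.getLast?_eq_getElem?, List.getElem?_eq_some_iff] at hb
    obtain ⟨-, rfl⟩ := ha
    obtain ⟨-, rfl⟩ := hb
    simpa only [hmod, hpred] using hba h2

lemma IsGenCycle.exists_isMaxCycle (hL : IsGenCycle G L) (hX : ∀ x ∈ L, x ∈ X)
    (hmax : ∀ M, IsGenCycle G M → (∀ x ∈ M, x ∈ X) → M.length ≤ L.length) :
    ∃ f : ℕ → V, IsMaxCycle G X L.length f ∧ Set.range f = {x | x ∈ L} := by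
  have hlt := fun p => Nat.mod_lt p hL.length_pos
  have hnodup : L.Nodup := by
    obtain ⟨_, _, h, -⟩ := hL
    exact h.nodup
  refine ⟨fun p => L[p % L.length]'(hlt p), ⟨hL.length_pos, fun p => by simp, fun p q hp hq h => ?_,
    hL.adj_getElem_mod, fun p => hX _ (List.getElem_mem _), hmax⟩, ?_⟩
  · simpa [Nat.mod_eq_of_lt hp, Nat.mod_eq_of_lt hq] using hnodup.getElem_inj_iff.1 h
  · refine Set.Subset.antisymm (Set.range_subset_iff.2 fun p => List.getElem_mem _) fun x hx => ?_
    obtain ⟨i, hi, rfl⟩ := List.getElem_of_mem hx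
    exact ⟨i, by simp [Nat.mod_eq_of_lt hi]⟩

lemma exists_isMaxCycle_length_le [Finite V] (hL : IsGenCycle G L) (hX : ∀ x ∈ L, x ∈ X) :
    ∃ c u, IsMaxCycle G X c u ∧ L.length ≤ c := by
  have := Fintype.ofFinite V
  obtain ⟨M, ⟨hM, hMX⟩, hmax⟩ := exists_forall_apply_le_of_bounded
    (p := fun M => IsGenCycle G M ∧ ∀ x ∈ M, x ∈ X) ⟨L, hL, hX⟩ List.length
    (B := Fintype.card V) fun M ⟨⟨_, _, h, _⟩, _⟩ => h.nodup.length_le_card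
  obtain ⟨u, hu, -⟩ := hM.exists_isMaxCycle hMX fun M' h h' => hmax M' ⟨h, h'⟩
  exact ⟨M.length, u, hu, hmax L ⟨hL, hX⟩⟩

lemma isGenCycle_support_tail {v : V} {w : G.Walk v v} (hw : w.IsCycle) :
    IsGenCycle G w.support.tail := by
  cases w with
  | nil => exact absurd hw Walk.not_isCycle_nil
  | @cons _ x _ h p =>
    have hp := ((Walk.cons_isCycle_iff _ _).1 hw).1
    exact ⟨x, v, ⟨by simpa using hp.support_nodup, by simpa using p.isChain_adj_support,
      by simp [List.head?_eq_some_head], by simp [List.getLast?_eq_some_getLast]⟩, fun _ => h⟩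

lemma IsGenCycle.exists_isCycle (hL : IsGenCycle G L) (h3 : 3 ≤ L.length) :
    ∃ (v : V) (w : G.Walk v v), w.IsCycle ∧ w.length = L.length := by
  obtain ⟨a, b, h, hba⟩ := hL
  have ha : L.head h.ne_nil = a := by
    simpa [List.head?_eq_some_head h.ne_nil] using h.head?_eq
  have hb : L.getLast h.ne_nil = b := by
    simpa [List.getLast?_eq_some_getLast h.ne_nil] using h.getLast?_eq
  have hadj : G.Adj (L.getLast h.ne_nil) (L.head h.ne_nil) := by
    rw [ha, hb]
    exact hba (by omega)
  have hpath : (Walk.ofSupport L h.ne_nil h.isChain).IsPath := by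
    rw [Walk.isPath_def, Walk.support_ofSupport]
    exact h.nodup
  refine ⟨_, Walk.cons hadj (Walk.ofSupport L h.ne_nil h.isChain), ?_, by simp; omega⟩
  exact Walk.isCycle_iff_isPath_tail_and_le_length.2 ⟨by simpa using hpath, by simp; omega⟩

lemma exists_isMaxCycle_of_isLongestCycle {v : V} {w : G.Walk v v} (hw : IsLongestCycle w) :
    ∃ N f, IsMaxCycle G Set.univ N f ∧ Set.range f = {x | x ∈ w.support} := by
  obtain ⟨f, hf, hrange⟩ := (isGenCycle_support_tail hw.1).exists_isMaxCycle (X := Set.univ)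
    (fun _ _ => Set.mem_univ _) fun L hL _ => by
      have h3 := hw.1.three_le_length
      rw [List.length_tail, Walk.length_support, Nat.add_sub_cancel]
      by_contra! hlt
      obtain ⟨x, w', hw', hlen⟩ := hL.exists_isCycle (by omega)
      exact absurd (hw.2 x w' hw') (by omega)
  refine ⟨_, f, hf, hrange.trans (Set.ext fun x => ?_)⟩
  exact ⟨List.mem_of_mem_tail, fun hx => ((Walk.mem_support_iff w).1 hx).elim
    (fun h => h ▸ Walk.end_mem_tail_support hw.1.not_nil) id⟩

lemma exists_isGenCycle_of_extCycle {W : Set V} {n : ℕ} (h : ExtCycle G W n) :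
    ∃ L, IsGenCycle G L ∧ L.length = n ∧ ∀ x ∈ L, x ∈ W := by
  rcases h with ⟨rfl, v, rfl⟩ | ⟨rfl, u, v, huv, rfl⟩ | ⟨-, v, w, hw, rfl, rfl⟩
  · exact ⟨[v], ⟨v, v, .singleton v, by simp⟩, by simp, by simp⟩
  · exact ⟨[u, v], ⟨u, v, .cons (.singleton v) huv (by simp [huv.ne]), fun _ => huv.symm⟩, by simp,
      by simp⟩
  · exact ⟨_, isGenCycle_support_tail hw, by simp, fun x hx => List.mem_of_mem_tail hx⟩

lemma kConnected_of_le_connectivity [Fintype V] {l : ℕ} (hl : 1 ≤ l) (h : l ≤ connectivity G) :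
    KConnected G l := by
  have hne : {k | KConnected G k}.Nonempty := by
    refine Set.nonempty_iff_ne_empty.2 fun hempty => ?_
    rw [connectivity, hempty, csSup_empty, Nat.bot_eq_zero] at h
    omega
  exact kConnected_mono (Nat.sSup_mem hne ⟨Fintype.card V, fun k hk => hk.1.le⟩) h

lemma le_and_add_two_le_mul_of_div_add_le {n l δ : ℕ} (hln : l < n)
    (hδ : (δ : ℝ) ≥ (n + 2 : ℝ) / (l + 1) + l - 2) :
    l ≤ δ ∧ n + 2 ≤ (l + 1) * (δ - l + 1 + 1) := by
  have hdiv : (n + 2 : ℝ) / (l + 1) ≤ δ - l + 2 := by linarith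
  have hlδ : l ≤ δ := by
    have h1 : (1 : ℝ) < (n + 2 : ℝ) / (l + 1) := by
      rw [one_lt_div (by positivity)]
      have : (l : ℝ) < n := by exact_mod_cast hln
      linarith
    have : (l : ℝ) < (δ + 1 : ℕ) := by
      push_cast
      linarith
    exact Nat.lt_succ_iff.1 (by exact_mod_cast this)
  refine ⟨hlδ, ?_⟩
  rw [div_le_iff₀ (by positivity)] at hdiv
  rify [hlδ]
  linarith

end ClosedWalks

end LongCycle

theorem nikoghosyan_2009_CD (G : SimpleGraph V) [Fintype V] [DecidableRel G.Adj]
    (l : ℕ) (hl : 1 ≤ l) (hκ : l ≤ connectivity G)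
    (hδ : (G.minDegree : ℝ) ≥ (Fintype.card V + 2 : ℝ) / (l + 1) + l - 2) :
    ∀ (v : V) (w : G.Walk v v), IsLongestCycle w →
      IsCDCycle G w (min l (G.minDegree - l + 1)) := by
  intro v w hw
  refine ⟨hw.1, fun W n hW hn => ?_⟩
  by_contra! hdisj
  have hG := LongCycle.kConnected_of_le_connectivity hl hκ
  obtain ⟨hlδ, hcard⟩ := LongCycle.le_and_add_two_le_mul_of_div_add_le hG.1 hδ
  obtain ⟨N, f, hC, hf⟩ := LongCycle.exists_isMaxCycle_of_isLongestCycle hw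
  obtain ⟨L, hL, rfl, hLW⟩ := LongCycle.exists_isGenCycle_of_extCycle hW
  have hLC : ∀ x ∈ L, x ∈ (Set.range f)ᶜ := fun x hx => hf ▸ hdisj x (hLW x hx)
  obtain ⟨c, u, hQ, hLc⟩ := LongCycle.exists_isMaxCycle_length_le hL hLC
  have hc := LongCycle.length_lt_of_off_cycle hG hl (Nat.le_add_left 1 _) (by omega) hcard
    G.minDegree_le_degree hC hQ
  omega
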